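/- arXiv:1603.00780 — 9 statements merged into one kernel-verified Lean document; each statement's English description precedes it below -/
import Mathlib

section
/- Let R be a commutative ring in which 2 and 3 are invertible, and let L be a 5-graded Lie algebra over R. Then for every σ ∈ {1,−1}, all x,y ∈ L_σ and all s,t ∈ L_{2σ}, one has e_σ(x,s) ∘ e_σ(y,t) = e_σ(x+y, s+t+(1/2)⁅x,y⁆) as R-linear endomorphisms of L, and e_σ(x,s) ∘ e_σ(−x,−s) = id_L; in particular every e_σ(x,s) is an invertible endomorphism with inverse e_σ(−x,−s). -/
/-- The exponential-type endomorphism `e(v) := Σ_{i=0}^{4} (1/i!)·(ad v)^i` of a Lie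
algebra over a commutative ring in which `2` and `3` are invertible.  (Note that
`1/2 = ⅟2`, `1/3! = ⅟2·⅟3` and `1/4! = ⅟2·⅟2·⅟2·⅟3`.) -/
noncomputable def eMap (R : Type*) {L : Type*} [CommRing R] [LieRing L] [LieAlgebra R L]
    [Invertible (2 : R)] [Invertible (3 : R)] (v : L) : Module.End R L :=
  1 + (LieAlgebra.ad R L v) + ⅟(2:R) • (LieAlgebra.ad R L v) ^ 2
    + (⅟(2:R) * ⅟(3:R)) • (LieAlgebra.ad R L v) ^ 3
    + (⅟(2:R) * ⅟(2:R) * ⅟(2:R) * ⅟(3:R)) • (LieAlgebra.ad R L v) ^ 4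

set_option linter.unusedSimpArgs false

theorem aux_ring {A : Type*} [Ring A] (X Y S T W : A)
    (hXY : X * Y = Y * X + 2 * W)
    (hXS : X * S = S * X) (hXT : X * T = T * X) (hXW : X * W = W * X)
    (hYS : Y * S = S * Y) (hYT : Y * T = T * Y) (hYW : Y * W = W * Y)
    (hTS : T * S = S * T) (hWS : W * S = S * W) (hWT : W * T = T * W) :
    ((X + Y) ^ 2 + 2 * (S + T + W) = (X ^ 2 + 2 * S) + 2 * (X * Y) + (Y ^ 2 + 2 * T)) ∧
    ((X + Y) ^ 3 + 6 * ((S + T + W) * (X + Y)) =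
      (X ^ 3 + 6 * (S * X)) + 3 * ((X ^ 2 + 2 * S) * Y) + 3 * (X * (Y ^ 2 + 2 * T))
        + (Y ^ 3 + 6 * (T * Y))) ∧
    ((X + Y) ^ 4 + 12 * ((S + T + W) * (X + Y) ^ 2) + 12 * (S + T + W) ^ 2 =
      (X ^ 4 + 12 * (S * X ^ 2) + 12 * S ^ 2) + 4 * ((X ^ 3 + 6 * (S * X)) * Y)
        + 6 * ((X ^ 2 + 2 * S) * (Y ^ 2 + 2 * T)) + 4 * (X * (Y ^ 3 + 6 * (T * Y)))
        + (Y ^ 4 + 12 * (T * Y ^ 2) + 12 * T ^ 2)) := by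
  have e2 : ∀ a : A, 2 * a = a + a := two_mul
  rw [e2] at hXY
  have n2 : ∀ a : A, (2 : A) * a = (2 : ℕ) • a := fun a => by simp
  have n3 : ∀ a : A, (3 : A) * a = (3 : ℕ) • a := fun a => by simp
  have n4 : ∀ a : A, (4 : A) * a = (4 : ℕ) • a := fun a => by simp
  have n6 : ∀ a : A, (6 : A) * a = (6 : ℕ) • a := fun a => by simp
  have n12 : ∀ a : A, (12 : A) * a = (12 : ℕ) • a := fun a => by simp
  have as : ∀ {p q r : A}, p * q = r → ∀ a, p * (q * a) = r * a := by
    intro p q r h a; rw [← mul_assoc, h]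
  have hXY' := as hXY
  have hXS' := as hXS
  have hXT' := as hXT
  have hXW' := as hXW
  have hYS' := as hYS
  have hYT' := as hYT
  have hYW' := as hYW
  have hTS' := as hTS
  have hWS' := as hWS
  have hWT' := as hWT
  simp only [n2, n3, n4, n6, n12]
  refine ⟨?_, ?_, ?_⟩ <;>
  · simp only [pow_succ, pow_zero, one_mul, mul_add, add_mul, mul_assoc, smul_add,
      mul_smul_comm, smul_mul_assoc,
      hXY, hXS, hXT, hXW, hYS, hYT, hYW, hTS, hWS, hWT,
      hXY', hXS', hXT', hXW', hYS', hYT', hYW', hTS', hWS', hWT']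
    abel

theorem aux_deg {R L : Type*} [CommRing R] [LieRing L] [LieAlgebra R L]
    (g : ℤ → Submodule R L) (σ : ℤ) :
    ∃ F : ℕ → Submodule R (Module.End R L),
      ∀ n f, f ∈ F n ↔ ∀ i, ∀ w ∈ g i, f w ∈ g (i + n * σ) := by
  refine ⟨fun n =>
    { carrier := {f | ∀ i, ∀ w ∈ g i, f w ∈ g (i + n * σ)}
      add_mem' := fun ha hb i w hw => (g _).add_mem (ha i w hw) (hb i w hw)
      zero_mem' := fun i w hw => (g _).zero_mem
      smul_mem' := fun c f hf i w hw => (g _).smul_mem c (hf i w hw) }, fun n f => Iff.rfl⟩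

theorem aux_eMap {R L : Type*} [CommRing R] [Invertible (2 : R)] [Invertible (3 : R)]
    [LieRing L] [LieAlgebra R L] (x s : L) (X S : Module.End R L)
    (hX : LieAlgebra.ad R L x = X) (hS : LieAlgebra.ad R L s = S)
    (hXS : X * S = S * X)
    (h1 : S * (S * X) = 0) (h2 : S * (S * S) = 0) (h3 : S * (X * (X * X)) = 0) :
    eMap R (x + s) = 1 + X + ⅟(2:R) • (X ^ 2 + 2 * S)
      + (⅟(2:R) * ⅟(3:R)) • (X ^ 3 + 6 * (S * X))
      + (⅟(2:R) * ⅟(2:R) * ⅟(2:R) * ⅟(3:R)) • (X ^ 4 + 12 * (S * X ^ 2) + 12 * S ^ 2) := by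
  have as : ∀ {p q r : Module.End R L}, p * q = r → ∀ a, p * (q * a) = r * a := by
    intro p q r h a; rw [← mul_assoc, h]
  have hXS' := as hXS
  have h1' : ∀ a, S * (S * (X * a)) = 0 := fun a => by
    rw [← mul_assoc, ← mul_assoc, mul_assoc S, h1, zero_mul]
  have p2 : (X + S) ^ 2 = X ^ 2 + (2 : R) • (S * X) + S ^ 2 := by
    rw [two_smul]
    simp only [pow_succ, pow_zero, one_mul, mul_add, add_mul, mul_assoc, hXS, hXS']
    abel
  have p3 : (X + S) ^ 3 = X ^ 3 + (3 : R) • (S * X ^ 2) := by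
    rw [show (3 : R) = 1 + 1 + 1 by norm_num]
    simp only [add_smul, one_smul]
    simp only [pow_succ, pow_zero, one_mul, mul_add, add_mul, mul_assoc, hXS, hXS', h1, h1', h2]
    abel
  have p4 : (X + S) ^ 4 = X ^ 4 := by
    simp only [pow_succ, pow_zero, one_mul, mul_add, add_mul, mul_assoc, hXS, hXS', h1, h1', h2, h3,
      mul_zero, add_zero]
  have n2 : ∀ a : Module.End R L, 2 * a = (2 : R) • a := fun a => by
    rw [ofNat_smul_eq_nsmul, nsmul_eq_mul]; rfl
  have n6 : ∀ a : Module.End R L, 6 * a = (6 : R) • a := fun a => by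
    rw [ofNat_smul_eq_nsmul, nsmul_eq_mul]; rfl
  have n12 : ∀ a : Module.End R L, 12 * a = (12 : R) • a := fun a => by
    rw [ofNat_smul_eq_nsmul, nsmul_eq_mul]; rfl
  rw [eMap, map_add, hX, hS, p2, p3, p4, n2, n6, n12, n12]
  have ha : (2 : R) * ⅟(2:R) = 1 := mul_invOf_self _
  have hb : (3 : R) * ⅟(3:R) = 1 := mul_invOf_self _
  generalize ⅟(2:R) = a at *
  generalize ⅟(3:R) = b at *
  have k1 : a * 2 = 1 := by linear_combination ha
  have k2 : a * b * 6 = 1 := by linear_combination 3 * b * ha + hb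
  have k3 : a * a * a * b * 12 = a := by linear_combination 4 * a * a * a * hb + a * (2 * a + 1) * ha
  have k4 : a * b * 3 = a := by linear_combination a * hb
  simp only [smul_add, smul_smul, k1, k2, k3, k4, one_smul]
  abel

theorem aux_main {R L : Type*} [CommRing R] [Invertible (2 : R)] [Invertible (3 : R)]
    [LieRing L] [LieAlgebra R L]
    (g : ℤ → Submodule R L)
    (hinternal : DirectSum.IsInternal g)
    (hbracket : ∀ i j : ℤ, ∀ x ∈ g i, ∀ y ∈ g j, ⁅x, y⁆ ∈ g (i + j))
    (hbound : ∀ i : ℤ, 2 < |i| → g i = ⊥)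
    (σ : ℤ) (hσ : σ = 1 ∨ σ = -1)
    (x y : L) (hx : x ∈ g σ) (hy : y ∈ g σ)
    (s t : L) (hs : s ∈ g (2 * σ)) (ht : t ∈ g (2 * σ)) :
    eMap R (x + s) * eMap R (y + t)
        = eMap R ((x + y) + (s + t + ⅟(2:R) • ⁅x, y⁆)) := by
  obtain ⟨F, hF⟩ := aux_deg (R := R) g σ
  have hmul : ∀ m n f h, f ∈ F m → h ∈ F n → f * h ∈ F (m + n) := by
    intro m n f h hf hh
    rw [hF] at *
    intro i w hw
    have := hf _ _ (hh i w hw)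
    rw [show i + ((m + n : ℕ) : ℤ) * σ = i + n * σ + m * σ by push_cast; ring]
    exact this
  have hzero : ∀ n, 5 ≤ n → ∀ f ∈ F n, f = 0 := by
    intro n hn f hf
    rw [hF] at hf
    ext w
    have hw : w ∈ ⨆ i, g i := by
      rw [hinternal.submodule_iSup_eq_top]; trivial
    induction hw using Submodule.iSup_induction' with
    | mem i w hw =>
      by_cases hi : 2 < |i|
      · rw [hbound i hi] at hw
        rw [(Submodule.mem_bot R).1 hw]; simp
      · have := hf i w hw
        rw [hbound] at this
        · simpa using this
        · rcases hσ with rfl | rfl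
          · rw [lt_abs]; rw [lt_abs] at hi; omega
          · rw [lt_abs]; rw [lt_abs] at hi; omega
    | zero => simp
    | add a b _ _ ha hb => rw [map_add, ha, hb]; simp
  have had1 : ∀ u ∈ g σ, LieAlgebra.ad R L u ∈ F 1 := by
    intro u hu
    rw [hF]
    intro i w hw
    have := hbracket _ _ u hu w hw
    rw [show i + ((1 : ℕ) : ℤ) * σ = σ + i by push_cast; ring]
    exact this
  have had2 : ∀ u ∈ g (2 * σ), LieAlgebra.ad R L u ∈ F 2 := by
    intro u hu
    rw [hF]
    intro i w hw
    have := hbracket _ _ u hu w hw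
    rw [show i + ((2 : ℕ) : ℤ) * σ = 2 * σ + i by push_cast; ring]
    exact this
  have hb0 : ∀ i, (i = 3 * σ ∨ i = 4 * σ) → ∀ w ∈ g i, w = 0 := by
    intro i hi w hw
    rw [hbound] at hw
    · simpa using hw
    · rw [lt_abs]; omega
  have hadl : ∀ u v : L, LieAlgebra.ad R L ⁅u, v⁆ =
      LieAlgebra.ad R L u * LieAlgebra.ad R L v - LieAlgebra.ad R L v * LieAlgebra.ad R L u := by
    intro u v
    ext w
    simp only [LieAlgebra.ad_apply, LinearMap.sub_apply, Module.End.mul_apply, lie_lie]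
  have hcomm : ∀ u v : L, ⁅u, v⁆ = 0 →
      LieAlgebra.ad R L u * LieAlgebra.ad R L v = LieAlgebra.ad R L v * LieAlgebra.ad R L u := by
    intro u v h
    have := hadl u v
    rw [h, map_zero] at this
    exact (sub_eq_zero.1 this.symm)
  have c12 : ∀ u ∈ g σ, ∀ v ∈ g (2 * σ), LieAlgebra.ad R L u * LieAlgebra.ad R L v
      = LieAlgebra.ad R L v * LieAlgebra.ad R L u := fun u hu v hv =>
    hcomm u v (hb0 _ (Or.inl (by ring)) _ (hbracket _ _ u hu v hv))
  have c22 : ∀ u ∈ g (2 * σ), ∀ v ∈ g (2 * σ), LieAlgebra.ad R L u * LieAlgebra.ad R L v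
      = LieAlgebra.ad R L v * LieAlgebra.ad R L u := fun u hu v hv =>
    hcomm u v (hb0 _ (Or.inr (by ring)) _ (hbracket _ _ u hu v hv))
  have hE : ∀ u ∈ g σ, ∀ v ∈ g (2 * σ), _ := fun u hu v hv =>
    aux_eMap (R := R) u v _ _ rfl rfl (c12 u hu v hv)
      (hzero _ (by norm_num) _ (hmul _ _ _ _ (had2 v hv) (hmul _ _ _ _ (had2 v hv) (had1 u hu))))
      (hzero _ (by norm_num) _ (hmul _ _ _ _ (had2 v hv) (hmul _ _ _ _ (had2 v hv) (had2 v hv))))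
      (hzero _ (by norm_num) _ (hmul _ _ _ _ (had2 v hv)
        (hmul _ _ _ _ (had1 u hu) (hmul _ _ _ _ (had1 u hu) (had1 u hu)))))
  have hw : ⅟(2:R) • ⁅x, y⁆ ∈ g (2 * σ) := by
    apply Submodule.smul_mem
    rw [two_mul]
    exact hbracket _ _ x hx y hy
  rw [hE x hx s hs, hE y hy t ht, hE (x + y) (add_mem hx hy) _ (add_mem (add_mem hs ht) hw)]
  have hXY : LieAlgebra.ad R L x * LieAlgebra.ad R L y = LieAlgebra.ad R L y * LieAlgebra.ad R L x
      + 2 * LieAlgebra.ad R L (⅟(2:R) • ⁅x, y⁆) := by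
    have h2 : 2 * LieAlgebra.ad R L (⅟(2:R) • ⁅x, y⁆) = LieAlgebra.ad R L ⁅x, y⁆ := by
      rw [two_mul, ← map_add, ← two_smul R, smul_smul, mul_invOf_self, one_smul]
    rw [h2, hadl]
    abel
  obtain ⟨q2, q3, q4⟩ := aux_ring _ _ _ _ _ hXY (c12 x hx s hs) (c12 x hx t ht) (c12 x hx _ hw)
    (c12 y hy s hs) (c12 y hy t ht) (c12 y hy _ hw) (c22 t ht s hs) (c22 _ hw s hs) (c22 _ hw t ht)
  simp only [map_add]
  rw [q2, q3, q4]
  have n : ∀ (k : ℕ) m f, f ∈ F m → (k : Module.End R L) * f ∈ F m := fun k m f hf => by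
    rw [← nsmul_eq_mul]; exact (F m).nsmul_mem hf k
  have C2 : ∀ X ∈ F 1, ∀ S ∈ F 2, X ^ 2 + 2 * S ∈ F 2 := by
    intro X hX S hS
    rw [pow_two]
    exact add_mem (hmul 1 1 _ _ hX hX) (n 2 _ _ hS)
  have C3 : ∀ X ∈ F 1, ∀ S ∈ F 2, X ^ 3 + 6 * (S * X) ∈ F 3 := by
    intro X hX S hS
    rw [pow_succ, pow_two]
    exact add_mem (hmul 2 1 _ _ (hmul 1 1 _ _ hX hX) hX) (n 6 _ _ (hmul 2 1 _ _ hS hX))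
  have C4 : ∀ X ∈ F 1, ∀ S ∈ F 2, X ^ 4 + 12 * (S * X ^ 2) + 12 * S ^ 2 ∈ F 4 := by
    intro X hX S hS
    rw [pow_succ, pow_succ, pow_two, pow_two]
    exact add_mem (add_mem (hmul 3 1 _ _ (hmul 2 1 _ _ (hmul 1 1 _ _ hX hX) hX) hX)
      (n 12 _ _ (hmul 2 2 _ _ hS (hmul 1 1 _ _ hX hX)))) (n 12 _ _ (hmul 2 2 _ _ hS hS))
  have x1 := had1 x hx
  have y1 := had1 y hy
  have x2 := C2 _ x1 _ (had2 s hs)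
  have y2 := C2 _ y1 _ (had2 t ht)
  have x3 := C3 _ x1 _ (had2 s hs)
  have y3 := C3 _ y1 _ (had2 t ht)
  have x4 := C4 _ x1 _ (had2 s hs)
  have y4 := C4 _ y1 _ (had2 t ht)
  clear q2 q3 q4 hXY hE
  generalize (LieAlgebra.ad R L x) ^ 4 + 12 * _ + _ = A4 at *
  generalize (LieAlgebra.ad R L y) ^ 4 + 12 * _ + _ = B4 at *
  generalize (LieAlgebra.ad R L x) ^ 3 + _ = A3 at *
  generalize (LieAlgebra.ad R L y) ^ 3 + _ = B3 at *
  generalize (LieAlgebra.ad R L x) ^ 2 + _ = A2 at *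
  generalize (LieAlgebra.ad R L y) ^ 2 + _ = B2 at *
  generalize LieAlgebra.ad R L x = A1 at *
  generalize LieAlgebra.ad R L y = B1 at *
  have z14 := hzero _ (by norm_num) _ (hmul _ _ _ _ x1 y4)
  have z23 := hzero _ (by norm_num) _ (hmul _ _ _ _ x2 y3)
  have z24 := hzero _ (by norm_num) _ (hmul _ _ _ _ x2 y4)
  have z32 := hzero _ (by norm_num) _ (hmul _ _ _ _ x3 y2)
  have z33 := hzero _ (by norm_num) _ (hmul _ _ _ _ x3 y3)
  have z34 := hzero _ (by norm_num) _ (hmul _ _ _ _ x3 y4)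
  have z41 := hzero _ (by norm_num) _ (hmul _ _ _ _ x4 y1)
  have z42 := hzero _ (by norm_num) _ (hmul _ _ _ _ x4 y2)
  have z43 := hzero _ (by norm_num) _ (hmul _ _ _ _ x4 y3)
  have z44 := hzero _ (by norm_num) _ (hmul _ _ _ _ x4 y4)
  have n2 : ∀ a : Module.End R L, 2 * a = (2 : R) • a := fun a => by
    rw [ofNat_smul_eq_nsmul, nsmul_eq_mul]; rfl
  have n3 : ∀ a : Module.End R L, 3 * a = (3 : R) • a := fun a => by
    rw [ofNat_smul_eq_nsmul, nsmul_eq_mul]; rfl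
  have n4 : ∀ a : Module.End R L, 4 * a = (4 : R) • a := fun a => by
    rw [ofNat_smul_eq_nsmul, nsmul_eq_mul]; rfl
  have n6 : ∀ a : Module.End R L, 6 * a = (6 : R) • a := fun a => by
    rw [ofNat_smul_eq_nsmul, nsmul_eq_mul]; rfl
  have ha : (2 : R) * ⅟(2:R) = 1 := mul_invOf_self _
  have hb : (3 : R) * ⅟(3:R) = 1 := mul_invOf_self _
  generalize ⅟(2:R) = a at *
  generalize ⅟(3:R) = b at *
  have k1 : a * 2 = 1 := by linear_combination ha
  have k2 : a * b * 3 = a := by linear_combination a * hb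
  have k3 : a * a * a * b * 4 = a * b := by linear_combination (a * b) * (2 * a + 1) * ha
  have k4 : a * a * a * b * 6 = a * a := by linear_combination a * a * (3 * b * ha + hb)
  simp only [n2, n3, n4, n6, mul_add, add_mul, one_mul, mul_one, smul_add, smul_smul,
    smul_mul_assoc, mul_smul_comm, z14, z23, z24, z32, z33, z34, z41, z42, z43, z44, smul_zero,
    add_zero, k1, k2, k3, k4, one_smul]
  abel

/-- Let `R` be a commutative ring in which 2 and 3 are invertible and let
`L` be a 5-graded Lie algebra over `R` (grading `g : ℤ → Submodule R L`, internal direct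
sum, `⁅L_i, L_j⁆ ⊆ L_{i+j}` and `L_i = 0` for `|i| > 2`).  Then for every `σ ∈ {1,-1}`,
all `x, y ∈ L_σ` and `s, t ∈ L_{2σ}`, one has
`e_σ(x,s) ∘ e_σ(y,t) = e_σ(x+y, s+t+(1/2)⁅x,y⁆)` and
`e_σ(x,s) ∘ e_σ(-x,-s) = id`; in particular `e_σ(x,s)` is invertible with inverse
`e_σ(-x,-s)`.  Here `e_σ(x,s) := eMap R (x + s)`. -/
theorem stmt0 {R L : Type*} [CommRing R] [Invertible (2 : R)] [Invertible (3 : R)]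
    [LieRing L] [LieAlgebra R L]
    (g : ℤ → Submodule R L)
    (hinternal : DirectSum.IsInternal g)
    (hbracket : ∀ i j : ℤ, ∀ x ∈ g i, ∀ y ∈ g j, ⁅x, y⁆ ∈ g (i + j))
    (hbound : ∀ i : ℤ, 2 < |i| → g i = ⊥)
    (σ : ℤ) (hσ : σ = 1 ∨ σ = -1)
    (x y : L) (hx : x ∈ g σ) (hy : y ∈ g σ)
    (s t : L) (hs : s ∈ g (2 * σ)) (ht : t ∈ g (2 * σ)) :
    eMap R (x + s) * eMap R (y + t)
        = eMap R ((x + y) + (s + t + ⅟(2:R) • ⁅x, y⁆))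
      ∧ eMap R (x + s) * eMap R (-x + -s) = 1
      ∧ eMap R (-x + -s) * eMap R (x + s) = 1
      ∧ IsUnit (eMap R (x + s)) := by
  have e0 : eMap R (0 : L) = 1 := by simp [eMap]
  have m1 := aux_main g hinternal hbracket hbound σ hσ x (-x) hx (neg_mem hx) s (-s) hs (neg_mem hs)
  have m2 := aux_main g hinternal hbracket hbound σ hσ (-x) x (neg_mem hx) hx (-s) s (neg_mem hs) hs
  simp only [lie_neg, neg_lie, lie_self, neg_zero, smul_zero, add_neg_cancel, neg_add_cancel,
    add_zero, e0] at m1 m2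
  exact ⟨aux_main g hinternal hbracket hbound σ hσ x y hx hy s t hs ht, m1, m2,
    ⟨⟨_, _, m1, m2⟩, rfl⟩⟩
end

section
/- Let R be a commutative ring in which 2 and 3 are invertible, and let L be a 5-graded Lie algebra over R admitting a grading derivation ζ ∈ L. Then e_σ(x,s)(ζ) = ζ − σ·x − 2σ·s for all σ ∈ {1,−1} and all (x,s) ∈ L_σ × L_{2σ}, and consequently the map (x,s) ↦ e_σ(x,s) from L_σ × L_{2σ} to End_R(L) is injective. -/
/-- Let `R` be a commutative ring in which 2 and 3 are invertible, and
let `L` be a 5-graded Lie algebra over `R` admitting a grading derivation `ζ ∈ L`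
(i.e. `⁅ζ, v⁆ = i • v` for all `v ∈ L_i`).  Then `e_σ(x,s)(ζ) = ζ - σ•x - 2σ•s` for all
`σ ∈ {1,-1}` and `(x,s) ∈ L_σ × L_{2σ}`, and consequently the map
`(x,s) ↦ e_σ(x,s)` on `L_σ × L_{2σ}` is injective. -/
theorem stmt1 {R L : Type*} [CommRing R] [Invertible (2 : R)] [Invertible (3 : R)]
    [LieRing L] [LieAlgebra R L]
    (g : ℤ → Submodule R L)
    (hinternal : DirectSum.IsInternal g)
    (hbracket : ∀ i j : ℤ, ∀ x ∈ g i, ∀ y ∈ g j, ⁅x, y⁆ ∈ g (i + j))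
    (hbound : ∀ i : ℤ, 2 < |i| → g i = ⊥)
    (ζ : L) (hζ : ∀ i : ℤ, ∀ v ∈ g i, ⁅ζ, v⁆ = i • v)
    (σ : ℤ) (hσ : σ = 1 ∨ σ = -1) :
    (∀ x ∈ g σ, ∀ s ∈ g (2 * σ),
        eMap R (x + s) ζ = ζ - σ • x - (2 * σ) • s)
    ∧ (∀ x ∈ g σ, ∀ x' ∈ g σ, ∀ s ∈ g (2 * σ), ∀ s' ∈ g (2 * σ),
        eMap R (x + s) = eMap R (x' + s') → x = x' ∧ s = s') := by
  have key : ∀ x ∈ g σ, ∀ s ∈ g (2 * σ),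
      eMap R (x + s) ζ = ζ - σ • x - (2 * σ) • s := by
    intro x hx s hs
    have hxs : ⁅x, s⁆ = 0 := by
      have h := hbracket _ _ x hx s hs
      rw [hbound (σ + 2 * σ) (by rcases hσ with rfl | rfl <;> norm_num)] at h
      simpa using h
    have hsx : ⁅s, x⁆ = 0 := by rw [← lie_skew, hxs, neg_zero]
    have h1 : LieAlgebra.ad R L (x + s) ζ = - (σ • x) - (2 * σ) • s := by
      rw [LieAlgebra.ad_apply, ← lie_skew, lie_add, hζ _ x hx, hζ _ s hs]
      abel
    have h2 : LieAlgebra.ad R L (x + s) (- (σ • x) - (2 * σ) • s) = 0 := by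
      rw [LieAlgebra.ad_apply]
      simp only [add_lie, lie_sub, lie_neg, lie_zsmul, lie_self, hxs, hsx]
      simp
    simp only [eMap, LinearMap.add_apply, LinearMap.smul_apply, pow_succ, pow_zero, one_mul,
      Module.End.mul_apply, Module.End.one_apply, h1, h2, map_zero, smul_zero, add_zero]
    abel
  refine ⟨key, ?_⟩
  intro x hx x' hx' s hs s' hs' he
  have h := congrArg (fun f : Module.End R L => f ζ) he
  simp only [key x hx s hs, key x' hx' s' hs'] at h
  have hd : (x - x') + (2 : ℤ) • (s - s') = 0 := by
    rcases hσ with rfl | rfl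
    · have h' := sub_eq_zero.mpr h
      rw [← neg_eq_zero, ← h']
      module
    · have h' := sub_eq_zero.mpr h
      rw [← h']
      module
  have hb : σ • (x - x') + (2 : ℤ) • ((2 * σ) • (s - s')) = 0 := by
    have h' := congrArg (fun v => ⁅ζ, v⁆) hd
    simpa only [lie_add, lie_zsmul, lie_zero, hζ _ _ (Submodule.sub_mem _ hx hx'),
      hζ _ _ (Submodule.sub_mem _ hs hs')] using h'
  have h2 : (2 : R) • (s - s') = 0 := by
    rcases hσ with rfl | rfl
    · calc (2 : R) • (s - s') = ((1 : ℤ) • (x - x') + (2 : ℤ) • ((2 * 1 : ℤ) • (s - s')))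
            - ((x - x') + (2 : ℤ) • (s - s')) := by module
        _ = 0 := by rw [hb, hd, sub_zero]
    · calc (2 : R) • (s - s') = -((-1 : ℤ) • (x - x') + (2 : ℤ) • ((2 * -1 : ℤ) • (s - s')))
            - ((x - x') + (2 : ℤ) • (s - s')) := by module
        _ = 0 := by rw [hb, hd, neg_zero, sub_zero]
  have hs0 : s - s' = 0 := by
    have h' := congrArg (fun v => ⅟(2 : R) • v) h2
    simpa only [smul_smul, invOf_mul_self, one_smul, smul_zero] using h'
  rw [hs0, smul_zero, add_zero] at hd
  exact ⟨sub_eq_zero.mp hd, sub_eq_zero.mp hs0⟩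
end

section
/- Let k be a field with char(k) ≠ 2 and char(k) ≠ 3, and let L be a finite-dimensional 5-graded Lie algebra over k. If moreover char(k) ≠ 5 or L_2 = L_{−2} = 0, then L is algebraic; that is, for every σ ∈ {1,−1} and every x ∈ L_σ, s ∈ L_{2σ}, the linear map e_σ(x,s) is a Lie algebra automorphism of L: it is bijective and satisfies e_σ(x,s)(⁅a,b⁆) = ⁅e_σ(x,s)(a), e_σ(x,s)(b)⁆ for all a,b ∈ L. -/
/-- Multiplicativity from abstract vanishing conditions on divided powers. -/
theorem eMap_lie_aux {k L : Type*} [Field k] [Invertible (2 : k)] [Invertible (3 : k)]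
    [LieRing L] [LieAlgebra k L] (v : L)
    (h5 : ∀ a : L, ⁅v, ⁅v, ⁅v, ⁅v, ⁅v, a⁆⁆⁆⁆⁆ = 0)
    (H : ∀ a0 a1 a2 a3 a4 b0 b1 b2 b3 b4 : L,
      ⁅v, a0⁆ = a1 → ⁅v, a1⁆ = (2 : k) • a2 → ⁅v, a2⁆ = (3 : k) • a3 → ⁅v, a3⁆ = (4 : k) • a4 →
      ⁅v, a4⁆ = 0 →
      ⁅v, b0⁆ = b1 → ⁅v, b1⁆ = (2 : k) • b2 → ⁅v, b2⁆ = (3 : k) • b3 → ⁅v, b3⁆ = (4 : k) • b4 →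
      ⁅v, b4⁆ = 0 →
      ⁅v, ⁅a4, b0⁆ + ⁅a3, b1⁆ + ⁅a2, b2⁆ + ⁅a1, b3⁆ + ⁅a0, b4⁆⁆ = 0 →
      ⁅a4, b1⁆ + ⁅a3, b2⁆ + ⁅a2, b3⁆ + ⁅a1, b4⁆ + (⁅a4, b2⁆ + ⁅a3, b3⁆ + ⁅a2, b4⁆)
        + ⁅a4, b3⁆ + ⁅a3, b4⁆ + ⁅a4, b4⁆ = 0) (a b : L) :
    eMap k v ⁅a, b⁆ = ⁅eMap k v a, eMap k v b⁆ := by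
  have h2 : (2 : k) * ⅟2 = 1 := mul_invOf_self _
  have h3 : (3 : k) * ⅟3 = 1 := mul_invOf_self _
  have h4 : (4 : k) * (⅟2 * ⅟2) = 1 := by linear_combination (1 + 2 * ⅟(2:k)) * h2
  -- divided powers
  have key : ∀ a : L, ∃ a1 a2 a3 a4 : L, ⁅v, a⁆ = a1 ∧ ⁅v, a1⁆ = (2 : k) • a2 ∧
      ⁅v, a2⁆ = (3 : k) • a3 ∧ ⁅v, a3⁆ = (4 : k) • a4 ∧ ⁅v, a4⁆ = 0 ∧
      eMap k v a = a + a1 + a2 + a3 + a4 := by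
    intro a
    refine ⟨⁅v, a⁆, ⅟(2:k) • ⁅v, ⁅v, a⁆⁆, (⅟(2:k) * ⅟(3:k)) • ⁅v, ⁅v, ⁅v, a⁆⁆⁆,
      (⅟(2:k) * ⅟(2:k) * ⅟(2:k) * ⅟(3:k)) • ⁅v, ⁅v, ⁅v, ⁅v, a⁆⁆⁆⁆, rfl, ?_, ?_, ?_, ?_, ?_⟩
    · rw [smul_smul, h2, one_smul]
    · rw [lie_smul, smul_smul]; congr 1; linear_combination -⅟(2:k) * h3
    · rw [lie_smul, smul_smul]; congr 1; linear_combination -⅟(2:k) * ⅟(3:k) * h4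
    · rw [lie_smul, h5, smul_zero]
    · simp [eMap, pow_succ]
  have inj : ∀ (c d : k) (x y : L), c * d = 1 → c • x = c • y → x = y := by
    intro c d x y hcd h
    have := congrArg (fun z => d • z) h
    simpa [smul_smul, mul_comm d c, hcd] using this
  obtain ⟨a1, a2, a3, a4, ha0, ha1, ha2, ha3, ha4, hEa⟩ := key a
  obtain ⟨b1, b2, b3, b4, hb0, hb1, hb2, hb3, hb4, hEb⟩ := key b
  obtain ⟨c1, c2, c3, c4, hc0, hc1, hc2, hc3, hc4, hEc⟩ := key ⁅a, b⁆
  have e1 : c1 = ⁅a1, b⁆ + ⁅a, b1⁆ := by rw [← hc0, leibniz_lie, ha0, hb0]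
  have e2 : c2 = ⁅a2, b⁆ + ⁅a1, b1⁆ + ⁅a, b2⁆ := by
    refine inj 2 _ _ _ h2 ?_
    rw [← hc1, e1]
    simp only [lie_add, leibniz_lie v, ha0, hb0, ha1, hb1, lie_smul, smul_lie]
    module
  have e3 : c3 = ⁅a3, b⁆ + ⁅a2, b1⁆ + ⁅a1, b2⁆ + ⁅a, b3⁆ := by
    refine inj 3 _ _ _ h3 ?_
    rw [← hc2, e2]
    simp only [lie_add, leibniz_lie v, ha0, hb0, ha1, hb1, ha2, hb2, lie_smul, smul_lie]
    module
  have e4 : c4 = ⁅a4, b⁆ + ⁅a3, b1⁆ + ⁅a2, b2⁆ + ⁅a1, b3⁆ + ⁅a, b4⁆ := by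
    refine inj 4 _ _ _ h4 ?_
    rw [← hc3, e3]
    simp only [lie_add, leibniz_lie v, ha0, hb0, ha1, hb1, ha2, hb2, ha3, hb3, lie_smul, smul_lie]
    module
  have hH := H a a1 a2 a3 a4 b b1 b2 b3 b4 ha0 ha1 ha2 ha3 ha4 hb0 hb1 hb2 hb3 hb4
    (by rw [← e4, hc4])
  rw [hEa, hEb, hEc, e4, e3, e2, e1, ← sub_eq_zero, ← neg_eq_zero, ← hH]
  simp only [lie_add, add_lie]
  abel

/-- Bijectivity of the truncated exponential. -/
theorem eMap_bijective_aux {k L : Type*} [Field k] [Invertible (2 : k)] [Invertible (3 : k)]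
    [LieRing L] [LieAlgebra k L] (v : L)
    (h5 : ∀ a : L, ⁅v, ⁅v, ⁅v, ⁅v, ⁅v, a⁆⁆⁆⁆⁆ = 0) :
    Function.Bijective (eMap k v) := by
  rw [← Module.End.isUnit_iff]
  have hD : (LieAlgebra.ad k L v) ^ 5 = 0 := by
    ext a; simpa [pow_succ] using h5 a
  set D := LieAlgebra.ad k L v with hDdef
  let q : Module.End k L := 1 + ⅟(2:k) • D + (⅟(2:k) * ⅟(3:k)) • D ^ 2
    + (⅟(2:k) * ⅟(2:k) * ⅟(2:k) * ⅟(3:k)) • D ^ 3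
  have hq : Commute D q := by
    refine (((Commute.one_right _).add_right ?_).add_right ?_).add_right ?_
    · exact (Commute.refl D).smul_right _
    · exact ((Commute.refl D).pow_right 2).smul_right _
    · exact ((Commute.refl D).pow_right 3).smul_right _
  have hE : eMap k v = 1 + D * q := by
    simp only [eMap, q, ← hDdef, mul_add, mul_smul_comm, mul_one, ← pow_succ', ← pow_two]
    abel
  rw [hE]
  exact (hq.isNilpotent_mul_right ⟨5, hD⟩).isUnit_one_add

/-- Let `k` be a field with `char k ≠ 2, 3` (equivalently, `2` and `3`
are invertible in `k`) and let `L` be a finite-dimensional 5-graded Lie algebra over `k`.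
If moreover `char k ≠ 5` (i.e. `(5:k) ≠ 0`) or `L_2 = L_{-2} = 0`, then `L` is algebraic:
for every `σ ∈ {1,-1}`, `x ∈ L_σ` and `s ∈ L_{2σ}`, the map `e_σ(x,s)` is a bijective
Lie algebra endomorphism, i.e. a Lie algebra automorphism of `L`. -/
theorem stmt2 {k L : Type*} [Field k] [Invertible (2 : k)] [Invertible (3 : k)]
    [LieRing L] [LieAlgebra k L] [FiniteDimensional k L]
    (g : ℤ → Submodule k L)
    (hinternal : DirectSum.IsInternal g)
    (hbracket : ∀ i j : ℤ, ∀ x ∈ g i, ∀ y ∈ g j, ⁅x, y⁆ ∈ g (i + j))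
    (hbound : ∀ i : ℤ, 2 < |i| → g i = ⊥)
    (hchar5 : (5 : k) ≠ 0 ∨ (g 2 = ⊥ ∧ g (-2) = ⊥)) :
    ∀ σ : ℤ, σ = 1 ∨ σ = -1 → ∀ x ∈ g σ, ∀ s ∈ g (2 * σ),
      Function.Bijective (eMap k (x + s)) ∧
      ∀ a b : L, eMap k (x + s) ⁅a, b⁆ = ⁅eMap k (x + s) a, eMap k (x + s) b⁆ := by
  intro σ hσ x hx s hs
  have hσ2 : σ * σ = 1 := by rcases hσ with rfl | rfl <;> norm_num
  -- the filtration
  let F : ℤ → Submodule k L := fun n => ⨆ j : {j : ℤ // n ≤ σ * j}, g j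
  have gF : ∀ n j : ℤ, n ≤ σ * j → g j ≤ F n := fun n j h =>
    le_iSup (fun j : {j : ℤ // n ≤ σ * j} => g j) ⟨j, h⟩
  have hF : ∀ m n : ℤ, ∀ y ∈ F m, ∀ z ∈ F n, ⁅y, z⁆ ∈ F (m + n) := by
    intro m n y hy z hz
    refine Submodule.iSup_induction _ (motive := fun y => ⁅y, z⁆ ∈ F (m + n)) hy ?_ ?_ ?_
    · rintro ⟨i, hi⟩ y hy
      refine Submodule.iSup_induction _ (motive := fun z => ⁅y, z⁆ ∈ F (m + n)) hz ?_ ?_ ?_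
      · rintro ⟨j, hj⟩ z hz
        exact gF _ (i + j) (by rw [mul_add]; exact add_le_add hi hj) (hbracket i j y hy z hz)
      · simp
      · intro z z' h h'; rw [lie_add]; exact add_mem h h'
    · simp
    · intro z z' h h'; rw [add_lie]; exact add_mem h h'
  have hv : x + s ∈ F 1 := by
    refine add_mem (gF 1 σ (by omega) hx) (gF 1 (2 * σ) ?_ hs)
    have : σ * (2 * σ) = 2 * (σ * σ) := by ring
    omega
  have htop : ∀ n : ℤ, (∀ j, ¬ n ≤ σ * j → g j = ⊥) → ∀ y, y ∈ F n := by
    intro n hn y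
    have : (⨆ j, g j) ≤ F n := by
      refine iSup_le fun j => ?_
      by_cases h : n ≤ σ * j
      · exact gF n j h
      · rw [hn j h]; exact bot_le
    rw [hinternal.submodule_iSup_eq_top] at this
    exact this trivial
  have hbot : ∀ n : ℤ, (∀ j, n ≤ σ * j → g j = ⊥) → ∀ y ∈ F n, y = 0 := by
    intro n hn y hy
    have : F n ≤ ⊥ := iSup_le fun j => (hn j j.2).le
    simpa using this hy
  clear_value F
  have habs : ∀ j : ℤ, |σ * j| = |j| := by
    intro j; rcases hσ with rfl | rfl <;> simp
  have hF2 : ∀ y, y ∈ F (-2) := htop _ fun j hj => hbound j (by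
    rw [← habs]; exact lt_abs.2 (Or.inr (by omega)))
  have hF3 : ∀ y ∈ F 3, y = 0 := hbot _ fun j hj => hbound j (by
    rw [← habs]; exact lt_abs.2 (Or.inl (by omega)))
  generalize x + s = v at hv ⊢
  have hD : ∀ n : ℤ, ∀ y ∈ F n, ⁅v, y⁆ ∈ F (1 + n) := fun n y hy => hF 1 n v hv y hy
  have h5 : ∀ a : L, ⁅v, ⁅v, ⁅v, ⁅v, ⁅v, a⁆⁆⁆⁆⁆ = 0 := fun a =>
    hF3 _ (hD 2 _ (hD 1 _ (hD 0 _ (hD (-1) _ (hD (-2) _ (hF2 a))))))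
  refine ⟨eMap_bijective_aux v h5, eMap_lie_aux v h5 ?_⟩
  intro a0 a1 a2 a3 a4 b0 b1 b2 b3 b4 ha0 ha1 ha2 ha3 ha4 hb0 hb1 hb2 hb3 hb4 hC
  have n2 : (2 : k) ≠ 0 := Invertible.ne_zero _
  have n3 : (3 : k) ≠ 0 := Invertible.ne_zero _
  have n4 : (4 : k) ≠ 0 := by
    have : (4 : k) = 2 * 2 := by norm_num
    rw [this]; exact mul_ne_zero n2 n2
  have n6 : (6 : k) ≠ 0 := by
    have : (6 : k) = 2 * 3 := by norm_num
    rw [this]; exact mul_ne_zero n2 n3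
  have step : ∀ (c : k) (n : ℤ) (y z : L), c ≠ 0 → ⁅v, y⁆ = c • z → y ∈ F n → z ∈ F (1 + n) := by
    intro c n y z hc h hy
    have := hD n y hy
    rw [h] at this
    exact (Submodule.smul_mem_iff _ hc).1 this
  rcases hchar5 with n5 | ⟨g2, g2'⟩
  · have A1 : a1 ∈ F (-1) := ha0 ▸ hD (-2) _ (hF2 _)
    have A2 : a2 ∈ F 0 := step 2 (-1) _ _ n2 ha1 A1
    have A3 : a3 ∈ F 1 := step 3 0 _ _ n3 ha2 A2
    have A4 : a4 ∈ F 2 := step 4 1 _ _ n4 ha3 A3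
    have B1 : b1 ∈ F (-1) := hb0 ▸ hD (-2) _ (hF2 _)
    have B2 : b2 ∈ F 0 := step 2 (-1) _ _ n2 hb1 B1
    have B3 : b3 ∈ F 1 := step 3 0 _ _ n3 hb2 B2
    have B4 : b4 ∈ F 2 := step 4 1 _ _ n4 hb3 B3
    have z43 : ⁅a4, b3⁆ = 0 := hF3 _ (hF 2 1 _ A4 _ B3)
    have z34 : ⁅a3, b4⁆ = 0 := hF3 _ (hF 1 2 _ A3 _ B4)
    have z44 : ⁅a4, b4⁆ = 0 := by
      have h : (4 : k) • ⁅a4, b4⁆ = 0 := by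
        have := congrArg (fun z => ⁅v, z⁆) z43
        simpa [leibniz_lie v, ha4, hb3] using this
      exact (smul_eq_zero.1 h).resolve_left n4
    have P5 : ⁅a4, b1⁆ + ⁅a3, b2⁆ + ⁅a2, b3⁆ + ⁅a1, b4⁆ = 0 := by
      refine (smul_eq_zero.1 (?_ : (5 : k) • (_ : L) = 0)).resolve_left n5
      rw [← hC]
      simp only [lie_add, leibniz_lie v, ha0, hb0, ha1, hb1, ha2, hb2, ha3, hb3, ha4, hb4,
        lie_smul, smul_lie, lie_zero, zero_lie]
      module
    have P6 : ⁅a4, b2⁆ + ⁅a3, b3⁆ + ⁅a2, b4⁆ = 0 := by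
      refine (smul_eq_zero.1 (?_ : (6 : k) • (_ : L) = 0)).resolve_left n6
      rw [← lie_zero v, ← P5]
      simp only [lie_add, leibniz_lie v, ha0, hb0, ha1, hb1, ha2, hb2, ha3, hb3, ha4, hb4,
        lie_smul, smul_lie, lie_zero, zero_lie]
      module
    rw [P5, P6, z43, z34, z44]; simp
  · have hg : ∀ j : ℤ, 1 < |j| → g j = ⊥ := by
      intro j hj
      by_cases h : 2 < |j|
      · exact hbound j h
      · have : |j| = 2 := by omega
        rcases (abs_eq (by norm_num)).1 this with rfl | rfl
        · exact g2
        · exact g2'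
    have hF1 : ∀ y, y ∈ F (-1) := htop _ fun j hj => hg j (by
      rw [← habs]; exact lt_abs.2 (Or.inr (by omega)))
    have hF2 : ∀ y ∈ F 2, y = 0 := hbot _ fun j hj => hg j (by
      rw [← habs]; exact lt_abs.2 (Or.inl (by omega)))
    have A1 : a1 ∈ F 0 := ha0 ▸ hD (-1) _ (hF1 _)
    have A2 : a2 ∈ F 1 := step 2 0 _ _ n2 ha1 A1
    have A3 : a3 = 0 := hF2 _ (step 3 1 _ _ n3 ha2 A2)
    have A4 : a4 = 0 := by
      rw [A3, lie_zero] at ha3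
      exact (smul_eq_zero.1 ha3.symm).resolve_left n4
    have B1 : b1 ∈ F 0 := hb0 ▸ hD (-1) _ (hF1 _)
    have B2 : b2 ∈ F 1 := step 2 0 _ _ n2 hb1 B1
    have B3 : b3 = 0 := hF2 _ (step 3 1 _ _ n3 hb2 B2)
    have B4 : b4 = 0 := by
      rw [B3, lie_zero] at hb3
      exact (smul_eq_zero.1 hb3.symm).resolve_left n4
    simp [A3, A4, B3, B4]
end

section
/- Let k be a field with char(k) ≠ 2 and char(k) ≠ 3, and let L be a finite-dimensional 5-graded Lie algebra over k that is algebraic. Then for every commutative associative unital k-algebra R, the base change L ⊗_k R (a 5-graded Lie algebra over R with graded components L_i ⊗_k R) is again algebraic: for every σ ∈ {1,−1} and all x ∈ L_σ ⊗_k R, s ∈ L_{2σ} ⊗_k R, the endomorphism e_σ(x,s) = Σ_{i=0}^{4} (1/i!)·(ad(x+s))^i of L ⊗_k R is an R-Lie algebra automorphism. -/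
open TensorProduct

/-- degree five obstruction -/
def T5 {M : Type*} [LieRing M] (v a b : M) : M :=
  ⁅⁅v, a⁆, ⁅v, ⁅v, ⁅v, ⁅v, b⁆⁆⁆⁆⁆ + (2:ℕ) • ⁅⁅v, ⁅v, a⁆⁆, ⁅v, ⁅v, ⁅v, b⁆⁆⁆⁆
   + (2:ℕ) • ⁅⁅v, ⁅v, ⁅v, a⁆⁆⁆, ⁅v, ⁅v, b⁆⁆⁆ + ⁅⁅v, ⁅v, ⁅v, ⁅v, a⁆⁆⁆⁆, ⁅v, b⁆⁆

section alg
variable {R M : Type*} [CommRing R] [LieRing M] [LieAlgebra R M]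

theorem lie_T5 (v a b : M) (h5 : ∀ a : M, ⁅v, ⁅v, ⁅v, ⁅v, ⁅v, a⁆⁆⁆⁆⁆ = 0) :
    ⁅v, T5 v a b⁆ = (3:ℕ) • ⁅⁅v, ⁅v, a⁆⁆, ⁅v, ⁅v, ⁅v, ⁅v, b⁆⁆⁆⁆⁆
      + (4:ℕ) • ⁅⁅v, ⁅v, ⁅v, a⁆⁆⁆, ⁅v, ⁅v, ⁅v, b⁆⁆⁆⁆
      + (3:ℕ) • ⁅⁅v, ⁅v, ⁅v, ⁅v, a⁆⁆⁆⁆, ⁅v, ⁅v, b⁆⁆⁆ := by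
  simp only [T5, lie_add, lie_nsmul, leibniz_lie v ⁅v, _⁆, h5, zero_lie, lie_zero]
  module

variable [Invertible (2 : R)] [Invertible (3 : R)]

theorem eMap_apply (v a : M) : eMap R v a = a + ⁅v, a⁆ + ⅟(2:R) • ⁅v, ⁅v, a⁆⁆
    + (⅟(2:R) * ⅟(3:R)) • ⁅v, ⁅v, ⁅v, a⁆⁆⁆
    + (⅟(2:R) * ⅟(2:R) * ⅟(2:R) * ⅟(3:R)) • ⁅v, ⁅v, ⁅v, ⁅v, a⁆⁆⁆⁆ := by
  simp [eMap, pow_succ]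

theorem defect (v a b : M) (h5 : ∀ a : M, ⁅v, ⁅v, ⁅v, ⁅v, ⁅v, a⁆⁆⁆⁆⁆ = 0)
    (h34 : ∀ a b : M, ⁅⁅v, ⁅v, ⁅v, a⁆⁆⁆, ⁅v, ⁅v, ⁅v, ⁅v, b⁆⁆⁆⁆⁆ = 0) :
    ⁅eMap R v a, eMap R v b⁆ = eMap R v ⁅a, b⁆ +
      (⅟(2:R) * ⅟(2:R) * ⅟(2:R) * ⅟(3:R)) • (T5 v a b + (⅟(2:R) * ⅟(3:R)) • ⁅v, T5 v a b⁆) := by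
  have h43 : ∀ a b : M, ⁅⁅v, ⁅v, ⁅v, ⁅v, a⁆⁆⁆⁆, ⁅v, ⁅v, ⁅v, b⁆⁆⁆⁆ = 0 := fun a b => by
    rw [← lie_skew, h34, neg_zero]
  have e2 : (2:R) * ⅟(2:R) = 1 := mul_invOf_self _
  have e3 : (3:R) * ⅟(3:R) = 1 := mul_invOf_self _
  rw [lie_T5 v a b h5]
  simp only [eMap_apply, T5]
  generalize ⅟(2:R) = h at *
  generalize ⅟(3:R) = t at *
  simp only [leibniz_lie v a, leibniz_lie v ⁅_, _⁆, lie_add, add_lie, lie_smul, smul_lie, h34, h43, smul_zero]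
  match_scalars <;> grind

theorem T5_eq_zero (v a b : M) (h5 : ∀ a : M, ⁅v, ⁅v, ⁅v, ⁅v, ⁅v, a⁆⁆⁆⁆⁆ = 0)
    (h34 : ∀ a b : M, ⁅⁅v, ⁅v, ⁅v, a⁆⁆⁆, ⁅v, ⁅v, ⁅v, ⁅v, b⁆⁆⁆⁆⁆ = 0)
    (h : eMap R v ⁅a, b⁆ = ⁅eMap R v a, eMap R v b⁆) : T5 v a b = 0 := by
  rw [defect v a b h5 h34] at h
  have h1 : (⅟(2:R) * ⅟(2:R) * ⅟(2:R) * ⅟(3:R)) • (T5 v a b + (⅟(2:R) * ⅟(3:R)) • ⁅v, T5 v a b⁆) = 0 := by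
    simpa using h
  have h2 : T5 v a b + (⅟(2:R) * ⅟(3:R)) • ⁅v, T5 v a b⁆ = 0 := by
    have := congrArg (fun z => ((2:R) * 2 * 2 * 3) • z) h1
    simp only [smul_smul, smul_zero] at this
    rw [← this]
    have e : (2:R) * 2 * 2 * 3 * (⅟(2:R) * ⅟(2:R) * ⅟(2:R) * ⅟(3:R)) = 1 := by
      have e2 : (2:R) * ⅟(2:R) = 1 := mul_invOf_self _
      have e3 : (3:R) * ⅟(3:R) = 1 := mul_invOf_self _
      grind
    rw [e, one_smul]
  generalize T5 v a b = u at *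
  generalize (⅟(2:R) * ⅟(3:R)) = c at *
  have h3 : u = (-c) • ⁅v, u⁆ := by
    rw [neg_smul]; exact eq_neg_of_add_eq_zero_left h2
  have h4 : u = (-c)^5 • ⁅v, ⁅v, ⁅v, ⁅v, ⁅v, u⁆⁆⁆⁆⁆ := by
    conv_lhs => rw [h3, h3, h3, h3, h3]
    simp only [lie_smul, smul_smul]
    congr 1; ring
  rw [h4, h5, smul_zero]

theorem eMap_neg (v a : M) (h5 : ∀ a : M, ⁅v, ⁅v, ⁅v, ⁅v, ⁅v, a⁆⁆⁆⁆⁆ = 0) :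
    eMap R v (eMap R (-v) a) = a := by
  have e2 : (2:R) * ⅟(2:R) = 1 := mul_invOf_self _
  have e3 : (3:R) * ⅟(3:R) = 1 := mul_invOf_self _
  simp only [eMap_apply]
  generalize ⅟(2:R) = h at *
  generalize ⅟(3:R) = t at *
  simp only [lie_add, neg_lie, lie_neg, lie_smul, smul_neg, h5, lie_zero, smul_zero, neg_neg, neg_zero]
  match_scalars <;> first | grind | linear_combination (h^2*t - t + t*(2*h+1)) * e2 - h^2 * e3

theorem eMap_bij (v : M) (h5 : ∀ a : M, ⁅v, ⁅v, ⁅v, ⁅v, ⁅v, a⁆⁆⁆⁆⁆ = 0) :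
    Function.Bijective (eMap R v) := by
  refine Function.bijective_iff_has_inverse.2 ⟨eMap R (-v), fun a => ?_, fun a => eMap_neg v a h5⟩
  have := eMap_neg (R := R) (-v) a (by intro a; simp only [neg_lie, lie_neg, neg_neg, h5, neg_zero])
  rwa [neg_neg] at this

theorem eMap_add (x s a : M) (hxs : ⁅x, s⁆ = 0)
    (hs : ∀ a : M, ⁅s, ⁅s, ⁅s, a⁆⁆⁆ = 0)
    (h1 : ∀ a : M, ⁅x, ⁅s, ⁅s, a⁆⁆⁆ = 0) (h2 : ∀ a : M, ⁅x, ⁅x, ⁅x, ⁅s, a⁆⁆⁆⁆ = 0) :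
    eMap R (x + s) a = eMap R x (eMap R s a) := by
  have hc : ∀ a : M, ⁅s, ⁅x, a⁆⁆ = ⁅x, ⁅s, a⁆⁆ := fun a => by
    rw [leibniz_lie, ← lie_skew s x, hxs]; simp
  have e2 : (2:R) * ⅟(2:R) = 1 := mul_invOf_self _
  have e3 : (3:R) * ⅟(3:R) = 1 := mul_invOf_self _
  simp only [eMap_apply]
  generalize ⅟(2:R) = h at *
  generalize ⅟(3:R) = t at *
  simp only [lie_add, add_lie, lie_smul, hc, hs, h1, h2, lie_zero, smul_zero, add_zero]
  match_scalars <;> grind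

theorem eMap_s (s a b : M) (hs : ∀ a : M, ⁅s, ⁅s, ⁅s, a⁆⁆⁆ = 0) :
    eMap R s ⁅a, b⁆ = ⁅eMap R s a, eMap R s b⁆ := by
  rw [defect s a b (by simp [hs]) (by simp [hs])]
  simp [T5, hs]

end alg

section graded
variable {R M : Type*} [CommRing R] [LieRing M] [LieAlgebra R M]

/-- linear extension from homogeneous elements -/
theorem graded_ext (G : ℤ → Submodule R M) (htop : ⨆ i, G i = ⊤) (f : M →ₗ[R] M)
    (h : ∀ i, ∀ a ∈ G i, f a = 0) (a : M) : f a = 0 := by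
  have : (⊤ : Submodule R M) ≤ LinearMap.ker f := by
    rw [← htop]; exact iSup_le fun i a ha => h i a ha
  exact this trivial

theorem graded_facts (G : ℤ → Submodule R M) (htop : ⨆ i, G i = ⊤)
    (hbr : ∀ i j : ℤ, ∀ x ∈ G i, ∀ y ∈ G j, ⁅x, y⁆ ∈ G (i + j))
    (hb : ∀ i : ℤ, 2 < |i| → G i = ⊥) (σ : ℤ) (hσ : σ = 1 ∨ σ = -1)
    (x s : M) (hx : x ∈ G σ) (hs : s ∈ G (2 * σ)) :
    (∀ a : M, ⁅x, ⁅x, ⁅x, ⁅x, ⁅x, a⁆⁆⁆⁆⁆ = 0) ∧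
    (∀ a b : M, ⁅⁅x, ⁅x, ⁅x, a⁆⁆⁆, ⁅x, ⁅x, ⁅x, ⁅x, b⁆⁆⁆⁆⁆ = 0) ∧
    ⁅x, s⁆ = 0 ∧ (∀ a : M, ⁅s, ⁅s, ⁅s, a⁆⁆⁆ = 0) ∧ (∀ a : M, ⁅x, ⁅s, ⁅s, a⁆⁆⁆ = 0) ∧
    (∀ a : M, ⁅x, ⁅x, ⁅x, ⁅s, a⁆⁆⁆⁆ = 0) ∧
    (∀ a : M, ⁅x + s, ⁅x + s, ⁅x + s, ⁅x + s, ⁅x + s, a⁆⁆⁆⁆⁆ = 0) := by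
  have hz : ∀ i : ℤ, ∀ a ∈ G i, 2 < |i| → a = 0 := fun i a ha hi => by
    rw [hb i hi] at ha; exact ha
  have X : ∀ i : ℤ, ∀ a ∈ G i, ⁅x, a⁆ ∈ G (σ + i) := fun i a ha => hbr _ _ _ hx _ ha
  have S : ∀ i : ℤ, ∀ a ∈ G i, ⁅s, a⁆ ∈ G (2 * σ + i) := fun i a ha => hbr _ _ _ hs _ ha
  have key : ∀ n : ℤ, 5 ≤ n → ∀ i : ℤ, ∀ a ∈ G i, ∀ f : M →ₗ[R] M, ∀ j, f a ∈ G j → j = n * σ + i → f a = 0 := by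
    intro n hn i a ha f j hf hj
    by_cases hi : 2 < |i|
    · rw [hz i a ha hi, map_zero]
    · refine hz _ _ hf ?_
      subst hj
      rcases hσ with rfl | rfl <;> grind
  let A := LieAlgebra.ad R M x
  let B := LieAlgebra.ad R M s
  have h5 : ∀ a : M, ⁅x, ⁅x, ⁅x, ⁅x, ⁅x, a⁆⁆⁆⁆⁆ = 0 :=
    graded_ext G htop (A ∘ₗ A ∘ₗ A ∘ₗ A ∘ₗ A) fun i a ha =>
      key 5 le_rfl i a ha _ _ (X _ _ (X _ _ (X _ _ (X _ _ (X _ _ ha))))) (by ring)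
  have hs3 : ∀ a : M, ⁅s, ⁅s, ⁅s, a⁆⁆⁆ = 0 :=
    graded_ext G htop (B ∘ₗ B ∘ₗ B) fun i a ha =>
      key 6 (by norm_num) i a ha _ _ (S _ _ (S _ _ (S _ _ ha))) (by ring)
  have h1 : ∀ a : M, ⁅x, ⁅s, ⁅s, a⁆⁆⁆ = 0 :=
    graded_ext G htop (A ∘ₗ B ∘ₗ B) fun i a ha =>
      key 5 (by norm_num) i a ha _ _ (X _ _ (S _ _ (S _ _ ha))) (by ring)
  have h2 : ∀ a : M, ⁅x, ⁅x, ⁅x, ⁅s, a⁆⁆⁆⁆ = 0 :=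
    graded_ext G htop (A ∘ₗ A ∘ₗ A ∘ₗ B) fun i a ha =>
      key 5 (by norm_num) i a ha _ _ (X _ _ (X _ _ (X _ _ (S _ _ ha)))) (by ring)
  have hxs : ⁅x, s⁆ = 0 := hz _ _ (hbr _ _ _ hx _ hs) (by rcases hσ with rfl | rfl <;> norm_num)
  have hc : ∀ a : M, ⁅s, ⁅x, a⁆⁆ = ⁅x, ⁅s, a⁆⁆ := fun a => by
    rw [leibniz_lie, ← lie_skew s x, hxs]; simp
  refine ⟨h5, ?_, hxs, hs3, h1, h2, ?_⟩
  · intro a b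
    refine graded_ext G htop ((LieAlgebra.ad R M (A (A (A a)))) ∘ₗ (A ∘ₗ A ∘ₗ A ∘ₗ A)) (fun j b hb' => ?_) b
    have := graded_ext G htop ((LieAlgebra.ad R M (A (A (A (A b))))) ∘ₗ (A ∘ₗ A ∘ₗ A)) (fun i a ha => ?_) a
    · change ⁅⁅x, ⁅x, ⁅x, ⁅x, b⁆⁆⁆⁆, ⁅x, ⁅x, ⁅x, a⁆⁆⁆⁆ = 0 at this
      change ⁅⁅x, ⁅x, ⁅x, a⁆⁆⁆, ⁅x, ⁅x, ⁅x, ⁅x, b⁆⁆⁆⁆⁆ = 0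
      rw [← lie_skew, this, neg_zero]
    · change ⁅⁅x, ⁅x, ⁅x, ⁅x, b⁆⁆⁆⁆, ⁅x, ⁅x, ⁅x, a⁆⁆⁆⁆ = 0
      by_cases hi : 2 < |i|
      · rw [hz i a ha hi]; simp
      by_cases hj : 2 < |j|
      · rw [hz j b hb' hj]; simp
      refine hz _ _ (hbr _ _ _ (X _ _ (X _ _ (X _ _ (X _ _ hb')))) _ (X _ _ (X _ _ (X _ _ ha)))) ?_
      rcases hσ with rfl | rfl <;> grind
  · intro a
    simp only [lie_add, add_lie, hc, hs3, h1, h2, h5, lie_zero, add_zero]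

end graded

section poly
open MvPolynomial

theorem poly_zero {k ι : Type*} [Field k] [Invertible (2 : k)] [Invertible (3 : k)] [Fintype ι]
    (p : MvPolynomial ι k) (hp : p.IsHomogeneous 5) (h : ∀ t : ι → k, eval t p = 0) : p = 0 := by
  classical
  have h2 : (2:k) ≠ 0 := Invertible.ne_zero _
  have h3 : (3:k) ≠ 0 := Invertible.ne_zero _
  have hcard : ({0, 1, -1, 2, -2} : Finset k).card = 5 := by
    have h4 : (4:k) ≠ 0 := by
      have : (4:k) = 2 * 2 := by norm_num
      rw [this]; exact mul_ne_zero h2 h2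
    rw [Finset.card_insert_of_notMem, Finset.card_insert_of_notMem, Finset.card_insert_of_notMem,
      Finset.card_insert_of_notMem, Finset.card_singleton]
    all_goals simp only [Finset.mem_insert, Finset.mem_singleton, not_or]
    all_goals grind
  refine eq_zero_of_eval_zero_at_prod_finset p (fun _ => {0, 1, -1, 2, -2}) (fun i => ?_) (fun t _ => h t)
  rw [hcard, Nat.lt_succ_iff, degreeOf_le_iff]
  intro m hm
  by_contra! hlt
  have hdeg : m.degree = 5 := by
    have := hp (mem_support_iff.1 hm)
    rwa [Finsupp.degree_eq_weight_one]
  have aux : ∀ m : ι →₀ ℕ, m.degree = 5 → (∀ j, j ≠ i → m j = 0) → m = Finsupp.single i 5 := by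
    intro m hm hj
    have hmi : m = Finsupp.single i (m i) := by
      ext j
      by_cases hji : j = i
      · subst hji; simp
      · rw [hj j hji, Finsupp.single_eq_of_ne hji]
    rw [hmi] at hm ⊢
    simp at hm
    simp [hm]
  have hm5 : m = Finsupp.single i 5 := by
    apply aux m hdeg
    intro j hj
    rw [Finsupp.degree_eq_sum] at hdeg
    have h1 := Finset.add_sum_erase Finset.univ (fun j => m j) (Finset.mem_univ i)
    have h2 := Finset.single_le_sum (f := fun j => m j) (s := Finset.univ.erase i)
      (fun _ _ => Nat.zero_le _) (Finset.mem_erase.2 ⟨hj, Finset.mem_univ j⟩)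
    omega
  have he := h (Pi.single i 1)
  rw [eval_eq', Finset.sum_eq_single m] at he
  · apply mem_support_iff.1 hm
    rw [Finset.prod_eq_one, mul_one] at he
    · exact he
    · intro j _
      by_cases hji : j = i
      · subst hji; simp
      · simp [hm5, Finsupp.single_eq_of_ne hji]
  · intro m' hm' hne
    have hdeg' : m'.degree = 5 := by
      have := hp (mem_support_iff.1 hm')
      rwa [Finsupp.degree_eq_weight_one]
    have : ∃ j, j ≠ i ∧ m' j ≠ 0 := by
      by_contra! hcon
      exact hne ((aux m' hdeg' hcon).trans hm5.symm)
    obtain ⟨j, hji, hj⟩ := this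
    rw [Finset.prod_eq_zero (Finset.mem_univ j), mul_zero]
    simp [hji, hj]
  · intro hh; exact absurd hm hh

end poly

section transfer

theorem map_T5 {M N : Type*} [LieRing M] [LieRing N] (f : M →+ N)
    (hf : ∀ a b, f ⁅a, b⁆ = ⁅f a, f b⁆) (v a b : M) : f (T5 v a b) = T5 (f v) (f a) (f b) := by
  simp only [T5, map_add, map_nsmul, hf]

variable {k L : Type*} [Field k] [LieRing L] [LieAlgebra k L]

/-- base change along an algebra map -/
noncomputable def bcMap {A B : Type*} [CommRing A] [CommRing B] [Algebra k A] [Algebra k B]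
    (f : A →ₐ[k] B) : A ⊗[k] L →ₗ[k] B ⊗[k] L := TensorProduct.map f.toLinearMap LinearMap.id

theorem bcMap_lie {A B : Type*} [CommRing A] [CommRing B] [Algebra k A] [Algebra k B]
    (f : A →ₐ[k] B) (a b : A ⊗[k] L) : bcMap f ⁅a, b⁆ = ⁅bcMap f a, bcMap f b⁆ := by
  induction a with
  | zero => simp
  | add x y hx hy => simp only [add_lie, map_add, hx, hy]
  | tmul r x =>
    induction b with
    | zero => simp
    | add x y hx hy => simp only [lie_add, map_add, hx, hy]
    | tmul s y => simp [bcMap, LieAlgebra.ExtendScalars.bracket_tmul]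

/-- tensors with coefficients in a submodule -/
def Hom {A : Type*} [CommRing A] [Algebra k A] (L : Type*) [LieRing L] [LieAlgebra k L]
    (H : Submodule k A) : Submodule k (A ⊗[k] L) :=
  Submodule.span k {z | ∃ p : A, ∃ l : L, p ∈ H ∧ z = p ⊗ₜ l}

theorem Hom_lie {A : Type*} [CommRing A] [Algebra k A] {H : ℕ → Submodule k A}
    (hH : ∀ d e, ∀ p ∈ H d, ∀ q ∈ H e, p * q ∈ H (d + e)) {d e : ℕ} {a b : A ⊗[k] L}
    (ha : a ∈ Hom L (H d)) (hb : b ∈ Hom L (H e)) : ⁅a, b⁆ ∈ Hom L (H (d + e)) := by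
  induction ha using Submodule.span_induction with
  | zero => simp
  | add x y _ _ hx hy => rw [add_lie]; exact add_mem hx hy
  | smul c x _ hx =>
    rw [algebra_compatible_smul A c x, smul_lie, algebraMap_smul]; exact Submodule.smul_mem _ c hx
  | mem x hx =>
    obtain ⟨p, l, hp, rfl⟩ := hx
    induction hb using Submodule.span_induction with
    | zero => simp
    | add x y _ _ hx hy => rw [lie_add]; exact add_mem hx hy
    | smul c x _ hx =>
      rw [algebra_compatible_smul A c x, lie_smul, algebraMap_smul]; exact Submodule.smul_mem _ c hx
    | mem x hx =>
      obtain ⟨q, m, hq, rfl⟩ := hx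
      exact Submodule.subset_span ⟨p * q, ⁅l, m⁆, hH _ _ _ hp _ hq, rfl⟩

theorem T5_add_left {M : Type*} [LieRing M] (v a a' b : M) :
    T5 v (a + a') b = T5 v a b + T5 v a' b := by
  simp only [T5, lie_add, add_lie, smul_add]; abel

theorem T5_add_right {M : Type*} [LieRing M] (v a b b' : M) :
    T5 v a (b + b') = T5 v a b + T5 v a b' := by
  simp only [T5, lie_add, smul_add]; abel

theorem T5_smul {R M : Type*} [CommRing R] [LieRing M] [LieAlgebra R M] (r s : R) (v a b : M) :
    T5 v (r • a) (s • b) = (r * s) • T5 v a b := by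
  simp only [T5, lie_smul, smul_lie]; module

theorem T5_Hom {A : Type*} [CommRing A] [Algebra k A] {H : ℕ → Submodule k A}
    (hH : ∀ d e, ∀ p ∈ H d, ∀ q ∈ H e, p * q ∈ H (d + e)) {v a b : A ⊗[k] L}
    (hv : v ∈ Hom L (H 1)) (ha : a ∈ Hom L (H 0)) (hb : b ∈ Hom L (H 0)) :
    T5 v a b ∈ Hom L (H 5) := by
  have st : ∀ (d e n : ℕ), d + e = n → ∀ x y : A ⊗[k] L, x ∈ Hom L (H d) → y ∈ Hom L (H e) →
      ⁅x, y⁆ ∈ Hom L (H n) := by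
    rintro d e _ rfl x y hx hy
    exact Hom_lie hH hx hy
  have a1 := st 1 0 1 rfl _ _ hv ha
  have a2 := st 1 1 2 rfl _ _ hv a1
  have a3 := st 1 2 3 rfl _ _ hv a2
  have a4 := st 1 3 4 rfl _ _ hv a3
  have b1 := st 1 0 1 rfl _ _ hv hb
  have b2 := st 1 1 2 rfl _ _ hv b1
  have b3 := st 1 2 3 rfl _ _ hv b2
  have b4 := st 1 3 4 rfl _ _ hv b3
  have c1 := st 1 4 5 rfl _ _ a1 b4
  have c2 := st 2 3 5 rfl _ _ a2 b3
  have c3 := st 3 2 5 rfl _ _ a3 b2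
  have c4 := st 4 1 5 rfl _ _ a4 b1
  unfold T5
  exact add_mem (add_mem (add_mem c1 (nsmul_mem c2 2)) (nsmul_mem c3 2)) c4

open MvPolynomial in
theorem T5_generic {ι κ : Type*} [Fintype ι] [Invertible (2 : k)] [Invertible (3 : k)]
    (bL : Module.Basis κ k L) (u : MvPolynomial ι k ⊗[k] L) (hu : u ∈ Hom L (homogeneousSubmodule ι k 5))
    (h : ∀ t : ι → k, bcMap (aeval t : MvPolynomial ι k →ₐ[k] k) u = 0) : u = 0 := by
  apply (bL.baseChange (MvPolynomial ι k)).repr.injective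
  rw [map_zero]
  ext1 i
  rw [Finsupp.zero_apply]
  apply poly_zero
  · clear h
    rw [← mem_homogeneousSubmodule]
    induction hu using Submodule.span_induction with
    | zero => simp
    | add x y _ _ hx hy => rw [map_add, Finsupp.add_apply]; exact add_mem hx hy
    | smul c x _ hx =>
      rw [algebra_compatible_smul (MvPolynomial ι k) c x, map_smul, Finsupp.smul_apply, algebraMap_smul]
      exact Submodule.smul_mem _ c hx
    | mem x hx =>
      obtain ⟨p, l, hp, rfl⟩ := hx
      rw [Module.Basis.baseChange_repr_tmul]
      exact Submodule.smul_mem _ _ hp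
  · intro t
    have key : ∀ u : MvPolynomial ι k ⊗[k] L,
        eval t ((bL.baseChange (MvPolynomial ι k)).repr u i) =
          (bL.baseChange k).repr (bcMap (aeval t : MvPolynomial ι k →ₐ[k] k) u) i := by
      intro u
      induction u with
      | zero => simp
      | add x y hx hy => simp only [map_add, Finsupp.add_apply, hx, hy]
      | tmul p l =>
        simp [bcMap, Module.Basis.baseChange_repr_tmul, aeval_eq_eval, smul_eval]
    rw [key, h t]; simp

open MvPolynomial in
theorem T5_baseChange [FiniteDimensional k L] [Invertible (2 : k)] [Invertible (3 : k)]
    (V : Submodule k L) (h : ∀ x ∈ V, ∀ a b : L, T5 x a b = 0)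
    (R : Type*) [CommRing R] [Algebra k R] (x : R ⊗[k] L) (hx : x ∈ V.baseChange R)
    (a b : R ⊗[k] L) : T5 x a b = 0 := by
  let e := Module.finBasis k V
  let ι := Fin (Module.finrank k V)
  obtain ⟨y, rfl⟩ := hx
  obtain ⟨r, rfl⟩ : ∃ r : ι → R, y = ∑ i, r i ⊗ₜ[k] e i := by
    refine ⟨fun i => (e.baseChange R).repr y i, ?_⟩
    conv_lhs => rw [← (e.baseChange R).sum_repr y]
    refine Finset.sum_congr rfl fun i _ => ?_
    rw [Module.Basis.baseChange_apply, TensorProduct.smul_tmul', smul_eq_mul, mul_one]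
  let v : MvPolynomial ι k ⊗[k] L := ∑ i, X i ⊗ₜ (e i : L)
  have hbc : ∀ (A : Type _) [CommRing A] [Algebra k A] (r : ι → A),
      bcMap (aeval r : MvPolynomial ι k →ₐ[k] A) v = ∑ i, r i ⊗ₜ (e i : L) := by
    intro A _ _ r
    simp [v, bcMap]
  have main : ∀ a b : L, T5 v (1 ⊗ₜ a) (1 ⊗ₜ b) = 0 := by
    intro a b
    apply T5_generic (Module.finBasis k L)
    · apply T5_Hom (H := fun d => homogeneousSubmodule ι k d) (fun d e p hp q hq => IsHomogeneous.mul hp hq)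
      · exact sum_mem fun i _ => Submodule.subset_span ⟨X i, e i, isHomogeneous_X _ _, rfl⟩
      · exact Submodule.subset_span ⟨1, a, isHomogeneous_one _ _, rfl⟩
      · exact Submodule.subset_span ⟨1, b, isHomogeneous_one _ _, rfl⟩
    · intro t
      have h1 := map_T5 (bcMap (L := L) (aeval t : MvPolynomial ι k →ₐ[k] k)).toAddMonoidHom
        (bcMap_lie _) v (1 ⊗ₜ a) (1 ⊗ₜ b)
      have h2 := map_T5 (N := k ⊗[k] L) (TensorProduct.mk k k L 1).toAddMonoidHom
        (fun a b => by simp [LieAlgebra.ExtendScalars.bracket_tmul]) (∑ i, t i • (e i : L)) a b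
      rw [h _ (sum_mem fun i _ => V.smul_mem _ (e i).2), map_zero] at h2
      refine h1.trans (Eq.trans ?_ h2.symm)
      congr 1
      · refine (hbc k t).trans ?_
        simp only [LinearMap.toAddMonoidHom_coe, map_sum, TensorProduct.mk_apply]
        refine Finset.sum_congr rfl fun i _ => ?_
        rw [← TensorProduct.smul_tmul, smul_eq_mul, mul_one]
      · simp [bcMap]
      · simp [bcMap]
  have main' : ∀ a b : L, T5 (∑ i, r i ⊗ₜ[k] (e i : L)) ((1:R) ⊗ₜ a) (1 ⊗ₜ b) = 0 := by
    intro a b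
    have h1 := map_T5 (bcMap (L := L) (aeval r : MvPolynomial ι k →ₐ[k] R)).toAddMonoidHom
        (bcMap_lie _) v (1 ⊗ₜ a) (1 ⊗ₜ b)
    rw [main, map_zero] at h1
    refine Eq.trans ?_ h1.symm
    congr 1
    · simp [v, bcMap]
    · simp [bcMap]
    · simp [bcMap]
  have hxx : (LinearMap.baseChange R V.subtype) (∑ i, r i ⊗ₜ[k] e i)
      = ∑ i, r i ⊗ₜ[k] (e i : L) := by simp
  rw [hxx]
  induction a with
  | zero => simp [T5]
  | add x y hx hy => rw [T5_add_left, hx, hy, add_zero]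
  | tmul p a =>
    induction b with
    | zero => simp [T5]
    | add x y hx hy => rw [T5_add_right, hx, hy, add_zero]
    | tmul q b =>
      have h1 : p ⊗ₜ[k] a = p • ((1:R) ⊗ₜ[k] a) := by simp [TensorProduct.smul_tmul']
      have h2 : q ⊗ₜ[k] b = q • ((1:R) ⊗ₜ[k] b) := by simp [TensorProduct.smul_tmul']
      rw [h1, h2, T5_smul, main', smul_zero]

end transfer

/-- Let `k` be a field with `char k ≠ 2, 3` and let `L` be a
finite-dimensional 5-graded Lie algebra over `k` that is algebraic.  Then for every
commutative associative unital `k`-algebra `R` (in which `2` and `3` are automatically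
invertible), the base change `R ⊗[k] L`, a 5-graded Lie algebra over `R` whose graded
components are the base-changed submodules `(g i).baseChange R`, is again algebraic:
for every `σ ∈ {1,-1}`, all `x ∈ L_σ ⊗ R` and `s ∈ L_{2σ} ⊗ R`, the endomorphism
`e_σ(x,s)` of `R ⊗[k] L` is an `R`-Lie algebra automorphism. -/
theorem stmt3 {k L : Type*} [Field k] [Invertible (2 : k)] [Invertible (3 : k)]
    [LieRing L] [LieAlgebra k L] [FiniteDimensional k L]
    (g : ℤ → Submodule k L)
    (hinternal : DirectSum.IsInternal g)
    (hbracket : ∀ i j : ℤ, ∀ x ∈ g i, ∀ y ∈ g j, ⁅x, y⁆ ∈ g (i + j))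
    (hbound : ∀ i : ℤ, 2 < |i| → g i = ⊥)
    (halg : ∀ σ : ℤ, σ = 1 ∨ σ = -1 → ∀ x ∈ g σ, ∀ s ∈ g (2 * σ),
      Function.Bijective (eMap k (x + s)) ∧
      ∀ a b : L, eMap k (x + s) ⁅a, b⁆ = ⁅eMap k (x + s) a, eMap k (x + s) b⁆)
    (R : Type*) [CommRing R] [Algebra k R] [Invertible (2 : R)] [Invertible (3 : R)] :
    ∀ σ : ℤ, σ = 1 ∨ σ = -1 →
      ∀ x ∈ (g σ).baseChange R, ∀ s ∈ (g (2 * σ)).baseChange R,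
        Function.Bijective (eMap R (x + s)) ∧
        ∀ a b : R ⊗[k] L,
          eMap R (x + s) ⁅a, b⁆ = ⁅eMap R (x + s) a, eMap R (x + s) b⁆ := by
  intro σ hσ x hx s hs
  have htop : ⨆ i, g i = ⊤ := hinternal.submodule_iSup_eq_top
  have htopR : ⨆ i, (g i).baseChange R = ⊤ := by
    rw [eq_top_iff]
    rintro z -
    induction z with
    | zero => exact zero_mem _
    | add x y hx hy => exact add_mem hx hy
    | tmul r l =>
      have hl : l ∈ ⨆ i, g i := by rw [htop]; trivial
      induction hl using Submodule.iSup_induction' with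
      | zero => simp
      | add x y _ _ hx hy => rw [TensorProduct.tmul_add]; exact add_mem hx hy
      | mem i y hy =>
        exact Submodule.mem_iSup_of_mem i (Submodule.tmul_mem_baseChange_of_mem r hy)
  have hbrR : ∀ i j : ℤ, ∀ x ∈ (g i).baseChange R, ∀ y ∈ (g j).baseChange R,
      ⁅x, y⁆ ∈ (g (i + j)).baseChange R := by
    rintro i j _ ⟨x, rfl⟩ _ ⟨y, rfl⟩
    induction x with
    | zero => simp
    | add x y hx hy => rw [map_add, add_lie]; exact add_mem hx hy
    | tmul r x =>
      induction y with
      | zero => simp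
      | add x y hx hy => rw [map_add, lie_add]; exact add_mem hx hy
      | tmul q y =>
        exact Submodule.tmul_mem_baseChange_of_mem (r * q) (hbracket i j x x.2 y y.2)
  have hbR : ∀ i : ℤ, 2 < |i| → (g i).baseChange R = ⊥ := fun i hi => by
    rw [hbound i hi, Submodule.baseChange_bot]
  have hT : ∀ x ∈ g σ, ∀ a b : L, T5 x a b = 0 := by
    intro x hx a b
    obtain ⟨h5, h34, -⟩ := graded_facts g htop hbracket hbound σ hσ x 0 hx (zero_mem _)
    have := (halg σ hσ x hx 0 (zero_mem _)).2 a b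
    rw [add_zero] at this
    exact T5_eq_zero (R := k) x a b h5 h34 this
  have hTR := T5_baseChange (g σ) hT R x hx
  obtain ⟨h5, h34, hxs, hs3, h1, h2, hD⟩ := graded_facts _ htopR hbrR hbR σ hσ x s hx hs
  refine ⟨eMap_bij _ hD, fun a b => ?_⟩
  simp only [eMap_add x s _ hxs hs3 h1 h2]
  rw [eMap_s s a b hs3, defect x _ _ h5 h34, hTR]
  simp
end

section
/- Let A be a structurable division algebra over a field k with char(k) ≠ 2 and char(k) ≠ 3. Then there is no skew element s ∈ S with s·s = 1. -/
/-- The triple product `{x,y,z} := (x·ȳ)·z + (z·ȳ)·x − (z·x̄)·y` of a (not necessarily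
associative or commutative) unital algebra `A` equipped with an involution `bar`. -/
def strTrip {A : Type*} [NonAssocRing A] (bar : A → A) (x y z : A) : A :=
  x * bar y * z + z * bar y * x - z * bar x * y

/-- `ψ(x,y) := x·ȳ − y·x̄`. -/
def strPsi {A : Type*} [NonAssocRing A] (bar : A → A) (x y : A) : A :=
  x * bar y - y * bar x

/-- `q_x(s) := (1/6)·ψ(x, U_x(s·x))`, where `U_x y := {x,y,x}`. -/
noncomputable def strQ (k : Type*) [Field k] {A : Type*} [NonAssocRing A] [Module k A]
    (bar : A → A) (x s : A) : A :=
  (6 : k)⁻¹ • strPsi bar x (strTrip bar x (s * x) x)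

/-- `(A, bar)` is a structurable algebra over `k`: `bar` is a `k`-linear involutive
anti-automorphism of `A`, and the operator identity
`[V_{x,y}, V_{z,w}] = V_{{x,y,z},w} − V_{z,{y,x,w}}` holds, where
`V_{x,y} z := strTrip bar x y z`. -/
def IsStructurable (k : Type*) [Field k] (A : Type*) [NonAssocRing A] [Module k A]
    (bar : A → A) : Prop :=
  (∀ x y : A, bar (x + y) = bar x + bar y) ∧
  (∀ (c : k) (x : A), bar (c • x) = c • bar x) ∧
  (∀ x y : A, bar (x * y) = bar y * bar x) ∧
  (∀ x : A, bar (bar x) = x) ∧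
  (∀ x y z w a : A,
    strTrip bar x y (strTrip bar z w a) - strTrip bar z w (strTrip bar x y a)
      = strTrip bar (strTrip bar x y z) w a - strTrip bar z (strTrip bar y x w) a)

/-- `A` is a (conjugate) division algebra: every nonzero `u ∈ A` has a conjugate
inverse `v`, i.e. `V_{u,v} = id`. -/
def IsConjDivision {A : Type*} [NonAssocRing A] (bar : A → A) : Prop :=
  ∀ u : A, u ≠ 0 → ∃ v : A, ∀ z : A, strTrip bar u v z = z

theorem right_alt_skew {k : Type*} [Field k] {A : Type*} [NonAssocRing A] [Module k A]
    (h2 : (2 : k) ≠ 0) (h3 : (3 : k) ≠ 0)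
    (bar : A → A) (hstr : IsStructurable k A bar) (s v : A) (hs : bar s = -s) :
    v * s * s = v * (s * s) := by
  obtain ⟨hadd, hsmul, hmul, hbb, hid⟩ := hstr
  have h0 : bar 0 = 0 := by simpa using hadd 0 0
  have hneg : ∀ x, bar (-x) = - bar x := by
    intro x
    have := hadd x (-x)
    rw [add_neg_cancel, h0] at this
    exact (neg_eq_of_add_eq_zero_right this.symm).symm
  have hsub : ∀ x y, bar (x - y) = bar x - bar y := by
    intro x y; rw [sub_eq_add_neg, hadd, hneg, sub_eq_add_neg]
  have h1 : bar 1 = 1 := by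
    have := hmul (bar 1) 1
    rw [mul_one, hbb, mul_one] at this
    exact this.symm
  have e1 := congrArg bar (hid (bar v) 1 1 s s)
  have e2 := hid (bar v) 1 s 1 s
  have e3 := congrArg bar (hid (bar v) 1 s 1 s)
  have e4 := hid (bar v) 1 s s 1
  have e5 := congrArg bar (hid (bar v) 1 s s 1)
  have e6 := congrArg bar (hid (bar v) s s 1 1)
  simp only [strTrip, hadd, hsub, hneg, hmul, hbb, h1, hs, mul_one, one_mul, mul_add, add_mul,
    mul_sub, sub_mul, neg_mul, mul_neg, neg_neg] at e1 e2 e3 e4 e5 e6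
  have key : (12 : ℤ) • (v * s * s - v * (s * s)) = 0 := by
    linear_combination (norm := module) (-3 : ℤ) • e1 + (1 : ℤ) • e2 + (-4 : ℤ) • e3 + (1 : ℤ) • e4 +
      (-4 : ℤ) • e5 + (3 : ℤ) • e6
  have key' : (12 : k) • (v * s * s - v * (s * s)) = 0 := by
    rw [← key, ← Int.cast_smul_eq_zsmul k]; norm_num
  have h12 : (12 : k) ≠ 0 := by
    have : (12 : k) = 2 * 2 * 3 := by norm_num
    rw [this]; exact mul_ne_zero (mul_ne_zero h2 h2) h3
  exact sub_eq_zero.mp ((smul_eq_zero.mp key').resolve_left h12)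

/-- Let `A` be a structurable division algebra over a field `k` with
`char k ≠ 2, 3`.  Then there is no skew element `s` (i.e. `s̄ = -s`) with `s·s = 1`. -/
theorem stmt6 {k : Type*} [Field k] {A : Type*} [NonAssocRing A] [Module k A]
    [SMulCommClass k A A] [IsScalarTower k A A] [FiniteDimensional k A] [Nontrivial A]
    (h2 : (2 : k) ≠ 0) (h3 : (3 : k) ≠ 0)
    (bar : A → A) (hstr : IsStructurable k A bar) (hdiv : IsConjDivision bar) :
    ¬ ∃ s : A, bar s = -s ∧ s * s = 1 := by
  rintro ⟨s, hs, hss⟩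
  have alt := fun v => right_alt_skew h2 h3 bar hstr s v hs
  obtain ⟨hadd, hsmul, hmul, hbb, hid⟩ := hstr
  have h1 : bar 1 = 1 := by
    have := hmul (bar 1) 1
    rw [mul_one, hbb, mul_one] at this
    exact this.symm
  have hbu : bar (1 + s) = 1 - s := by rw [hadd, h1, hs, sub_eq_add_neg]
  have tor2 : ∀ x : A, x + x = 0 → x = 0 := by
    intro x hx
    rw [← two_smul k] at hx
    exact (smul_eq_zero.mp hx).resolve_left h2
  have tor3 : ∀ x : A, x + x + x = 0 → x = 0 := by
    intro x hx
    have : (3 : k) • x = 0 := by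
      rw [← hx, show (3 : k) = 1 + 1 + 1 by norm_num, add_smul, add_smul, one_smul]
    exact (smul_eq_zero.mp this).resolve_left h3
  have hu : (1 + s : A) ≠ 0 := by
    intro h
    have hs1 : s = -1 := (neg_eq_of_add_eq_zero_right h).symm
    have hz : bar (1 + s) = 0 := by
      rw [h]; simpa using hadd 0 0
    rw [hbu, hs1, sub_neg_eq_add] at hz
    exact one_ne_zero (tor2 _ hz)
  obtain ⟨v, hv⟩ := hdiv _ hu
  -- the conjugate inverse is symmetric
  have hvu : ∀ w, strTrip bar v (1 + s) w = w := by
    intro w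
    set t := w - strTrip bar v (1 + s) w with ht
    have hb0 : ∀ x y, bar (x - y) = bar x - bar y := by
      intro x y
      have := hadd (x - y) y
      rw [sub_add_cancel] at this
      exact eq_sub_of_add_eq this.symm
    have hA := hid (1 + s) v 1 w 1
    simp only [hv] at hA
    have hB : strTrip bar 1 t 1 = 0 := by
      have : strTrip bar 1 t 1 = strTrip bar 1 w 1 - strTrip bar 1 (strTrip bar v (1 + s) w) 1 := by
        rw [ht]; simp only [strTrip, hb0, h1, one_mul, mul_one]; abel
      rw [this, ← hA, sub_self]
    simp only [strTrip, h1, one_mul, mul_one] at hB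
    have hC : t = bar t + bar t := (sub_eq_zero.mp hB).symm
    have hD : bar t = t + t := by
      have := congrArg bar hC
      rwa [hadd, hbb] at this
    have : t = 0 := by
      apply tor3
      rw [hD] at hC
      have h5 : t + t + t = (t + t + (t + t)) - t := by abel
      rw [h5, ← hC, sub_self]
    exact (sub_eq_zero.mp this).symm
  have a1 := hv (1 + s)
  have a2 := hvu (1 + s)
  simp only [strTrip, hbu] at a1 a2
  have z1 : (1 + s) * (1 - s) = 0 := by
    rw [add_mul, mul_sub, mul_sub, hss]; simp
  have z2 : v * (1 - s) * (1 + s) = 0 := by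
    have := alt v
    rw [hss, mul_one] at this
    simp only [mul_sub, mul_add, sub_mul, mul_one, this]; abel
  rw [z1, zero_mul, sub_zero] at a1
  rw [z1, z2, zero_mul, zero_add, zero_sub] at a2
  apply hu
  apply tor3
  set p := (1 + s) * bar v * (1 + s) with hp
  have hp' : p = -(1 + s) := by rw [← a2, neg_neg]
  rw [hp'] at a1
  have : (1 + s) + (1 + s) + (1 + s) = (1 + s) - (-(1 + s) + -(1 + s)) := by abel
  rw [this, a1, sub_self]
end

section
/- Let A be a structurable division algebra over a field k with char(k) ≠ 2 and char(k) ≠ 3, and let 0 ≠ s ∈ S with conjugate inverse ŝ ∈ S. Then s + ŝ ≠ 0. Moreover, let t ∈ S be the conjugate inverse of s + ŝ (so t·((s+ŝ)·z) = (s+ŝ)·(t·z) = −z for all z ∈ A) and set u := −(ŝ·t). Then: (1) {1,u,z} = z + s·(t·z) for all z ∈ A, i.e. V_{1,u} = id + L_s L_t; (2) s·u = −(1/3)·U_1(t·1), equivalently s·u = t; (3) ψ(1, s·t) = 0; and (4) u is the conjugate inverse of 1 − s·s, i.e. V_{1−s·s, u} = id_A. -/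
/-- Skew-alternativity of structurable algebras, first form: `[s,x,y] = -[x,s,y]`. -/
theorem skew_alt_left {k : Type*} [Field k] {A : Type*} [NonAssocRing A] [Module k A]
    (h2 : (2 : k) ≠ 0) (h3 : (3 : k) ≠ 0)
    (bar : A → A) (hstr : IsStructurable k A bar) (hone : bar 1 = 1)
    (s x y : A) (hs : bar s = -s) :
    (s * x) * y - s * (x * y) + ((x * s) * y - x * (s * y)) = 0 := by
  obtain ⟨hadd, -, hmul, hbb, hV⟩ := hstr
  have hzero : bar 0 = 0 := by
    have := hadd 0 0
    simpa using this
  have hneg : ∀ a, bar (-a) = -bar a := by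
    intro a
    have := hadd a (-a)
    rw [add_neg_cancel, hzero] at this
    exact (neg_eq_of_add_eq_zero_right this.symm).symm
  have hsub : ∀ a b, bar (a - b) = bar a - bar b := by
    intro a b
    rw [sub_eq_add_neg, hadd, hneg, ← sub_eq_add_neg]
  have e1 := hV 1 s x y 1
  have e2 := hV s 1 (bar y) (bar x) 1
  have e3 := congrArg bar (hV s 1 (bar x) 1 y)
  have e4 := hV s 1 1 (bar x) (bar y)
  have e5 := hV s 1 y 1 (bar x)
  have e6 := hV s 1 y (bar x) 1
  have e7 := hV 1 s x (bar y) 1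
  have e8 := hV x (bar y) 1 s 1
  have e9 := congrArg bar (hV 1 s y 1 (bar x))
  have e10 := hV s 1 1 y x
  simp only [strTrip, hadd, hneg, hsub, hmul, hbb, hone, hs, mul_add, add_mul, mul_sub, sub_mul,
    mul_one, one_mul, neg_mul, mul_neg, neg_neg] at e1 e2 e3 e4 e5 e6 e7 e8 e9 e10
  have key : (6 : ℤ) • ((s * x) * y - s * (x * y) + ((x * s) * y - x * (s * y))) = 0 := by
    linear_combination (norm := abel) e1 - e2 - e3 + e4 - e5 - e6 + (e7 + e7 + e7 + e7)
      + (e8 + e8 + e8) - e9 + e10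
  have h6 : (6 : k) ≠ 0 := by
    have : (6 : k) = 2 * 3 := by norm_num
    rw [this]; exact mul_ne_zero h2 h3
  have key' : (6 : k) • ((s * x) * y - s * (x * y) + ((x * s) * y - x * (s * y))) = 0 := by
    rw [← key, ← Int.cast_smul_eq_zsmul k]; norm_num
  exact (smul_eq_zero.mp key').resolve_left h6

/-- Let `A` be a structurable division algebra over a field `k` with
`char k ≠ 2, 3`, and let `0 ≠ s` be skew with conjugate inverse `ŝ ∈ S`.  Then
`s + ŝ ≠ 0`.  Moreover, if `t ∈ S` is the conjugate inverse of `s + ŝ` (so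
`t·((s+ŝ)·z) = (s+ŝ)·(t·z) = −z` for all `z`), then with `u := −(ŝ·t)`:
(1) `V_{1,u} = id + L_s L_t`;  (2) `s·u = −(1/3)·U_1(t·1)`, equivalently `s·u = t`;
(3) `ψ(1, s·t) = 0`;  (4) `u` is the conjugate inverse of `1 − s·s`. -/
theorem stmt7 {k : Type*} [Field k] {A : Type*} [NonAssocRing A] [Module k A]
    [SMulCommClass k A A] [IsScalarTower k A A] [FiniteDimensional k A] [Nontrivial A]
    (h2 : (2 : k) ≠ 0) (h3 : (3 : k) ≠ 0)
    (bar : A → A) (hstr : IsStructurable k A bar) (hdiv : IsConjDivision bar)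
    (s : A) (hs0 : s ≠ 0) (hsS : bar s = -s)
    (shat : A) (hshatS : bar shat = -shat)
    (hshat : ∀ z : A, strTrip bar s shat z = z) :
    s + shat ≠ 0 ∧
    ∀ t : A, bar t = -t →
      (∀ z : A, t * ((s + shat) * z) = -z ∧ (s + shat) * (t * z) = -z) →
      ((∀ z : A, strTrip bar 1 (-(shat * t)) z = z + s * (t * z)) ∧
        (s * (-(shat * t)) = -((3 : k)⁻¹ • strTrip bar 1 (t * 1) 1) ∧
          s * (-(shat * t)) = t) ∧
        strPsi bar 1 (s * t) = 0 ∧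
        (∀ z : A, strTrip bar (1 - s * s) (-(shat * t)) z = z)) := by
  obtain ⟨hadd, hsmul, hmul, hbb, hV⟩ := id hstr
  have hone : bar 1 = 1 := by
    have h := hmul (bar 1) 1
    rw [mul_one, hbb, mul_one] at h
    exact h.symm
  have hzero : bar 0 = 0 := by
    have := hadd 0 0
    simpa using this
  have hneg : ∀ a, bar (-a) = -bar a := by
    intro a
    have := hadd a (-a)
    rw [add_neg_cancel, hzero] at this
    exact (neg_eq_of_add_eq_zero_right this.symm).symm
  have hsub : ∀ a b, bar (a - b) = bar a - bar b := by
    intro a b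
    rw [sub_eq_add_neg, hadd, hneg, ← sub_eq_add_neg]
  have two_cancel : ∀ a b : A, a + a = b + b → a = b := by
    intro a b h
    have h' : (2 : k) • (a - b) = 0 := by
      rw [two_smul]
      linear_combination (norm := abel) h
    exact sub_eq_zero.mp ((smul_eq_zero.mp h').resolve_left h2)
  have three_cancel : ∀ a : A, a + a + a = 0 → a = 0 := by
    intro a h
    have h' : (3 : k) • a = 0 := by
      have : (3 : k) = 1 + 1 + 1 := by norm_num
      rw [this, add_smul, add_smul, one_smul, h]
    exact (smul_eq_zero.mp h').resolve_left h3
  have one_ne : (1 : A) ≠ -1 := by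
    intro h
    refine one_ne_zero (two_cancel (1 : A) 0 ?_)
    nth_rewrite 2 [h]
    simp
  have altL : ∀ a x y : A, bar a = -a →
      (a * x) * y - a * (x * y) + ((x * a) * y - x * (a * y)) = 0 :=
    fun a x y ha => skew_alt_left h2 h3 bar hstr hone a x y ha
  have altR : ∀ a x y : A, bar a = -a →
      (x * y) * a - x * (y * a) + ((x * a) * y - x * (a * y)) = 0 := by
    intro a x y ha
    have h := congrArg bar (altL a (bar y) (bar x) ha)
    simp only [hadd, hsub, hmul, hbb, ha, hzero, neg_mul, mul_neg] at h
    linear_combination (norm := abel) h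
  have prodL : ∀ a b : A, bar a = -a → a * b = b * a → (∀ z, a * (b * z) = b * (a * z)) →
      ∀ z, (a * b) * z = a * (b * z) := by
    intro a b ha hab hc z
    apply two_cancel
    have h := altL a b z ha
    rw [← hab, ← hc] at h
    linear_combination (norm := abel) h
  have prodR : ∀ a b : A, bar a = -a → bar b = -b → a * b = b * a →
      (∀ z, a * (b * z) = b * (a * z)) → ∀ z, z * (a * b) = (z * a) * b := by
    intro a b ha hb hab hc z
    have h := congrArg bar (prodL a b ha hab hc (bar z))
    simp only [hmul, hbb, ha, hb, neg_mul, mul_neg, neg_neg] at h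
    rw [hab, h, ← hbb ((z * b) * a), ← hbb ((z * a) * b)]
    simp only [hmul, ha, hb, neg_mul, mul_neg, neg_neg, hc]
  have flex : ∀ x : A, (s * x) * s = s * (x * s) := by
    intro x
    have h1 := altR s x s hsS
    have h2' := altL s x s hsS
    have h3' : (x * s) * s - x * (s * s) = 0 := two_cancel _ _ (by
      rw [h1]; simp)
    rw [h3', add_zero] at h2'
    exact sub_eq_zero.mp h2'
  have hs1 : shat * s = -1 := by
    have h := hshat 1
    simp only [strTrip, hshatS, hsS, one_mul, mul_one, neg_mul, mul_neg] at h
    linear_combination (norm := abel) -h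
  have hs2 : s * shat = -1 := by
    have h := congrArg bar hs1
    simpa [hmul, hneg, hone, hsS, hshatS] using h
  have hcomm : ∀ z, s * (shat * z) = shat * (s * z) := by
    intro z
    have h := hshat (bar z)
    simp only [strTrip, hshatS, hsS, neg_mul, mul_neg, hs2, neg_neg, one_mul] at h
    have h' := congrArg bar h
    simp only [hadd, hsub, hneg, hmul, hbb, hsS, hshatS, neg_mul, mul_neg, neg_neg] at h'
    linear_combination (norm := abel) -h'
  have hinv : ∀ z, s * (shat * z) = -z := by
    intro z
    rw [← prodL s shat hsS (hs2.trans hs1.symm) hcomm, hs2, neg_mul, one_mul]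
  have hinv' : ∀ z, shat * (s * z) = -z := fun z => (hcomm z).symm.trans (hinv z)
  refine ⟨?_, ?_⟩
  · intro h0
    have hsh : shat = -s := (neg_eq_of_add_eq_zero_right h0).symm
    have hss : s * s = 1 := by
      have := hs2
      rw [hsh, mul_neg] at this
      exact neg_injective this
    have hLs : ∀ z, s * (s * z) = z := by
      intro z
      have := hinv z
      rw [hsh, neg_mul, mul_neg] at this
      exact neg_injective this
    have hRs : ∀ z, (z * s) * s = z := by
      intro z
      rw [← prodR s s hsS hsS rfl (fun _ => rfl), hss, mul_one]
    have he0 : (1 : A) + s ≠ 0 := by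
      intro h
      have hs' : s = -1 := (neg_eq_of_add_eq_zero_right h).symm
      rw [hs', hneg, hone, neg_neg] at hsS
      exact one_ne hsS.symm
    obtain ⟨v, hv⟩ := hdiv _ he0
    have a1 := congrArg bar (hv (1 + s))
    have a2 := congrArg (fun z => ((1 - s) * z) * (1 - s)) (hv (1 - s))
    simp only [strTrip, hadd, hsub, hneg, hmul, hbb, hone, hsS, mul_add, add_mul, mul_sub, sub_mul,
      mul_one, one_mul, neg_mul, mul_neg, neg_neg, hss, hLs, hRs, flex] at a1 a2
    have hf : (1 : A) - s = 0 := by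
      apply three_cancel
      apply two_cancel
      linear_combination (norm := abel) -a2 - a1 - a1
    rw [← sub_eq_zero.mp hf, hone] at hsS
    exact one_ne hsS
  · intro t ht hz
    have ht1 : ∀ z, t * (s * z) + t * (shat * z) = -z := by
      intro z
      rw [← mul_add, ← add_mul]; exact (hz z).1
    have ht2 : ∀ z, s * (t * z) + shat * (t * z) = -z := by
      intro z
      rw [← add_mul]; exact (hz z).2
    have hst : ∀ z, s * (t * z) = t * (s * z) := by
      intro z
      have h1 := ht1 (s * (t * z))
      have h2' : s * (s * (t * z)) + shat * (s * (t * z)) = -(s * z) := by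
        rw [← hcomm, ← mul_add, ht2, mul_neg]
      rw [← mul_add, h2', mul_neg] at h1
      exact (neg_injective h1).symm
    have hsht : ∀ z, shat * (t * z) = t * (shat * z) := by
      intro z
      linear_combination (norm := abel) ht2 z - ht1 z - hst z
    have cst : s * t = t * s := by simpa using hst 1
    have csht : shat * t = t * shat := by simpa using hsht 1
    have hu : bar (-(shat * t)) = -(shat * t) := by
      rw [hneg, hmul, ht, hshatS, neg_mul_neg, csht]
    have huL := prodL shat t hshatS csht hsht
    have huR := prodR shat t hshatS ht csht hsht
    have c2 : s * (-(shat * t)) = t := by rw [mul_neg, hinv, neg_neg]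
    refine ⟨?_, ⟨?_, c2⟩, ?_, ?_⟩
    · intro z
      simp only [strTrip, hu, hone, one_mul, mul_one, neg_mul, mul_neg, huL]
      linear_combination (norm := abel) -(ht2 z)
    · rw [c2]
      have h : strTrip bar 1 (t * 1) 1 = -((3 : k) • t) := by
        have h3e : (3 : k) = 1 + 1 + 1 := by norm_num
        rw [h3e, add_smul, add_smul, one_smul]
        simp only [strTrip, ht, hone, one_mul, mul_one]
        abel
      rw [h, smul_neg, neg_neg, smul_smul, inv_mul_cancel₀ h3, one_smul]
    · simp only [strPsi, hmul, hone, ht, hsS, one_mul, mul_one, neg_mul, mul_neg, neg_neg]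
      rw [cst, sub_self]
    · intro z
      have hssL := prodL s s hsS rfl (fun _ => rfl)
      have hssR := prodR s s hsS hsS rfl (fun _ => rfl)
      have hx : bar (1 - s * s) = 1 - s * s := by
        simp only [hsub, hone, hmul, hsS, neg_mul, mul_neg, neg_neg]
      have R1 : ∀ w, (w * shat) * s = -w := by
        intro w
        have h := congrArg bar (hinv (bar w))
        simpa only [hneg, hmul, hbb, hsS, hshatS, neg_mul, mul_neg, neg_neg] using h
      have R2 : ∀ w, (w * s) * shat = -w := by
        intro w
        have h := congrArg bar (hinv' (bar w))
        simpa only [hneg, hmul, hbb, hsS, hshatS, neg_mul, mul_neg, neg_neg] using h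
      have R3 : ∀ w, (w * t) * s = (w * s) * t := by
        intro w
        have h := congrArg bar (hst (bar w))
        simpa only [hneg, hmul, hbb, hsS, ht, neg_mul, mul_neg, neg_neg] using h
      have hxu : (1 - s * s) * (-(shat * t)) = 1 := by
        rw [mul_neg, sub_mul, one_mul, hssL, hinv, mul_neg]
        have h := ht2 1
        rw [mul_one] at h
        linear_combination (norm := abel) -h
      simp only [strTrip, hu, hx, hxu, one_mul]
      simp only [mul_neg, neg_mul, mul_sub, sub_mul, mul_one, huR, hssR, R1, R2, R3]
      abel
end

section
/- Let A be a structurable division algebra over a field k with char(k) ≠ 2 and char(k) ≠ 3. Let 0 ≠ x ∈ A with conjugate inverse x̂, and let 0 ≠ s ∈ S with conjugate inverse ŝ ∈ S. Then s + q_x(ŝ) ≠ 0 and x − s·(q_{x̂}(s)·x) ≠ 0. Moreover, if t ∈ S is the conjugate inverse of s + q_x(ŝ) and u ∈ A is the conjugate inverse of x − s·(q_{x̂}(s)·x), then the pair (u,t) satisfies the one-invertibility system: {x,u,z} = z + s·(t·z) for all z ∈ A (i.e. V_{x,u} = id + L_s L_t), s·u = −(1/3)·U_x(t·x), and ψ(x,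 s·(t·x)) = 0. -/
/-- Abstract data of a Kantor triple system with the operators `L σ` of skew elements. -/
structure KData (k A : Type*) [Field k] [AddCommGroup A] [Module k A] where
  V : A →ₗ[k] A →ₗ[k] Module.End k A
  L : A →ₗ[k] Module.End k A
  psi : A →ₗ[k] A →ₗ[k] A
  S : Submodule k A
  kp : ∀ x y z w, V x y * V z w - V z w * V x y = V (V x y z) w - V z (V y x w)
  h0 : ∀ a b c, V a b c - V c b a = L (psi a c) b
  i1 : ∀ σ ∈ S, ∀ a b, V b a * L σ + L σ * V a b = L (psi (L σ a) b)
  iim : ∀ τ ∈ S, ∀ a b, V a (L τ b) - V b (L τ a) = -(L (psi a b) * L τ)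
  iip : ∀ σ ∈ S, ∀ a b, V (L σ a) b - V (L σ b) a = L σ * L (psi a b)
  Linj : ∀ a, L a = 0 → a = 0
  Vinj : ∀ y, (∀ z, V z y = 0) → y = 0
  psiS : ∀ a b, psi a b ∈ S
  skew : ∀ a b, psi a b = - psi b a

namespace KData

variable {k A : Type*} [Field k] [AddCommGroup A] [Module k A] (D : KData k A)

/-- The operator `q_x`. -/
noncomputable def q (x σ : A) : A := (6 : k)⁻¹ • D.psi x (D.V x (D.L σ x) x)

theorem q_mem (x σ : A) : D.q x σ ∈ D.S := D.S.smul_mem _ (D.psiS _ _)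

theorem q_add (x σ τ : A) : D.q x (σ + τ) = D.q x σ + D.q x τ := by
  simp [q]

theorem rev {a b c d : A} (h : D.V a b = D.V c d) : D.V b a = D.V d c := by
  ext w
  have key : D.V b a w - D.V d c w = 0 := by
    apply D.Vinj
    intro z
    have h1 := D.kp a b z w
    have h2 := D.kp c d z w
    rw [h] at h1
    rw [h2] at h1
    rw [map_sub]
    linear_combination (norm := module) h1
  exact sub_eq_zero.mp key

theorem rev_neg {a b c d : A} (h : D.V a b = - D.V c d) : D.V b a = - D.V d c := by
  have h' : D.V a b = D.V (-c) d := by rw [h]; simp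
  rw [D.rev h']; simp

theorem rev_one {x y : A} (h : D.V x y = 1) : D.V y x = 1 := by
  ext w
  have key : D.V y x w - w = 0 := by
    apply D.Vinj
    intro z
    have h1 := D.kp x y z w
    rw [h] at h1
    simp only [one_mul, mul_one, sub_self, Module.End.one_apply] at h1
    rw [map_sub, ← neg_eq_zero, neg_sub, ← h1]
  exact sub_eq_zero.mp key

theorem Leq {a b : A} (h : D.L a = D.L b) : a = b := by
  have := D.Linj (a - b) (by rw [map_sub, h, sub_self])
  exact sub_eq_zero.mp this

section pair
variable {x y : A} (h : D.V x y = 1)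
include h

theorem psi1 {σ : A} (hσ : σ ∈ D.S) : D.psi (D.L σ y) x = (2 : k) • σ := by
  apply D.Leq
  have := D.i1 σ hσ y x
  rw [h, D.rev_one h] at this
  rw [← this, map_smul, one_mul, mul_one, two_smul]

theorem psi1' {σ : A} (hσ : σ ∈ D.S) : D.psi x (D.L σ y) = -((2 : k) • σ) := by
  rw [D.skew, D.psi1 h hσ]

theorem tri {σ : A} (hσ : σ ∈ D.S) : D.V (D.L σ x) x y = (3 : k) • D.L σ x := by
  have h1 := D.h0 (D.L σ x) x y
  rw [D.psi1 (D.rev_one h) hσ, D.rev_one h] at h1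
  simp only [Module.End.one_apply, map_smul, LinearMap.smul_apply] at h1
  linear_combination (norm := module) h1

theorem Vw (a : A) : D.V (D.V x a x) y = D.V x (D.V a x y) := by
  have := D.kp x a x y
  rw [h] at this
  simp only [one_mul, mul_one, sub_self] at this
  exact (sub_eq_zero.mp this.symm)

theorem lemA (h2 : (2 : k) ≠ 0) (h3 : (3 : k) ≠ 0) {σ : A} (hσ : σ ∈ D.S) :
    D.V x (D.L σ x) x = -((3 : k) • D.L (D.q x σ) y) := by
  have h6 : (6 : k) ≠ 0 := by
    have : (6 : k) = 2 * 3 := by norm_num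
    rw [this]; exact mul_ne_zero h2 h3
  set w := D.V x (D.L σ x) x with hw
  have e1 : D.V w y = (3 : k) • D.V x (D.L σ x) := by
    rw [hw, D.Vw h, D.tri h hσ, map_smul]
  have e2 := D.h0 x y w
  rw [h, e1] at e2
  simp only [Module.End.one_apply, LinearMap.smul_apply, ← hw] at e2
  have e3 : D.L (D.q x σ) y = (6 : k)⁻¹ • D.L (D.psi x w) y := by
    simp [q, ← hw]
  rw [e3, ← e2, ← sub_eq_zero]
  match_scalars
  field_simp
  ring

theorem lemB (h2 : (2 : k) ≠ 0) (h3 : (3 : k) ≠ 0) {σ : A} (hσ : σ ∈ D.S) :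
    D.V x (D.L σ x) = - D.V (D.L (D.q x σ) y) y := by
  have e1 : D.V (D.V x (D.L σ x) x) y = (3 : k) • D.V x (D.L σ x) := by
    rw [D.Vw h, D.tri h hσ, map_smul]
  rw [D.lemA h h2 h3 hσ] at e1
  apply smul_right_injective _ h3
  simp only [← e1]
  simp

theorem zero_of {σ : A} (h2 : (2 : k) ≠ 0) (hσ : σ ∈ D.S) (h0 : D.L σ x = 0) : σ = 0 := by
  have := D.psi1 (D.rev_one h) hσ
  rw [h0] at this
  simp only [map_zero, LinearMap.zero_apply] at this
  exact (smul_eq_zero.mp this.symm).resolve_left h2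

theorem qq (h2 : (2 : k) ≠ 0) (h3 : (3 : k) ≠ 0) {σ : A} (hσ : σ ∈ D.S) :
    D.q y (D.q x σ) = σ := by
  have e1 := D.rev_neg (D.lemB h h2 h3 hσ)
  have e2 := D.lemB (D.rev_one h) h2 h3 (D.q_mem x σ)
  set τ := D.q y (D.q x σ) with hτ
  rw [e2, neg_neg] at e1
  have hm : σ - τ ∈ D.S := D.S.sub_mem hσ (D.q_mem _ _)
  have e3 := D.tri h hm
  have e4 : D.V (D.L (σ - τ) x) x = 0 := by
    simp [map_sub, e1]
  rw [e4] at e3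
  have e5 := (smul_eq_zero.mp e3.symm).resolve_left h3
  exact (sub_eq_zero.mp (D.zero_of (σ := σ - τ) h h2 hm e5)).symm

/-- Injectivity of `V x` for conjugate invertible `x`. -/
theorem Vx0 (h3 : (3 : k) ≠ 0) {b : A} (hb : D.V x b = 0) : b = 0 := by
  have hb' : D.V b x = 0 := by
    have : D.V x b = D.V 0 0 := by rw [hb]; simp
    rw [D.rev this]; simp
  have e1 := D.h0 y x b
  rw [hb', D.rev_one h] at e1
  simp only [Module.End.one_apply, LinearMap.zero_apply, sub_zero] at e1
  have e2 := D.psi1' (D.rev_one h) (D.psiS y b)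
  rw [← e1] at e2
  have e3 : (3 : k) • D.psi y b = 0 := by
    linear_combination (norm := module) e2
  have e4 := (smul_eq_zero.mp e3).resolve_left h3
  rw [e1, e4]; simp

end pair

theorem isot {s r : A} (hs : s ∈ D.S) (hr : r ∈ D.S) (h1 : D.L s * D.L r = -1)
    (h1' : D.L r * D.L s = -1) (a b : A) :
    D.V (D.L s a) (D.L r b) = -(D.L s * D.V a b * D.L r) := by
  have e1 := D.i1 s hs a b
  have e2 := D.iim r hr (D.L s a) b
  have e3 : D.L r (D.L s a) = -a := by
    have := congrArg (fun f => f a) h1'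
    simpa using this
  rw [e3, ← e1, add_mul, mul_assoc, h1] at e2
  simp only [map_neg, mul_neg, mul_one] at e2
  linear_combination (norm := module) e2

/-- Relation of `ψ` under the exchange via `q`. -/
theorem psiE {x y : A} (h : D.V x y = 1) (h2 : (2 : k) ≠ 0) (h3 : (3 : k) ≠ 0) {s t : A}
    (hs : s ∈ D.S) (ht : t ∈ D.S) :
    D.psi (D.L s (D.L t x)) x = - D.psi (D.L s y) (D.L (D.q x t) y) := by
  apply D.Leq
  have e1 := D.i1 s hs (D.L t x) x
  have e2 := D.i1 s hs y (D.L (D.q x t) y)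
  have b := D.lemB h h2 h3 ht
  rw [b, D.rev_neg b] at e1
  rw [map_neg, ← e1, ← e2]
  noncomm_ring

theorem conj {x y : A} (h : D.V x y = 1) (h2 : (2 : k) ≠ 0) (h3 : (3 : k) ≠ 0) {s r : A}
    (hs : s ∈ D.S) (hr : r ∈ D.S) (h1 : D.L s * D.L r = -1)
    (h1' : D.L r * D.L s = -1) : D.L (D.q x s) * D.L (D.q y r) = -1 := by
  have h' := D.rev_one h
  set q := D.q x s with hq
  set p := D.q y r with hp
  have hqS : q ∈ D.S := D.q_mem _ _
  have hpS : p ∈ D.S := D.q_mem _ _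
  have qp : D.q x p = r := D.qq h' h2 h3 hr
  have rs : ∀ a, D.L r (D.L s a) = -a := fun a => by
    simpa using congrArg (fun f => f a) h1'
  have sr : ∀ a, D.L s (D.L r a) = -a := fun a => by
    simpa using congrArg (fun f => f a) h1
  have pxx : D.psi x x = 0 := by
    have e : (2 : k) • D.psi x x = 0 := by
      have := D.skew x x
      linear_combination (norm := module) this
    exact (smul_eq_zero.mp e).resolve_left h2
  have pyy : D.psi y y = 0 := by
    have e : (2 : k) • D.psi y y = 0 := by
      have := D.skew y y
      linear_combination (norm := module) this
    exact (smul_eq_zero.mp e).resolve_left h2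
  have b1 : D.V x (D.L s x) = - D.V (D.L q y) y := D.lemB h h2 h3 hs
  have b2 : D.V x (D.L p x) = - D.V (D.L r y) y := by
    have := D.lemB h h2 h3 hpS
    rwa [qp] at this
  have inv1 : D.V (D.L r y) (D.L s x) = 1 := by
    rw [D.isot hr hs h1' h1, h', mul_one, h1', neg_neg]
  -- psi facts
  have ps1 : D.psi (D.L s x) (D.L p x) = 0 := by
    have := D.psiE h' h2 h3 hs hr
    rw [sr] at this
    simpa [pyy] using this
  have ps2 : D.psi (D.L p (D.L q y)) y = 0 := by
    have := D.psiE h' h2 h3 hpS hqS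
    have e : D.q y q = s := D.qq h h2 h3 hs
    rw [this, e, D.skew, ps1]; simp
  have ps3 : D.psi (D.L q (D.L p x)) x = 0 := by
    have e := D.psiE h h2 h3 hqS hpS
    have e' := D.psiE h h2 h3 hr hs
    rw [qp] at e
    rw [rs] at e'
    simp only [map_neg, LinearMap.neg_apply, pxx, neg_zero] at e'
    rw [e, D.skew, neg_neg]
    exact (neg_eq_zero.mp e'.symm)
  -- D and E commute
  have d1 : D.V x (D.L s x) (D.L r y) = (3 : k) • x := by
    have := congrArg (fun f => f y) (D.i1 r hr (D.L s x) x)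
    simp only [LinearMap.add_apply, Module.End.mul_apply] at this
    rw [D.tri h hs, map_smul, rs] at this
    simp only [map_neg, LinearMap.neg_apply, pxx, map_zero, LinearMap.zero_apply, neg_zero] at this
    linear_combination (norm := module) this
  have comm : D.V x (D.L s x) * D.V (D.L r y) y = D.V (D.L r y) y * D.V x (D.L s x) := by
    have := D.kp x (D.L s x) (D.L r y) y
    rw [d1, D.tri h hs] at this
    simp only [map_smul, LinearMap.smul_apply, h, inv1, sub_self] at this
    exact sub_eq_zero.mp this
  have ex : D.V (D.L r y) y x = (3 : k) • D.L r y := D.tri h' hr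
  have c1 := congrArg (fun f => f x) comm
  simp only [Module.End.mul_apply] at c1
  rw [ex, map_smul, d1, D.lemA h h2 h3 hs, ← hq] at c1
  have e3 : D.V (D.L r y) y = - D.V x (D.L p x) := by rw [b2, neg_neg]
  have e4 : D.V x (D.L p x) (D.L q y) = -((3 : k) • D.L q (D.L p x)) := by
    have := congrArg (fun f => f y) (D.i1 q hqS (D.L p x) x)
    simp only [LinearMap.add_apply, Module.End.mul_apply] at this
    rw [D.tri h hpS, map_smul, ps3] at this
    simp only [map_zero, LinearMap.zero_apply] at this
    linear_combination (norm := module) this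
  have qpx : D.L q (D.L p x) = - x := by
    rw [e3, map_neg, map_smul, LinearMap.neg_apply, e4] at c1
    have h9 : (3 : k) • (3 : k) • (D.L q (D.L p x) + x) = 0 := by
      linear_combination (norm := module) c1
    have := (smul_eq_zero.mp ((smul_eq_zero.mp h9).resolve_left h3)).resolve_left h3
    exact eq_neg_of_add_eq_zero_left this
  -- second evaluation of the commutator
  have f0 := D.kp x (D.L s x) x (D.L p x)
  rw [b2, D.lemA h h2 h3 hs, ← hq] at f0
  have f1 : D.V (D.L s x) x (D.L p x) = (3 : k) • D.L p (D.L q y) := by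
    have := congrArg (fun f => f x) (D.i1 p hpS x (D.L s x))
    simp only [LinearMap.add_apply, Module.End.mul_apply] at this
    rw [D.lemA h h2 h3 hs, ← hq, D.skew, ps1] at this
    simp only [map_zero, LinearMap.zero_apply, neg_zero, map_neg, map_smul] at this
    linear_combination (norm := module) this
  rw [f1] at f0
  have f2 := D.iim p hpS x (D.L q y)
  rw [D.psi1' h hqS] at f2
  have f3 : (3 : k) • (D.V (D.L q y) (D.L p x) + D.V x (D.L p (D.L q y))) = 0 := by
    simp only [mul_neg, neg_mul, comm, map_neg, map_smul, LinearMap.neg_apply,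
      LinearMap.smul_apply] at f0
    linear_combination (norm := module) f0
  have f4 := (smul_eq_zero.mp f3).resolve_left h3
  have f5 : D.V x (D.L p (D.L q y)) = D.L q * D.L p := by
    have : (2 : k) • (D.V x (D.L p (D.L q y)) - D.L q * D.L p) = 0 := by
      simp only [map_neg, map_smul, neg_mul, smul_mul_assoc, neg_neg] at f2
      linear_combination (norm := module) f2 + f4
    exact sub_eq_zero.mp ((smul_eq_zero.mp this).resolve_left h2)
  have f6 := D.Vw h (D.L p (D.L q y))
  have f7 : D.V (D.L p (D.L q y)) x y = D.L p (D.L q y) := by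
    have := D.h0 (D.L p (D.L q y)) x y
    rw [ps2, h'] at this
    simpa [sub_eq_zero] using this
  rw [f7, f5] at f6
  rw [← f6, Module.End.mul_apply, qpx]
  simp [h]

theorem nonvan (hdiv : ∀ a, a ≠ 0 → ∃ b, D.V a b = 1) {x y : A} (h : D.V x y = 1)
    (h2 : (2 : k) ≠ 0) (h3 : (3 : k) ≠ 0) {s r : A} (hs0 : s ≠ 0)
    (hs : s ∈ D.S) (hr : r ∈ D.S) (h1 : D.L s * D.L r = -1)
    (h1' : D.L r * D.L s = -1) : s + D.q x r ≠ 0 := by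
  intro hc
  have hq : D.q x r = -s := eq_neg_of_add_eq_zero_right hc
  have h' := D.rev_one h
  have b1 := D.lemB h h2 h3 hr
  rw [hq] at b1
  simp only [map_neg, LinearMap.neg_apply, neg_neg] at b1
  have inv1 : D.V (D.L s y) (D.L r x) = 1 := by
    rw [D.isot hs hr h1 h1', h', mul_one, h1, neg_neg]
  have rs : ∀ a, D.L r (D.L s a) = -a := fun a => by
    simpa using congrArg (fun f => f a) h1'
  have sr : ∀ a, D.L s (D.L r a) = -a := fun a => by
    simpa using congrArg (fun f => f a) h1
  set z := x + D.L s y with hz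
  have hz0 : z ≠ 0 := by
    intro h0
    have e := D.psi1 h hs
    have e1 : D.L s y = -x := eq_neg_of_add_eq_zero_right h0
    rw [e1] at e
    have e2 := D.skew x x
    simp only [map_neg, LinearMap.neg_apply] at e
    have e3 : (2 : k) • (2 : k) • s = 0 := by
      linear_combination (norm := module) (-2 : k) • e + (-1 : k) • e2
    exact hs0 ((smul_eq_zero.mp ((smul_eq_zero.mp e3).resolve_left h2)).resolve_left h2)
  have hV : D.V z (D.L r z) = 0 := by
    rw [hz]
    simp only [map_add, LinearMap.add_apply, rs, map_neg, b1, h, inv1]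
    abel
  obtain ⟨w, hw⟩ := hdiv z hz0
  have h0 := D.Vx0 hw h3 hV
  have := sr z
  rw [h0, map_zero] at this
  exact hz0 (neg_eq_zero.mp this.symm)

theorem nonvan2 (hdiv : ∀ a, a ≠ 0 → ∃ b, D.V a b = 1) {x y : A} (h : D.V x y = 1)
    (h2 : (2 : k) ≠ 0) (h3 : (3 : k) ≠ 0) {s r : A} (hs0 : s ≠ 0)
    (hs : s ∈ D.S) (hr : r ∈ D.S) (h1 : D.L s * D.L r = -1)
    (h1' : D.L r * D.L s = -1) : x - D.L s (D.L (D.q y s) x) ≠ 0 := by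
  have h' := D.rev_one h
  have hr0 : r ≠ 0 := by
    rintro rfl
    have e : ∀ a, -a = D.L s (D.L 0 a) := fun a => by
      simpa using (congrArg (fun f => f a) h1).symm
    have := e s
    simp only [map_zero, LinearMap.zero_apply] at this
    exact hs0 (neg_eq_zero.mp this)
  have hp := D.nonvan hdiv h' h2 h3 hr0 hr hs h1' h1
  have hm : r + D.q y s ∈ D.S := D.S.add_mem hr (D.q_mem _ _)
  intro h0
  have sr : ∀ a, D.L s (D.L r a) = -a := fun a => by
    simpa using congrArg (fun f => f a) h1
  have rs : ∀ a, D.L r (D.L s a) = -a := fun a => by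
    simpa using congrArg (fun f => f a) h1'
  have e : D.L s (D.L (r + D.q y s) x) = 0 := by
    simp only [map_add, LinearMap.add_apply, sr]
    linear_combination (norm := module) -h0
  have e2 := rs (D.L (r + D.q y s) x)
  rw [e, map_zero] at e2
  exact hp (D.zero_of h h2 hm (neg_eq_zero.mp e2.symm))

theorem main {x y : A} (h : D.V x y = 1)
    (h2 : (2 : k) ≠ 0) (h3 : (3 : k) ≠ 0) {s r t u : A}
    (hs : s ∈ D.S) (hr : r ∈ D.S) (ht : t ∈ D.S) (h1 : D.L s * D.L r = -1)
    (h1' : D.L r * D.L s = -1) (k1 : D.L (s + D.q x r) * D.L t = -1)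
    (k1' : D.L t * D.L (s + D.q x r) = -1)
    (hu : D.V (x - D.L s (D.L (D.q y s) x)) u = 1) :
    D.V x u = 1 + D.L s * D.L t ∧ D.L s u = D.L (D.q x t) y ∧
      D.psi x (D.L s (D.L t x)) = 0 := by
  have h' := D.rev_one h
  have hsq : s + D.q x r ∈ D.S := D.S.add_mem hs (D.q_mem _ _)
  have g1 := D.conj h h2 h3 ht hsq k1' k1
  have g1' := D.conj h' h2 h3 hsq ht k1 k1'
  rw [D.q_add, D.qq h h2 h3 hr] at g1 g1'
  have pq := D.conj h' h2 h3 hs hr h1 h1'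
  set q := D.q x r with hq
  set p := D.q y s with hp
  set q' := D.q x t with hq'
  have hqS : q ∈ D.S := D.q_mem _ _
  have hpS : p ∈ D.S := D.q_mem _ _
  have hq'S : q' ∈ D.S := D.q_mem _ _
  have hprS : p + r ∈ D.S := D.S.add_mem hpS hr
  have qp : D.q x p = s := D.qq h' h2 h3 hs
  have qq' : D.q y q' = t := D.qq h h2 h3 ht
  have rs : ∀ a, D.L r (D.L s a) = -a := fun a => by
    simpa using congrArg (fun f => f a) h1'
  have sr : ∀ a, D.L s (D.L r a) = -a := fun a => by
    simpa using congrArg (fun f => f a) h1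
  have W : D.L s * D.L t = D.L q' * D.L p := by
    have a1 := congrArg (fun f => f * (D.L s * D.L t)) g1
    have a2 := congrArg (fun f => D.L q' * D.L p * f) k1
    have a3 := congrArg (fun f => D.L q' * f * D.L t) h1'
    have a4 := congrArg (fun f => D.L q' * f * D.L t) pq
    simp only [map_add, mul_add, add_mul, mul_neg, neg_mul, mul_one, one_mul,
      mul_assoc] at a1 a2 a3 a4
    linear_combination (norm := module) a1 - a2 - a3 + a4
  have W' : D.L t * D.L s = D.L p * D.L q' := by
    have a1 := congrArg (fun f => D.L t * D.L s * f) g1'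
    have a2 := congrArg (fun f => f * (D.L p * D.L q')) k1'
    have qp2 := D.conj h h2 h3 hr hs h1' h1
    rw [← hp, ← hq] at qp2
    have a3 := congrArg (fun f => D.L t * f * D.L q') h1
    have a4 := congrArg (fun f => D.L t * f * D.L q') qp2
    simp only [map_add, mul_add, add_mul, mul_neg, neg_mul, mul_one, one_mul,
      mul_assoc] at a1 a2 a3 a4
    linear_combination (norm := module) a1 - a2 - a3 + a4
  have Wa : ∀ a, D.L s (D.L t a) = D.L q' (D.L p a) := fun a => by
    simpa using congrArg (fun f => f a) W
  have Wa' : ∀ a, D.L t (D.L s a) = D.L p (D.L q' a) := fun a => by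
    simpa using congrArg (fun f => f a) W'
  have ps1 : D.psi (D.L s (D.L t x)) x = 0 := by
    have e1 := D.psiE h h2 h3 hs ht
    have e2 := D.psiE h h2 h3 hq'S hpS
    rw [qp, ← Wa, D.skew (D.L q' y)] at e2
    rw [← hq'] at e1
    have e : (2 : k) • D.psi (D.L s (D.L t x)) x = 0 := by
      linear_combination (norm := module) e1 + e2
    exact (smul_eq_zero.mp e).resolve_left h2
  have ps2 : D.psi (D.L p x) (D.L t x) = 0 := by
    have e1 := D.psiE h' h2 h3 ht hs
    have e2 := D.psiE h' h2 h3 hpS hq'S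
    rw [qq', ← Wa'] at e2
    rw [← hp, D.skew (D.L t x)] at e1
    have e : (2 : k) • D.psi (D.L p x) (D.L t x) = 0 := by
      linear_combination (norm := module) e2 - e1
    exact (smul_eq_zero.mp e).resolve_left h2
  have b2 : D.V x (D.L p x) = - D.V (D.L s y) y := by
    have := D.lemB h h2 h3 hpS
    rwa [qp] at this
  have c1 := D.kp x (D.L t x) (D.L s y) y
  have c2 := D.kp x (D.L t x) x (D.L p x)
  have d1 : D.V x (D.L t x) (D.L s y) = -((3 : k) • D.L s (D.L t x)) := by
    have := congrArg (fun f => f y) (D.i1 s hs (D.L t x) x)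
    simp only [LinearMap.add_apply, Module.End.mul_apply] at this
    rw [D.tri h ht, map_smul, ps1] at this
    simp only [map_zero, LinearMap.zero_apply] at this
    linear_combination (norm := module) this
  have d2 : D.V (D.L t x) x (D.L p x) = (3 : k) • D.L p (D.L q' y) := by
    have := congrArg (fun f => f x) (D.i1 p hpS x (D.L t x))
    simp only [LinearMap.add_apply, Module.End.mul_apply] at this
    rw [D.lemA h h2 h3 ht, ← hq', ps2] at this
    simp only [map_zero, LinearMap.zero_apply, map_neg, map_smul] at this
    linear_combination (norm := module) this
  rw [d1, D.tri h ht] at c1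
  rw [b2, d2, D.lemA h h2 h3 ht, ← hq'] at c2
  have m1 := D.iip s hs y (D.L t x)
  rw [D.psi1' h' ht] at m1
  have m2 := D.iim p hpS x (D.L q' y)
  rw [D.psi1' h hq'S] at m2
  have m3 := D.iim t ht x (D.L s y)
  rw [D.psi1' h hs, Wa'] at m3
  simp only [map_neg, map_smul, LinearMap.neg_apply, LinearMap.smul_apply, mul_neg, neg_mul,
    neg_neg, smul_mul_assoc, mul_smul_comm] at c1 c2 m1 m2 m3
  rw [← W] at m2
  have fin : D.V x (D.L p (D.L q' y)) = D.L s * D.L t := by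
    have e : (2 : k) • (2 : k) • (3 : k) • (D.V x (D.L p (D.L q' y)) - D.L s * D.L t) = 0 := by
      linear_combination (norm := module) c1 + c2 + (3 : k) • m1 + (3 : k) • m2 + (6 : k) • m3
    have := (smul_eq_zero.mp ((smul_eq_zero.mp ((smul_eq_zero.mp e).resolve_left
      h2)).resolve_left h2)).resolve_left h3
    exact sub_eq_zero.mp this
  -- the inverse of `v`
  have gq : ∀ a, D.L p (D.L q' a) = -a - D.L r (D.L q' a) := fun a => by
    have := congrArg (fun f => f a) g1'
    simp only [Module.End.mul_apply, map_add, LinearMap.add_apply, LinearMap.neg_apply,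
      Module.End.one_apply] at this
    linear_combination (norm := module) this
  have hv : x - D.L s (D.L p x) = - D.L s (D.L (p + r) x) := by
    simp only [map_add, LinearMap.add_apply, sr]
    module
  have hinv : D.V (x - D.L s (D.L p x)) (-D.L r (D.L q' y)) = 1 := by
    rw [hv]
    simp only [map_neg, LinearMap.neg_apply, neg_neg]
    rw [D.isot hs hr h1 h1', D.isot hprS hq'S g1' g1, h, mul_one, g1']
    simp [h1]
  have hu' : u = -D.L r (D.L q' y) := by
    have e : D.V (x - D.L s (D.L p x)) (u - -D.L r (D.L q' y)) = 0 := by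
      rw [map_sub, hu, hinv, sub_self]
    exact sub_eq_zero.mp (D.Vx0 hu h3 e)
  have hu2 : u = y + D.L p (D.L q' y) := by
    rw [hu', gq]; abel
  refine ⟨?_, ?_, ?_⟩
  · rw [hu2, map_add, h, fin]
  · rw [hu', map_neg, sr, neg_neg]
  · rw [D.skew, ps1, neg_zero]

end KData

section concrete

variable {k A : Type*} [Field k] [NonAssocRing A] [Module k A]
  [SMulCommClass k A A] [IsScalarTower k A A] {bar : A → A}

theorem bar_zero_of (h : IsStructurable k A bar) : bar 0 = 0 := by
  have := h.2.1 0 0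
  simpa using this

theorem bar_neg_of (h : IsStructurable k A bar) (a : A) : bar (-a) = -bar a := by
  have := h.2.1 (-1) a
  simpa using this

theorem bar_sub_of (h : IsStructurable k A bar) (a b : A) : bar (a - b) = bar a - bar b := by
  rw [sub_eq_add_neg, h.1, bar_neg_of h, ← sub_eq_add_neg]

theorem bar_one_of (h : IsStructurable k A bar) : bar 1 = 1 := by
  have := h.2.2.1 1 (bar 1)
  rw [one_mul, h.2.2.2.1, one_mul] at this
  exact this.symm

/-- Skew-alternativity. -/
theorem skewAlt (h2 : (2 : k) ≠ 0) (h3 : (3 : k) ≠ 0) (h : IsStructurable k A bar)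
    {s : A} (hs : bar s = -s) (a b : A) :
    s * a * b - s * (a * b) + (a * s * b - a * (s * b)) = 0 := by
  obtain ⟨hadd, hsm, hmul, hbb, K⟩ := id h
  have k1 := K 1 a b s 1
  have k2 := K s (bar b) 1 a 1
  have k3 := K s 1 (bar b) 1 (bar a)
  have k4 := K 1 s a (bar b) 1
  have k5 := K 1 b s 1 (bar a)
  have k6 := K s 1 (bar b) 1 a
  have k7 := K s 1 (bar a) b 1
  have k8 := K s 1 1 (bar a) b
  have k9 := K a 1 1 s (bar b)
  have k10 := K s 1 b 1 (bar a)
  have k11 := K 1 s 1 a b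
  simp only [strTrip, hadd, hmul, hbb, hs, bar_sub_of h, bar_neg_of h, bar_one_of h, mul_one,
    one_mul, mul_add, add_mul, mul_sub, sub_mul, mul_neg, neg_mul, neg_neg]
    at k1 k2 k3 k4 k5 k6 k7 k8 k9 k10 k11
  have h12 : (2 : k) • (2 : k) • (3 : k) •
      (s * a * b - s * (a * b) + (a * s * b - a * (s * b))) = 0 := by
    linear_combination (norm := module) (-6 : k) • k1 - (3 : k) • k2 + k3 + (2 : k) • k4
      + (3 : k) • k5 + (6 : k) • k6 + (2 : k) • k7 - (2 : k) • k8 - (6 : k) • k9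
      + (2 : k) • k10 - (2 : k) • k11
  exact (smul_eq_zero.mp ((smul_eq_zero.mp ((smul_eq_zero.mp h12).resolve_left
      h2)).resolve_left h2)).resolve_left h3

/-- Skew-alternativity, mirrored. -/
theorem skewAlt' (h2 : (2 : k) ≠ 0) (h3 : (3 : k) ≠ 0) (h : IsStructurable k A bar)
    {s : A} (hs : bar s = -s) (a b : A) :
    a * b * s - a * (b * s) + (a * s * b - a * (s * b)) = 0 := by
  obtain ⟨hadd, hsm, hmul, hbb, K⟩ := id h
  have e := congrArg bar (skewAlt h2 h3 h hs (bar b) (bar a))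
  simp only [hadd, hmul, hbb, hs, bar_sub_of h, bar_neg_of h, bar_zero_of h, mul_neg, neg_mul] at e
  linear_combination (norm := module) e

theorem identI (h2 : (2 : k) ≠ 0) (h3 : (3 : k) ≠ 0) (h : IsStructurable k A bar)
    {s : A} (hs : bar s = -s) (a b z : A) :
    strTrip bar b a (s * z) + s * strTrip bar a b z = strPsi bar (s * a) b * z := by
  obtain ⟨hadd, hsm, hmul, hbb, K⟩ := id h
  have k1 := K a 1 (bar b) 1 s
  have k2 := K 1 b a 1 s
  have x1 := K b a s z 1
  have x2 := K b a 1 z s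
  have a1 := skewAlt h2 h3 h hs (bar b) a
  have a2 := skewAlt' h2 h3 h hs (bar b) a
  have a3 := skewAlt h2 h3 h hs (bar a) b
  have a4 := skewAlt' h2 h3 h hs (bar a) b
  have a5 := skewAlt h2 h3 h hs b (bar a)
  have a6 := skewAlt' h2 h3 h hs b (bar a)
  simp only [strTrip, hadd, hmul, hbb, hs, bar_sub_of h, bar_neg_of h, bar_one_of h, mul_one,
    one_mul, mul_add, add_mul, mul_sub, sub_mul, mul_neg, neg_mul, neg_neg]
    at k1 k2 x1 x2
  have e : (2 : k) • (strTrip bar b a s - bar (strTrip bar b a s) + s * bar (strTrip bar b a 1)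
      + strTrip bar b a 1 * s - (2 : k) • strPsi bar (s * a) b) = 0 := by
    simp only [strTrip, strPsi, hadd, hmul, hbb, hs, bar_sub_of h, bar_neg_of h, bar_one_of h,
      mul_one, one_mul, mul_add, add_mul, mul_sub, sub_mul, mul_neg, neg_mul, neg_neg]
    linear_combination (norm := module) (-2 : k) • k1 - (2 : k) • k2 + (2 : k) • (a1 - a2) - (2 : k) • (a3 - a4)
      + (4 : k) • (a6 - a5)
  have e' := congrArg (fun f => f * z) ((smul_eq_zero.mp e).resolve_left h2)
  have f : (2 : k) • (strTrip bar b a (s * z) + s * strTrip bar a b z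
      - strPsi bar (s * a) b * z) = 0 := by
    simp only [strTrip, strPsi, hadd, hmul, hbb, hs, bar_sub_of h, bar_neg_of h, bar_one_of h,
      mul_one, one_mul, mul_add, add_mul, mul_sub, sub_mul, mul_neg, neg_mul, neg_neg,
      smul_mul_assoc, zero_mul, smul_sub] at e' ⊢
    linear_combination (norm := module) x1 - x2 + e'
  exact sub_eq_zero.mp ((smul_eq_zero.mp f).resolve_left h2)

theorem identIIm (h2 : (2 : k) ≠ 0) (h3 : (3 : k) ≠ 0) (h : IsStructurable k A bar)
    {s : A} (hs : bar s = -s) (a b z : A) :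
    strTrip bar a (s * b) z - strTrip bar b (s * a) z = -(strPsi bar a b * (s * z)) := by
  obtain ⟨hadd, hsm, hmul, hbb, K⟩ := id h
  have i := identI h2 h3 h hs a b z
  have c1 := congrArg (fun f => f * z) (skewAlt h2 h3 h hs a (bar b))
  have c1' := congrArg (fun f => f * z) (skewAlt' h2 h3 h hs a (bar b))
  have c2 := congrArg (fun f => f * a) (skewAlt h2 h3 h hs z (bar b))
  have c2' := congrArg (fun f => f * a) (skewAlt' h2 h3 h hs z (bar b))
  have c3 := congrArg (fun f => f * b) (skewAlt h2 h3 h hs z (bar a))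
  have c3' := congrArg (fun f => f * b) (skewAlt' h2 h3 h hs z (bar a))
  have d1 := skewAlt h2 h3 h hs (a * bar b) z
  have d2 := skewAlt h2 h3 h hs (z * bar b) a
  have d3 := skewAlt h2 h3 h hs (z * bar a) b
  simp only [strTrip, strPsi, hadd, hmul, hbb, hs, bar_sub_of h, bar_neg_of h,
      mul_add, add_mul, mul_sub, sub_mul, mul_neg, neg_mul, neg_neg, zero_mul]
      at i c1 c1' c2 c2' c3 c3' ⊢
  linear_combination (norm := module) c1' - c1 + c2' - c2 + c3 - c3' - i - d1 - d2 + d3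

theorem identIIp (h2 : (2 : k) ≠ 0) (h3 : (3 : k) ≠ 0) (h : IsStructurable k A bar)
    {s : A} (hs : bar s = -s) (a b z : A) :
    strTrip bar (s * a) b z - strTrip bar (s * b) a z = s * (strPsi bar a b * z) := by
  obtain ⟨hadd, hsm, hmul, hbb, K⟩ := id h
  have i := identI h2 h3 h hs a b z
  have c1 := congrArg (fun f => f * z) (skewAlt h2 h3 h hs b (bar a))
  have c1' := congrArg (fun f => f * z) (skewAlt' h2 h3 h hs b (bar a))
  have c2 := congrArg (fun f => f * a) (skewAlt h2 h3 h hs z (bar b))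
  have c2' := congrArg (fun f => f * a) (skewAlt' h2 h3 h hs z (bar b))
  have c3 := congrArg (fun f => f * b) (skewAlt h2 h3 h hs z (bar a))
  have c3' := congrArg (fun f => f * b) (skewAlt' h2 h3 h hs z (bar a))
  have d1 := skewAlt h2 h3 h hs (b * bar a) z
  have d2 := skewAlt h2 h3 h hs (z * bar b) a
  have d3 := skewAlt h2 h3 h hs (z * bar a) b
  simp only [strTrip, strPsi, hadd, hmul, hbb, hs, bar_sub_of h, bar_neg_of h,
      mul_add, add_mul, mul_sub, sub_mul, mul_neg, neg_mul, neg_neg, zero_mul]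
      at i c1 c1' c2 c2' c3 c3' ⊢
  linear_combination (norm := module) c1' - c1 + c2' - c2 + c3 - c3' - i - d1 - d2 + d3


/-- The Kantor data of a structurable algebra. -/
noncomputable def kData (h2 : (2 : k) ≠ 0) (h3 : (3 : k) ≠ 0) (h : IsStructurable k A bar) :
    KData k A where
  V := LinearMap.mk₂ k
    (fun x y =>
      { toFun := fun z => strTrip bar x y z
        map_add' := fun a b => by
          simp only [strTrip, mul_add, add_mul]; abel
        map_smul' := fun c a => by
          simp only [strTrip, mul_smul_comm, smul_mul_assoc, smul_sub, smul_add,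
            RingHom.id_apply] })
    (fun a b c => by
      ext z
      simp only [strTrip, h.1, mul_add, add_mul, LinearMap.coe_mk, AddHom.coe_mk,
        LinearMap.add_apply]
      abel)
    (fun c a b => by
      ext z
      simp only [strTrip, h.2.1, mul_smul_comm, smul_mul_assoc, smul_sub, smul_add,
        LinearMap.coe_mk, AddHom.coe_mk, LinearMap.smul_apply])
    (fun a b c => by
      ext z
      simp only [strTrip, h.1, mul_add, add_mul, LinearMap.coe_mk, AddHom.coe_mk,
        LinearMap.add_apply]
      abel)
    (fun c a b => by
      ext z
      simp only [strTrip, h.2.1, mul_smul_comm, smul_mul_assoc, smul_sub, smul_add,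
        LinearMap.coe_mk, AddHom.coe_mk, LinearMap.smul_apply])
  L := LinearMap.mul k A
  psi := LinearMap.mk₂ k (fun x y => strPsi bar x y)
    (fun a b c => by simp only [strPsi, h.1, mul_add, add_mul]; abel)
    (fun c a b => by simp only [strPsi, h.2.1, mul_smul_comm, smul_mul_assoc, smul_sub])
    (fun a b c => by simp only [strPsi, h.1, mul_add, add_mul]; abel)
    (fun c a b => by simp only [strPsi, h.2.1, mul_smul_comm, smul_mul_assoc, smul_sub])
  S :=
    { carrier := {a | bar a = -a}
      add_mem' := fun {a b} ha hb => by
        simp only [Set.mem_setOf_eq] at *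
        rw [h.1, ha, hb]; abel
      zero_mem' := by simp [bar_zero_of h]
      smul_mem' := fun c a ha => by
        simp only [Set.mem_setOf_eq] at *
        rw [h.2.1, ha, smul_neg] }
  kp := fun x y z w => by
    ext a
    exact h.2.2.2.2 x y z w a
  h0 := fun a b c => by
    change strTrip bar a b c - strTrip bar c b a = strPsi bar a c * b
    simp only [strTrip, strPsi, sub_mul]
    abel
  i1 := fun σ hσ a b => by
    ext z
    exact identI h2 h3 h hσ a b z
  iim := fun σ hσ a b => by
    ext z
    exact identIIm h2 h3 h hσ a b z
  iip := fun σ hσ a b => by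
    ext z
    exact identIIp h2 h3 h hσ a b z
  Linj := fun a ha => by
    have : a * 1 = 0 := congrArg (fun f => f 1) ha
    simpa using this
  Vinj := fun y hy => by
    have e : strTrip bar 1 y 1 = 0 := congrArg (fun f => f 1) (hy 1)
    simp only [strTrip, bar_one_of h, mul_one, one_mul] at e
    have e' := congrArg bar e
    simp only [h.1, bar_sub_of h, h.2.2.2.1, bar_zero_of h] at e'
    have : (3 : k) • y = 0 := by
      linear_combination (norm := module) e + (2 : k) • e'
    exact (smul_eq_zero.mp this).resolve_left h3
  psiS := fun a b => by
    change bar (strPsi bar a b) = - strPsi bar a b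
    simp only [strPsi, bar_sub_of h, h.2.2.1, h.2.2.2.1, neg_sub]
  skew := fun a b => by
    change strPsi bar a b = - strPsi bar b a
    simp only [strPsi, neg_sub]

/-- Conjugate inverses of skew elements invert the left multiplication. -/
theorem skewInv (h2 : (2 : k) ≠ 0) (h3 : (3 : k) ≠ 0) (h : IsStructurable k A bar)
    {s r : A} (hs : bar s = -s) (hr : bar r = -r) (hsr : ∀ z, strTrip bar s r z = z) (z : A) :
    s * (r * z) = -z := by
  have e := identIIm h2 h3 h hr s 1
  have e1 := e 1
  have ez := e z
  simp only [mul_one, hsr] at e1 ez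
  have p : strPsi bar s 1 = (2 : k) • s := by
    simp only [strPsi, bar_one_of h, hs, mul_one, one_mul]
    module
  rw [p] at e1 ez
  have rs : r * s = -1 := by
    simp only [strTrip, h.2.2.1, hs, hr, bar_one_of h, mul_one, one_mul, mul_neg, neg_mul,
      neg_neg, smul_mul_assoc] at e1
    linear_combination (norm := module) e1
  rw [rs] at ez
  simp only [strTrip, bar_neg_of h, bar_one_of h, mul_one, one_mul, mul_neg, neg_mul,
      smul_mul_assoc] at ez
  have : (2 : k) • (s * (r * z) + z) = 0 := by
    linear_combination (norm := module) ez
  exact eq_neg_of_add_eq_zero_left ((smul_eq_zero.mp this).resolve_left h2)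

end concrete

/-- Let `A` be a structurable division algebra over a field `k` with
`char k ≠ 2, 3`, let `0 ≠ x ∈ A` with conjugate inverse `x̂`, and let `0 ≠ s ∈ S` with
conjugate inverse `ŝ ∈ S`.  Then `s + q_x(ŝ) ≠ 0` and `x − s·(q_{x̂}(s)·x) ≠ 0`.
Moreover, if `t ∈ S` is the conjugate inverse of `s + q_x(ŝ)` and `u` is the conjugate
inverse of `x − s·(q_{x̂}(s)·x)`, then `(u,t)` satisfies the one-invertibility system:
`V_{x,u} = id + L_s L_t`, `s·u = −(1/3)·U_x(t·x)` and `ψ(x, s·(t·x)) = 0`. -/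
theorem stmt8 {k : Type*} [Field k] {A : Type*} [NonAssocRing A] [Module k A]
    [SMulCommClass k A A] [IsScalarTower k A A] [FiniteDimensional k A] [Nontrivial A]
    (h2 : (2 : k) ≠ 0) (h3 : (3 : k) ≠ 0)
    (bar : A → A) (hstr : IsStructurable k A bar) (hdiv : IsConjDivision bar)
    (x : A) (hx0 : x ≠ 0) (xhat : A) (hxhat : ∀ z : A, strTrip bar x xhat z = z)
    (s : A) (hs0 : s ≠ 0) (hsS : bar s = -s)
    (shat : A) (hshatS : bar shat = -shat)
    (hshat : ∀ z : A, strTrip bar s shat z = z) :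
    s + strQ k bar x shat ≠ 0 ∧
    x - s * (strQ k bar xhat s * x) ≠ 0 ∧
    ∀ t u : A, bar t = -t →
      (∀ z : A, strTrip bar (s + strQ k bar x shat) t z = z) →
      (∀ z : A, strTrip bar (x - s * (strQ k bar xhat s * x)) u z = z) →
      ((∀ z : A, strTrip bar x u z = z + s * (t * z)) ∧
        s * u = -((3 : k)⁻¹ • strTrip bar x (t * x) x) ∧
        strPsi bar x (s * (t * x)) = 0) := by
  set D := kData h2 h3 hstr with hD
  have hV : ∀ a b : A, (∀ z, strTrip bar a b z = z) → D.V a b = 1 := fun a b hab => by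
    ext z
    exact hab z
  have hQ : ∀ a b : A, strQ k bar a b = D.q a b := fun a b => rfl
  have hdiv' : ∀ a, a ≠ 0 → ∃ b, D.V a b = 1 := fun a ha => by
    obtain ⟨b, hb⟩ := hdiv a ha
    exact ⟨b, hV a b hb⟩
  have hinv : ∀ a b : A, bar a = -a → bar b = -b → (∀ z, strTrip bar a b z = z) →
      D.L a * D.L b = -1 ∧ D.L b * D.L a = -1 := fun a b ha hb hab => by
    have hba : ∀ z, strTrip bar b a z = z := fun z =>
      congrArg (fun f => f z) (D.rev_one (hV a b hab))
    constructor
    · ext z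
      exact skewInv h2 h3 hstr ha hb hab z
    · ext z
      exact skewInv h2 h3 hstr hb ha hba z
  have hx := hV x xhat hxhat
  obtain ⟨h1, h1'⟩ := hinv s shat hsS hshatS hshat
  have hs : s ∈ D.S := hsS
  have hr : shat ∈ D.S := hshatS
  refine ⟨D.nonvan hdiv' hx h2 h3 hs0 hs hr h1 h1', D.nonvan2 hdiv' hx h2 h3 hs0 hs hr h1 h1', ?_⟩
  intro t u ht htinv huinv
  have htS : t ∈ D.S := ht
  have hm : s + D.q x shat ∈ D.S := D.S.add_mem hs (D.q_mem _ _)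
  obtain ⟨k1, k1'⟩ := hinv (s + D.q x shat) t hm ht htinv
  obtain ⟨c1, c2, c3⟩ := D.main hx h2 h3 hs hr htS h1 h1' k1 k1' (hV _ u huinv)
  refine ⟨fun z => congrArg (fun f => f z) c1, ?_, c3⟩
  have a1 : strTrip bar x (t * x) x = -((3 : k) • (D.q x t * xhat)) := D.lemA hx h2 h3 htS
  have a2 : s * u = D.q x t * xhat := c2
  rw [a1, a2, smul_neg, neg_neg, smul_smul, inv_mul_cancel₀ h3, one_smul]
end

section
/- Let A be a structurable division algebra over a field k with char(k) ≠ 2 and char(k) ≠ 3. Then every pair (x,s) ∈ A × S with (x,s) ≠ (0,0) is one-invertible: there exist u ∈ A and t ∈ S such that {x,u,z} = z + s·(t·z) for all z ∈ A (i.e. V_{x,u} = id + L_s L_t), s·u = −(1/3)·U_x(t·x), and ψ(x, s·(t·x)) = 0. -/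
/-- Abstract data extracted from a structurable division algebra. -/
structure KPair (A : Type*) [AddCommGroup A] where
  V : A →+ A →+ A →+ A
  m : A →+ A →+ A
  psi : A →+ A →+ A
  S : AddSubgroup A
  psi_mem : ∀ x y, psi x y ∈ S
  K1 : ∀ x y z w a, V x y (V z w a) - V z w (V x y a) = V (V x y z) w a - V z (V y x w) a
  K2 : ∀ x y z, V x y z - V z y x = m (psi x z) y
  K3 : ∀ s ∈ S, ∀ x y z, m s (V x y z) + V y x (m s z) = m (psi (m s x) y) z
  skew : ∀ x y, psi x y = - psi y x
  faith : ∀ s ∈ S, (∀ z, m s z = 0) → s = 0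
  vfaith : ∀ b, (∀ z a, V z b a = 0) → b = 0
  gen : ∀ s ∈ S, ∃ a b, s = psi a b
  t2 : ∀ z : A, z + z = 0 → z = 0
  t3 : ∀ z : A, z + z + z = 0 → z = 0
  div : ∀ u, u ≠ 0 → ∃ v, ∀ z, V u v z = z

namespace KPair

variable {A : Type*} [AddCommGroup A]

lemma t2' (P : KPair A) {z : A} (h : (2 : ℤ) • z = 0) : z = 0 := P.t2 z (by rw [← h]; module)

lemma t3' (P : KPair A) {z : A} (h : (3 : ℤ) • z = 0) : z = 0 := P.t3 z (by rw [← h]; module)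

lemma c2 (P : KPair A) {a b : A} (h : (2 : ℤ) • a = (2 : ℤ) • b) : a = b := by
  have : (2 : ℤ) • (a - b) = 0 := by rw [smul_sub, h, sub_self]
  exact sub_eq_zero.1 (P.t2' this)

lemma c3 (P : KPair A) {a b : A} (h : (3 : ℤ) • a = (3 : ℤ) • b) : a = b := by
  have : (3 : ℤ) • (a - b) = 0 := by rw [smul_sub, h, sub_self]
  exact sub_eq_zero.1 (P.t3' this)

lemma psi_self (P : KPair A) (x : A) : P.psi x x = 0 := by
  apply P.t2
  nth_rewrite 1 [P.skew]
  abel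

lemma swap (P : KPair A) {s : A} (hs : s ∈ P.S) (x y z : A) :
    P.V (P.m s z) x y = P.m (P.psi (P.m s x) y) z - P.m s (P.V x y z)
      - P.m (P.psi y (P.m s z)) x := by
  have h1 := P.K3 s hs x y z
  have h2 := P.K2 y x (P.m s z)
  linear_combination (norm := module) h1 - h2

lemma K4' (P : KPair A) {s : A} (hs : s ∈ P.S) (a b z : A) :
    P.V (P.m s a) b z - P.V (P.m s b) a z = P.m s (P.m (P.psi a b) z) := by
  have h1 := P.swap hs b z a
  have h2 := P.swap hs a z b
  have h3 := P.skew (P.m s b) z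
  have h4 := P.skew (P.m s a) z
  have h5 := congrArg (P.m s) (P.K2 a z b)
  rw [h1, h2, h3, h4]
  simp only [map_neg, AddMonoidHom.neg_apply, map_sub] at h5 ⊢
  linear_combination (norm := module) h5

lemma K4 (P : KPair A) {s : A} (hs : s ∈ P.S) (x y z : A) :
    P.V x (P.m s y) z - P.V y (P.m s x) z = - P.m (P.psi x y) (P.m s z) := by
  obtain ⟨a, b, rfl⟩ := P.gen s hs
  have e1 := P.K1 y a x b z
  have e2 := P.K1 x a y b z
  have e3 := P.K1 y b x a z
  have e4 := P.K1 x b y a z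
  have f1 := P.K2 a y b
  have f2 := P.K2 a x b
  have g1 := P.K2 x a y
  have g2 := P.K2 x b y
  have h := P.K4' (P.psi_mem x y) a b z
  rw [← f1, ← f2]
  rw [← g1, ← g2] at h
  simp only [map_sub, AddMonoidHom.sub_apply] at *
  linear_combination (norm := module) e1 - e3 - e2 + e4 - h

lemma Kc (P : KPair A) {s : A} (hs : s ∈ P.S) (x y z : A) :
    P.m s (P.m (P.psi x y) (P.m s z)) = - P.m (P.psi (P.m s x) (P.m s y)) z := by
  apply P.c2
  have h1 := P.K4' hs x y (P.m s z)
  have h2 := P.K3 s hs y (P.m s x) z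
  have h3 := P.K3 s hs x (P.m s y) z
  have h4 := congrArg (P.m s) (P.K4 hs x y z)
  rw [P.skew (P.m s y) (P.m s x)] at h2
  simp only [map_neg, AddMonoidHom.neg_apply, map_sub] at *
  linear_combination (norm := module) h2 - h1 - h3 + h4

lemma inv_symm (P : KPair A) {u v : A} (h : ∀ z, P.V u v z = z) (z : A) : P.V v u z = z := by
  have : P.V v u z - z = 0 := by
    apply P.vfaith
    intro a b
    have := P.K1 u v a z b
    rw [h, h, h] at this
    simp only [map_sub, AddMonoidHom.sub_apply]
    linear_combination (norm := module) this
  exact sub_eq_zero.1 this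

lemma inj (P : KPair A) {s : A} (hs : s ∈ P.S) (h0 : s ≠ 0) {z : A} (hz : P.m s z = 0) : z = 0 := by
  by_contra hne
  obtain ⟨v, hv⟩ := P.div z hne
  apply h0
  apply P.faith s hs
  intro w
  have h1 := P.K3 s hs z v w
  rw [hv, P.inv_symm hv, hz] at h1
  apply P.t2
  simpa using h1

lemma sinv (P : KPair A) {s : A} (hs : s ∈ P.S) (h0 : s ≠ 0) (hsurj : ∀ b, ∃ a, P.m s a = b) :
    ∃ r ∈ P.S, (∀ z, P.m s (P.m r z) = -z) ∧ (∀ z, P.m r (P.m s z) = -z) := by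
  obtain ⟨a, b, hab⟩ := P.gen s hs
  obtain ⟨x, hx⟩ := hsurj a
  obtain ⟨y, hy⟩ := hsurj b
  have key : ∀ z, P.m s (P.m (P.psi x y) (P.m s z)) = - P.m s z := by
    intro z
    rw [P.Kc hs, hx, hy, ← hab]
  refine ⟨P.psi x y, P.psi_mem x y, ?_, ?_⟩
  · intro z
    obtain ⟨w, rfl⟩ := hsurj z
    exact key w
  · intro z
    have : P.m (P.psi x y) (P.m s z) + z = 0 := by
      apply P.inj hs h0
      rw [map_add, key]; abel
    linear_combination (norm := module) this

/-- `V_{ry,y} ŷ = 3 r y`. -/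
lemma three (P : KPair A) {r x y : A} (hr : r ∈ P.S) (h : ∀ z, P.V x y z = z) :
    P.V (P.m r x) x y = (3 : ℤ) • P.m r x := by
  have h' := P.inv_symm h
  have h1 := P.K2 (P.m r x) x y
  have h2 := P.K3 r hr x y x
  rw [h'] at h1 h2
  rw [h] at h2
  linear_combination (norm := module) h1 - h2

lemma zero_of (P : KPair A) {r s y : A} (hr : r ∈ P.S) (hsr : ∀ z, P.m s (P.m r z) = -z)
    (h : ∀ z, P.V y (P.m r y) z = 0) : y = 0 := by
  by_contra hne
  obtain ⟨v, hv⟩ := P.div y hne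
  have h1 : P.V (P.m r y) y v = 0 := by
    apply P.vfaith
    intro a b
    have := P.K1 y (P.m r y) a v b
    simp only [h, map_zero, AddMonoidHom.zero_apply] at this
    linear_combination (norm := module) this
  rw [P.three hr hv] at h1
  have h2 := P.t3' h1
  have h3 := hsr y
  rw [h2, map_zero] at h3
  exact hne (neg_eq_zero.1 h3.symm)

lemma m1 (P : KPair A) {x r : A} (hr : r ∈ P.S) (z : A) : P.V (P.m r x) x (P.m r z) = - P.m r (P.V x (P.m r x) z) := by
  have := P.K3 r hr x (P.m r x) z
  rw [P.psi_self] at this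
  simp only [map_zero, AddMonoidHom.zero_apply] at this
  linear_combination (norm := module) this

lemma m2 (P : KPair A) {x r : A} (hr : r ∈ P.S) (z : A) : P.V (P.V x (P.m r x) x) (P.m r x) z
    = - P.V x (P.m r (P.V x (P.m r x) x)) z := by
  have := P.K1 x (P.m r x) x (P.m r x) z
  rw [P.m1 hr] at this
  simp only [map_neg, AddMonoidHom.neg_apply] at this
  linear_combination (norm := module) -this

lemma m3 (P : KPair A) {x r : A} (hr : r ∈ P.S) (z : A) : (2 : ℤ) • P.V x (P.m r (P.V x (P.m r x) x)) z
    = - P.m (P.psi x (P.V x (P.m r x) x)) (P.m r z) := by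
  have h1 := P.K4 hr x (P.V x (P.m r x) x) z
  rw [P.m2 hr] at h1
  linear_combination (norm := module) h1

lemma m4 (P : KPair A) {x r : A} (hr : r ∈ P.S) : (2 : ℤ) • P.V x (P.m r x) (P.V x (P.m r x) x)
    = (3 : ℤ) • P.m (P.psi x (P.V x (P.m r x) x)) (P.m r x) := by
  have h1 := P.K2 x (P.m r x) (P.V x (P.m r x) x)
  rw [P.m2 hr] at h1
  have h2 := P.m3 hr (x := x) x
  linear_combination (norm := module) (2 : ℤ) • h1 - h2

lemma m5 (P : KPair A) {x y r : A} (hr : r ∈ P.S) (h : ∀ z, P.V x y z = z) :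
    P.psi (P.m (P.psi x (P.V x (P.m r x) x)) (P.m r x)) x = 0 := by
  have h' := P.inv_symm h
  set D := P.V x (P.m r x) x with hD
  set p := P.psi x D with hp
  have hpS : p ∈ P.S := P.psi_mem _ _
  set f := P.psi (P.m p (P.m r x)) x with hf
  have hfS : f ∈ P.S := P.psi_mem _ _
  have e3 := P.three hr h
  have k1 := P.K1 x (P.m r x) x y x
  rw [h, h, e3, ← hD] at k1
  have k2 := P.K2 x y D
  rw [h] at k2
  simp only [map_zsmul, AddMonoidHom.zsmul_apply, ← hD] at k1
  have py : P.m p y = (-2 : ℤ) • D := by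
    linear_combination (norm := module) k1 - k2
  have fy : P.m f y = 0 := by
    have k3 := P.K3 p hpS (P.m r x) x y
    rw [e3, py] at k3
    have k4 := P.m4 hr (x := x)
    simp only [map_zsmul, ← hD, ← hp, ← hf] at k3 k4
    linear_combination (norm := module) -k3 - k4
  apply P.faith f hfS
  intro z
  have k5 := P.K3 f hfS y x z
  rw [h', h, fy] at k5
  apply P.t2
  simpa using k5

lemma m7 (P : KPair A) {x r : A} (hr : r ∈ P.S) (z : A) : (2 : ℤ) • P.V (P.m r (P.V x (P.m r x) x)) x (P.m r z)
    = - P.m r (P.m (P.psi x (P.V x (P.m r x) x)) (P.m r z)) := by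
  have h1 := P.K3 r hr x (P.m r (P.V x (P.m r x) x)) z
  have h2 := P.Kc hr x (P.V x (P.m r x) x) z
  have h3 := congrArg (P.m r) (P.m3 hr (x := x) z)
  simp only [map_neg, map_zsmul] at h3
  linear_combination (norm := module) (2 : ℤ) • h1 - h3 + (2 : ℤ) • h2

lemma n1 (P : KPair A) {x y r s q : A} (hr : r ∈ P.S)
    (hsr : ∀ z, P.m s (P.m r z) = -z) (hxy : ∀ z, P.V x y z = z)
    (hpq : P.psi x (P.V x (P.m r x) x) = (6 : ℤ) • q) (z : A) : P.V x (P.m r (P.V x (P.m r x) x)) z = (-3 : ℤ) • P.m q (P.m r z) := by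
  apply P.c2
  have := P.m3 hr (x := x) z
  rw [hpq] at this
  simp only [map_zsmul, AddMonoidHom.zsmul_apply] at this
  linear_combination (norm := module) this

lemma T_ne (P : KPair A) {x y r s q : A} (hr : r ∈ P.S)
    (hsr : ∀ z, P.m s (P.m r z) = -z) (hxy : ∀ z, P.V x y z = z)
    (hpq : P.psi x (P.V x (P.m r x) x) = (6 : ℤ) • q) (hx : x ≠ 0) : s + q ≠ 0 := by
  intro hT
  have hq' : q = -s := by linear_combination (norm := module) hT
  have a1 : ∀ z, P.V x (P.m r (P.V x (P.m r x) x)) z = (-3 : ℤ) • z := by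
    intro z
    rw [P.n1 hr hsr hxy hpq, hq', map_neg, AddMonoidHom.neg_apply, hsr, neg_neg]
  have a2 : P.V x (P.m r x) (P.V x (P.m r x) x) = (9 : ℤ) • x := by
    apply P.c2
    have := P.m4 hr (x := x)
    rw [hpq, hq'] at this
    simp only [map_neg, AddMonoidHom.neg_apply, map_zsmul, AddMonoidHom.zsmul_apply, hsr] at this
    linear_combination (norm := module) this
  have b1 := P.m2 hr (x := x)
  have b2 := P.m1 hr (x := x)
  have a3 : ∀ z, P.V (P.V x (P.m r x) x) (P.m r (P.V x (P.m r x) x)) z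
      = (-9 : ℤ) • P.V x (P.m r x) z := by
    intro z
    have := P.K1 x (P.m r x) x (P.m r (P.V x (P.m r x) x)) z
    rw [b2, a2] at this
    simp only [a1, map_neg, AddMonoidHom.neg_apply, map_zsmul, AddMonoidHom.zsmul_apply] at this
    linear_combination (norm := module) -this
  set D := P.V x (P.m r x) x with hD
  have p1 : D + (3 : ℤ) • x = 0 := by
    apply P.zero_of hr hsr
    intro z
    simp only [map_add, AddMonoidHom.add_apply, map_zsmul, AddMonoidHom.zsmul_apply, a3, b1, a1]
    module
  have p2 : D - (3 : ℤ) • x = 0 := by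
    apply P.zero_of hr hsr
    intro z
    simp only [map_sub, AddMonoidHom.sub_apply, map_zsmul, AddMonoidHom.zsmul_apply, a3, b1, a1]
    module
  apply hx
  apply P.t3'
  apply P.t2'
  linear_combination (norm := module) p1 - p2

lemma main (P : KPair A) {x y r s q : A} (hr : r ∈ P.S) (hs : s ∈ P.S) (hq : q ∈ P.S)
    (hsr : ∀ z, P.m s (P.m r z) = -z) (hrs : ∀ z, P.m r (P.m s z) = -z)
    (hxy : ∀ z, P.V x y z = z)
    (hpq : P.psi x (P.V x (P.m r x) x) = (6 : ℤ) • q) {t : A} (ht : t ∈ P.S) (hTt : ∀ z, P.m (s + q) (P.m t z) = -z)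
    (htT : ∀ z, P.m t (P.m (s + q) z) = -z) :
    P.psi x (P.m s (P.m t x)) = 0 ∧
    ∀ z, P.V x (P.m r (P.V x (P.m t x) x)) z = (3 : ℤ) • (z + P.m s (P.m t z)) := by
  have n1 := P.n1 hr hsr hxy hpq
  have n1' : ∀ z, P.V (P.m r (P.V x (P.m r x) x)) x (P.m r z)
      = (-3 : ℤ) • P.m r (P.m q (P.m r z)) := by
    intro z
    apply P.c2
    have := P.m7 hr (x := x) z
    rw [hpq] at this
    simp only [map_zsmul, AddMonoidHom.zsmul_apply] at this
    linear_combination (norm := module) this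
  have hf : P.psi (P.m q (P.m r x)) x = 0 := by
    apply P.t3'
    apply P.t2'
    have := P.m5 hr hxy
    rw [hpq] at this
    simp only [map_zsmul, AddMonoidHom.zsmul_apply] at this
    linear_combination (norm := module) this
  have d1 := P.m1 hr (x := x)
  -- q t and t q
  have qt : ∀ z, P.m q (P.m t z) = -z - P.m s (P.m t z) := by
    intro z
    have := hTt z
    simp only [map_add, AddMonoidHom.add_apply] at this
    linear_combination (norm := module) this
  have tq : ∀ z, P.m t (P.m q z) = -z - P.m t (P.m s z) := by
    intro z
    have := htT z
    simp only [map_add, AddMonoidHom.add_apply] at this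
    linear_combination (norm := module) this
  -- D anticommutes past s, q, t
  have Ds : ∀ z, P.V x (P.m r x) (P.m s z) = - P.m s (P.V (P.m r x) x z) := by
    intro z
    have := P.K3 s hs (P.m r x) x z
    rw [hsr, map_neg, AddMonoidHom.neg_apply, P.psi_self] at this
    simp only [neg_zero, map_zero, AddMonoidHom.zero_apply] at this
    linear_combination (norm := module) this
  have Dq : ∀ z, P.V x (P.m r x) (P.m q z) = - P.m q (P.V (P.m r x) x z) := by
    intro z
    have := P.K3 q hq (P.m r x) x z
    rw [hf] at this
    simp only [map_zero, AddMonoidHom.zero_apply] at this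
    linear_combination (norm := module) this
  have Dt : ∀ z, P.V (P.m r x) x (P.m t z) = - P.m t (P.V x (P.m r x) z) := by
    intro z
    have h1 := congrArg (P.m t) (congrArg (P.V x (P.m r x)) (hTt z))
    have h2 : P.V x (P.m r x) (P.m (s + q) (P.m t z))
        = - P.m (s + q) (P.V (P.m r x) x (P.m t z)) := by
      simp only [map_add, AddMonoidHom.add_apply, Ds, Dq]
      abel
    rw [h2, map_neg, htT] at h1
    simp only [map_neg] at h1
    linear_combination (norm := module) h1
  -- tau
  obtain ⟨a, b, hab⟩ := P.gen t ht
  obtain ⟨τ, hτS, hτ⟩ : ∃ τ ∈ P.S, ∀ z, P.m τ z = - P.m s (P.m t (P.m s z)) := by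
    refine ⟨P.psi (P.m s a) (P.m s b), P.psi_mem _ _, ?_⟩
    intro z
    have := P.Kc hs a b z
    rw [← hab] at this
    rw [this, neg_neg]
  have he : P.psi (P.m s (P.m t x)) x = 0 := by
    have h1 : P.psi (P.m τ (P.m r x)) x = 0 := by
      apply P.faith _ (P.psi_mem _ _)
      intro z
      rw [← P.K3 τ hτS]
      simp only [hτ, map_neg, Ds, Dt]
      abel
    rw [hτ, hsr] at h1
    simpa using h1
  have he' : P.psi x (P.m s (P.m t x)) = 0 := by rw [P.skew, he, neg_zero]
  refine ⟨he', ?_⟩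
  have trs : ∀ z, P.m t z = - P.m r (P.m s (P.m t z)) := by
    intro z; rw [hrs, neg_neg]
  have hrt : P.psi (P.m r x) (P.m t x) = 0 := by
    apply P.faith _ (P.psi_mem _ _)
    intro z
    rw [trs x, map_neg, map_neg, AddMonoidHom.neg_apply, ← P.Kc hr, he']
    simp
  have Er : ∀ z, P.V (P.m t x) x (P.m r z) = - P.m r (P.V x (P.m t x) z) := by
    intro z
    have := P.K3 r hr x (P.m t x) z
    rw [hrt] at this
    simp only [map_zero, AddMonoidHom.zero_apply] at this
    linear_combination (norm := module) this
  have Eq : ∀ z, P.V x (P.m t x) (P.m q z) = - P.m q (P.V (P.m t x) x z) := by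
    intro z
    have := P.K3 q hq (P.m t x) x z
    rw [qt] at this
    simp only [map_sub, map_neg, AddMonoidHom.sub_apply, AddMonoidHom.neg_apply, P.psi_self, he,
      map_zero, AddMonoidHom.zero_apply] at this
    linear_combination (norm := module) this
  have Eqr : ∀ z, P.V x (P.m t x) (P.m q (P.m r z)) = P.m q (P.m r (P.V x (P.m t x) z)) := by
    intro z
    rw [Eq, Er, map_neg, neg_neg]
  -- main relation for E x
  have Ex : P.m r (P.V x (P.m t x) x) = P.m t (P.V x (P.m r x) x) := by
    have k := P.K1 x (P.m r (P.V x (P.m r x) x)) x (P.m t x) x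
    have k2 := P.K2 (P.m q (P.m r x)) (P.m t x) x
    rw [hf] at k2
    have k3 : P.V (P.m r (P.V x (P.m r x) x)) x (P.m t x)
        = (3 : ℤ) • P.m r x - (3 : ℤ) • P.m t x := by
      conv_lhs => rw [trs x]
      rw [map_neg, n1', hrs, map_neg, qt]
      simp only [map_neg, map_sub, hrs]
      module
    rw [k3] at k
    simp only [n1, map_zsmul, AddMonoidHom.zsmul_apply, Eqr, map_sub, AddMonoidHom.sub_apply,
      map_zero, AddMonoidHom.zero_apply] at k k2
    have k4 : P.V x (P.m t x) x = P.V x (P.m r x) x + P.m q (P.m r (P.V x (P.m t x) x)) := by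
      apply P.c3
      linear_combination (norm := module) (3 : ℤ) • k2 - k
    have k5 : P.m (s + q) (P.m r (P.V x (P.m t x) x)) = - P.V x (P.m r x) x := by
      rw [map_add, AddMonoidHom.add_apply, hsr]
      linear_combination (norm := module) -k4
    have k6 := congrArg (P.m t) k5
    rw [htT, map_neg] at k6
    exact neg_injective k6
  have Ex' : P.V x (P.m t x) x = - P.m s (P.m t (P.V x (P.m r x) x)) := by
    rw [← Ex, hsr, neg_neg]
  intro z
  rw [Ex]
  apply P.c2
  apply P.c2
  have c1 := P.K4 ht x (P.V x (P.m r x) x) z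
  have c2 := P.K1 x (P.m r x) x (P.m t x) z
  have c3 := P.K1 x (P.m t x) x (P.m r x) z
  have c4 := P.K4 hr x (P.V x (P.m t x) x) z
  have c5 := P.K3 τ hτS (P.m r (P.V x (P.m r x) x)) x (P.m r z)
  rw [hpq] at c1
  rw [Dt] at c2
  rw [Er] at c3
  rw [Ex, P.skew] at c4
  have hτr : ∀ z, P.m τ (P.m r z) = P.m s (P.m t z) := by
    intro z; rw [hτ, hsr, map_neg, map_neg, neg_neg]
  have hst : P.m s (P.m t (P.V x (P.m r x) x)) = - P.V x (P.m t x) x := by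
    rw [Ex', neg_neg]
  rw [hτr (P.V x (P.m r x) x), hst, n1', n1] at c5
  rw [Ex] at c3
  simp only [map_zsmul, AddMonoidHom.zsmul_apply, map_neg, AddMonoidHom.neg_apply, qt, hτr,
    hrs, hsr, tq, map_sub] at c1 c2 c3 c4 c5
  linear_combination (norm := module) c1 - c2 - c3 + c4 + c5

end KPair

section skewalt

variable {A : Type*} [NonAssocRing A]

/-- The associator. -/
def asr (x y z : A) : A := x * y * z - x * (y * z)

/-- Ring-level consequences of structurability. -/
structure SBase (bar : A → A) : Prop where
  add : ∀ x y, bar (x + y) = bar x + bar y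
  mul : ∀ x y, bar (x * y) = bar y * bar x
  inv : ∀ x, bar (bar x) = x
  K1 : ∀ x y z w a : A,
    strTrip bar x y (strTrip bar z w a) - strTrip bar z w (strTrip bar x y a)
      = strTrip bar (strTrip bar x y z) w a - strTrip bar z (strTrip bar y x w) a
  t2 : ∀ z : A, (2 : ℤ) • z = 0 → z = 0
  t3 : ∀ z : A, (3 : ℤ) • z = 0 → z = 0

namespace SBase

variable {bar : A → A}

lemma zero (h : SBase bar) : bar 0 = 0 := by
  have := h.add 0 0
  simpa using this

lemma neg (h : SBase bar) (x : A) : bar (-x) = - bar x := by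
  have := h.add (-x) x
  rw [neg_add_cancel, h.zero] at this
  exact (neg_eq_of_add_eq_zero_left this.symm).symm

lemma sub (h : SBase bar) (x y : A) : bar (x - y) = bar x - bar y := by
  rw [sub_eq_add_neg, h.add, h.neg, ← sub_eq_add_neg]

lemma one (h : SBase bar) : bar 1 = 1 := by
  have := h.mul (bar 1) 1
  rw [mul_one, h.inv, mul_one] at this
  exact this.symm

lemma E1 (h : SBase bar) {s : A} (hs : bar s = -s) (x y : A) :
    asr s x y - asr x s y - (2 : ℤ) • asr x y s + asr s y (x - bar x)
      + asr y s (x + x + bar x) + asr y (x + bar x + bar x) s = 0 := by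
  have k := h.K1 s 1 1 (bar x) y
  simp only [strTrip, asr, h.add, h.mul, h.sub, h.neg, h.inv, h.one, hs, mul_add, add_mul,
    mul_sub, sub_mul, mul_neg, neg_mul, mul_one, one_mul, neg_neg] at k ⊢
  linear_combination (norm := module) -k

lemma E2 (h : SBase bar) {s : A} (hs : bar s = -s) (x y : A) :
    asr s x y - asr x s y - (2 : ℤ) • asr x y s + asr s y (x - bar x)
      - asr y s (x + bar x + bar x) - asr y (x + x + bar x) s = 0 := by
  have k := h.K1 s 1 x 1 y
  simp only [strTrip, asr, h.add, h.mul, h.sub, h.neg, h.inv, h.one, hs, mul_add, add_mul,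
    mul_sub, sub_mul, mul_neg, neg_mul, mul_one, one_mul, neg_neg] at k ⊢
  linear_combination (norm := module) -k

lemma E3 (h : SBase bar) {s r : A} (hs : bar s = -s) (hr : bar r = -r) (y : A) :
    (2 : ℤ) • asr r y s = asr s r y - asr r s y := by
  have k := h.K1 s 1 r y 1
  have k' := h.K1 s 1 1 y r
  apply sub_eq_zero.1
  apply h.t2
  simp only [strTrip, asr, h.add, h.mul, h.sub, h.neg, h.inv, h.one, hs, hr, mul_add, add_mul,
    mul_sub, sub_mul, mul_neg, neg_mul, mul_one, one_mul, neg_neg] at k k' ⊢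
  linear_combination (norm := module) k - k'

lemma asr_bar (h : SBase bar) (x y z : A) :
    bar (asr x y z) = - asr (bar z) (bar y) (bar x) := by
  simp only [asr, h.sub, h.mul]; abel

lemma asr_add1 (x y z w : A) : asr (x + y) z w = asr x z w + asr y z w := by
  simp only [asr, add_mul]; abel
lemma asr_add2 (x y z w : A) : asr z (x + y) w = asr z x w + asr z y w := by
  simp only [asr, add_mul, mul_add]; abel
lemma asr_add3 (x y z w : A) : asr z w (x + y) = asr z w x + asr z w y := by
  simp only [asr, mul_add]; abel
lemma asr_neg1 (x z w : A) : asr (-x) z w = - asr x z w := by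
  simp only [asr, neg_mul]; abel
lemma asr_neg2 (x z w : A) : asr z (-x) w = - asr z x w := by
  simp only [asr, neg_mul, mul_neg]; abel
lemma asr_neg3 (x z w : A) : asr z w (-x) = - asr z w x := by
  simp only [asr, mul_neg]; abel
lemma asr_sub1 (x y z w : A) : asr (x - y) z w = asr x z w - asr y z w := by
  simp only [asr, sub_mul]; abel
lemma asr_sub2 (x y z w : A) : asr z (x - y) w = asr z x w - asr z y w := by
  simp only [asr, sub_mul, mul_sub]; abel
lemma asr_sub3 (x y z w : A) : asr z w (x - y) = asr z w x - asr z w y := by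
  simp only [asr, mul_sub]; abel

lemma H1 (h : SBase bar) {s : A} (hs : bar s = -s) {x : A} (hx : bar x = x) (y : A) :
    asr y s x = - asr y x s := by
  have e1 := h.E1 hs x y
  have e2 := h.E2 hs x y
  rw [hx] at e1 e2
  simp only [asr_add1, asr_add2, asr_add3] at e1 e2
  have : asr y s x + asr y x s = 0 := by
    apply h.t2
    apply h.t3
    linear_combination (norm := module) e1 - e2
  linear_combination (norm := module) this

lemma H2 (h : SBase bar) {s : A} (hs : bar s = -s) {x : A} (hx : bar x = x) (y : A) :
    asr x s y = - asr s x y := by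
  have e := congrArg bar (h.H1 hs hx (bar y))
  simp only [h.asr_bar, h.neg, hs, hx, h.inv, asr_neg1, asr_neg2, neg_neg] at e
  exact e

/-- hermitian first variable -/
lemma H3 (h : SBase bar) {s : A} (hs : bar s = -s) {x : A} (hx : bar x = x) (y : A) :
    asr x y s = asr s x y := by
  have e1 := h.E1 hs x y
  have e2 := h.H1 hs hx y
  have e3 := h.H2 hs hx y
  rw [hx, sub_self] at e1
  have z : asr s y (0 : A) = 0 := by simp [asr]
  simp only [asr_add1, asr_add2, asr_add3, z] at e1
  apply sub_eq_zero.1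
  apply h.t2
  linear_combination (norm := module) (3 : ℤ) • e2 - e1 - e3

/-- three skew elements -/
lemma SSS (h : SBase bar) {s x y : A} (hs : bar s = -s) (hx : bar x = -x) (hy : bar y = -y) :
    asr x s y = - asr s x y ∧ asr x y s = asr s x y := by
  have a1 := h.E3 hs hx y
  have a2 := h.E3 hy hs x
  have a3 := h.E3 hx hy s
  have b1 := h.E3 hs hy x
  have b2 := h.E3 hx hs y
  have b3 := h.E3 hy hx s
  have o3 : asr s y x + asr x y s = 0 := by
    apply h.t2; linear_combination (norm := module) a1 + b2
  have o2 : asr y x s + asr s x y = 0 := by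
    apply h.t2; linear_combination (norm := module) a2 + b1
  have o1 : asr x s y + asr y s x = 0 := by
    apply h.t2; linear_combination (norm := module) a3 + b3
  have e12 : asr x y s - asr s x y = 0 := by
    apply h.t3; linear_combination (norm := module) a1 - a2 - o1 + o3
  have e23 : asr s x y - asr y s x = 0 := by
    apply h.t3; linear_combination (norm := module) a2 - a3 - o3 + o2
  constructor
  · linear_combination (norm := module) o1 + e23
  · linear_combination (norm := module) e12

/-- skew first variable, hermitian second -/
lemma SH (h : SBase bar) {s x y : A} (hs : bar s = -s) (hx : bar x = -x) (hy : bar y = y) :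
    asr x s y = - asr s x y ∧ asr x y s = asr s x y := by
  have a1 := h.E3 hs hx y
  have a2 := h.H1 hs hy x
  constructor
  · linear_combination (norm := module) (2 : ℤ) • a2 - a1
  · linear_combination (norm := module) a1 - a2

lemma SA (h : SBase bar) {s x : A} (hs : bar s = -s) (hx : bar x = -x) (y : A) :
    asr x s y = - asr s x y ∧ asr x y s = asr s x y := by
  have a := h.SSS hs hx (y := y - bar y) (by rw [h.sub, h.inv]; abel)
  have b := h.SH hs hx (y := y + bar y) (by rw [h.add, h.inv]; abel)
  simp only [asr_add2, asr_add3, asr_sub2, asr_sub3] at a b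
  constructor
  · apply sub_eq_zero.1
    apply h.t2
    linear_combination (norm := module) a.1 + b.1
  · apply sub_eq_zero.1
    apply h.t2
    linear_combination (norm := module) a.2 + b.2

lemma skewalt (h : SBase bar) {s : A} (hs : bar s = -s) (x y : A) :
    asr x s y = - asr s x y ∧ asr x y s = asr s x y := by
  have a := h.SA hs (x := x - bar x) (by rw [h.sub, h.inv]; abel) y
  have hh : bar (x + bar x) = x + bar x := by rw [h.add, h.inv]; abel
  have b1 := h.H2 hs hh y
  have b2 := h.H3 hs hh y
  simp only [asr_add1, asr_add2, asr_sub1, asr_sub2] at a b1 b2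
  constructor
  · apply sub_eq_zero.1
    apply h.t2
    linear_combination (norm := module) a.1 + b1
  · apply sub_eq_zero.1
    apply h.t2
    linear_combination (norm := module) a.2 + b2

lemma K2 (_h : SBase bar) (x y z : A) :
    strTrip bar x y z - strTrip bar z y x = strPsi bar x z * y := by
  simp only [strTrip, strPsi, sub_mul]; abel

lemma anti (h : SBase bar) {s a : A} (hs : bar s = -s) (ha : bar a = -a) (y : A) :
    asr s a y + asr s y a = 0 := by
  have h1 := (h.skewalt ha s y).2
  have h2 := (h.skewalt hs a y).1
  linear_combination (norm := module) h1 + h2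

lemma K3 (h : SBase bar) {s : A} (hs : bar s = -s) (x y z : A) :
    s * strTrip bar x y z + strTrip bar y x (s * z) = strPsi bar (s * x) y * z := by
  -- there is an element `s'` representing the left-hand side
  have key : ∀ z, (2 : ℤ) • (s * strTrip bar x y z + strTrip bar y x (s * z))
      = (strPsi bar (strTrip bar y x s) 1 + strPsi bar s (strTrip bar y x 1)) * z := by
    intro z
    have e1 := h.K1 y x s z 1
    have e2 := h.K1 y x 1 z s
    have f0 := h.K2 s z 1
    have f1 := h.K2 s (strTrip bar x y z) 1
    have f2 := h.K2 (strTrip bar y x s) z 1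
    have f3 := h.K2 s z (strTrip bar y x 1)
    have g : strPsi bar s 1 = (2 : ℤ) • s := by
      simp only [strPsi, h.one, hs]; rw [mul_one, one_mul]; module
    have V_sub : ∀ a b, strTrip bar y x (a - b) = strTrip bar y x a - strTrip bar y x b := by
      intro a b; simp only [strTrip, mul_sub, sub_mul]; abel
    have V_two : ∀ a, strTrip bar y x ((2 : ℤ) • a) = (2 : ℤ) • strTrip bar y x a := by
      intro a
      simp only [strTrip, two_smul, mul_add, add_mul]; abel
    rw [g] at f0 f1
    have f0' := congrArg (strTrip bar y x) f0
    rw [smul_mul_assoc, V_sub, V_two] at f0'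
    rw [smul_mul_assoc] at f1
    rw [add_mul]
    linear_combination (norm := module) f2 + f3 - f1 - f0' + e1 - e2
  set c := strPsi bar (strTrip bar y x s) 1 + strPsi bar s (strTrip bar y x 1) with hc
  have c1 := key 1
  have hxb : bar (x - bar x) = -(x - bar x) := by rw [h.sub, h.inv]; abel
  have hyb : bar (y - bar y) = -(y - bar y) := by rw [h.sub, h.inv]; abel
  have a1 := h.anti hs hxb y
  have a2 := h.anti hs hyb x
  have a3 := (h.skewalt hs y (bar x)).2
  have cc : c = (2 : ℤ) • strPsi bar (s * x) y := by
    simp only [mul_one] at c1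
    rw [← c1]
    congr 1
    simp only [strTrip, strPsi, asr, h.mul, h.one, hs, mul_add, add_mul,
      mul_sub, sub_mul, mul_neg, neg_mul, mul_one, one_mul] at a1 a2 a3 ⊢
    linear_combination (norm := module) a3 - a1 + a2
  have k := key z
  rw [cc, smul_mul_assoc] at k
  apply sub_eq_zero.1
  apply h.t2
  rw [smul_sub, k, sub_self]

end SBase

end skewalt

section assembly

variable {A : Type*} [NonAssocRing A] {bar : A → A}

/-- The abstract data attached to a structurable division algebra. -/
def SBase.toKPair (h : SBase bar) (hgen : ∀ s, bar s = -s → ∃ a b, s = strPsi bar a b)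
    (hdiv : IsConjDivision bar) : KPair A where
  V := AddMonoidHom.mk' (fun x => AddMonoidHom.mk' (fun y => AddMonoidHom.mk'
      (fun z => strTrip bar x y z)
      (by intro a b; simp only [strTrip, mul_add, add_mul]; abel))
      (by intro a b; ext z
          simp only [strTrip, h.add, mul_add, add_mul, AddMonoidHom.mk'_apply,
            AddMonoidHom.add_apply]; abel))
      (by intro a b; ext y z
          simp only [strTrip, h.add, mul_add, add_mul, AddMonoidHom.mk'_apply,
            AddMonoidHom.add_apply]; abel)
  m := AddMonoidHom.mul
  psi := AddMonoidHom.mk' (fun x => AddMonoidHom.mk' (fun y => strPsi bar x y)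
      (by intro a b; simp only [strPsi, h.add, mul_add, add_mul]; abel))
      (by intro a b; ext y
          simp only [strPsi, h.add, mul_add, add_mul, AddMonoidHom.mk'_apply,
            AddMonoidHom.add_apply]; abel)
  S := { carrier := {s | bar s = -s}
         zero_mem' := by simp [h.zero]
         add_mem' := by
          intro a b ha hb
          simp only [Set.mem_setOf_eq] at *
          rw [h.add, ha, hb]; abel
         neg_mem' := by
          intro a ha
          simp only [Set.mem_setOf_eq] at *
          rw [h.neg, ha] }
  psi_mem := by
    intro x y
    change bar (strPsi bar x y) = - strPsi bar x y
    simp only [strPsi, h.sub, h.mul, h.inv]; abel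
  K1 := h.K1
  K2 := h.K2
  K3 := fun _ hs x y z => h.K3 hs x y z
  skew := by
    intro x y
    change strPsi bar x y = - strPsi bar y x
    simp only [strPsi]; abel
  faith := by
    intro s _ hz
    have : s * 1 = 0 := hz 1
    rwa [mul_one] at this
  vfaith := by
    intro b hb
    have h1 : strTrip bar 1 b 1 = 0 := hb 1 1
    simp only [strTrip, h.one, mul_one, one_mul] at h1
    have h2 := congrArg bar h1
    simp only [h.sub, h.add, h.inv, h.zero] at h2
    apply h.t3
    linear_combination (norm := module) (2 : ℤ) • h2 + h1
  gen := hgen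
  t2 := fun z hz => h.t2 z (by rw [← hz]; module)
  t3 := fun z hz => h.t3 z (by rw [← hz]; module)
  div := hdiv

end assembly

/-- Let `A` be a structurable division algebra over a field `k` with
`char k ≠ 2, 3`.  Then every pair `(x,s) ∈ A × S` with `(x,s) ≠ (0,0)` is
one-invertible: there exist `u ∈ A` and `t ∈ S` such that
`V_{x,u} = id + L_s L_t`, `s·u = −(1/3)·U_x(t·x)` and `ψ(x, s·(t·x)) = 0`. -/
theorem stmt9 {k : Type*} [Field k] {A : Type*} [NonAssocRing A] [Module k A]
    [SMulCommClass k A A] [IsScalarTower k A A] [FiniteDimensional k A] [Nontrivial A]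
    (h2 : (2 : k) ≠ 0) (h3 : (3 : k) ≠ 0)
    (bar : A → A) (hstr : IsStructurable k A bar) (hdiv : IsConjDivision bar) :
    ∀ x s : A, bar s = -s → ¬(x = 0 ∧ s = 0) →
      ∃ u t : A, bar t = -t ∧
        (∀ z : A, strTrip bar x u z = z + s * (t * z)) ∧
        s * u = -((3 : k)⁻¹ • strTrip bar x (t * x) x) ∧
        strPsi bar x (s * (t * x)) = 0 := by
  obtain ⟨hadd, hsmul, hmul, hinv, hK1⟩ := hstr
  have tz : ∀ (n : ℤ) (z : A), n • z = (n : k) • z := fun n z => (Int.cast_smul_eq_zsmul k n z).symm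
  have h : SBase bar :=
    { add := hadd
      mul := hmul
      inv := hinv
      K1 := hK1
      t2 := by
        intro z hz
        rw [tz] at hz
        exact (smul_eq_zero.1 hz).resolve_left (by exact_mod_cast h2)
      t3 := by
        intro z hz
        rw [tz] at hz
        exact (smul_eq_zero.1 hz).resolve_left (by exact_mod_cast h3) }
  have hgen : ∀ s, bar s = -s → ∃ a b, s = strPsi bar a b := by
    intro s hs
    refine ⟨(2 : k)⁻¹ • s, 1, ?_⟩
    rw [strPsi, h.one, hsmul, hs, mul_one, one_mul, smul_neg, sub_neg_eq_add, ← two_smul k,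
      smul_smul, mul_inv_cancel₀ h2, one_smul]
  set P := h.toKPair hgen hdiv with hP
  have hsurj : ∀ s, bar s = -s → s ≠ 0 → ∀ b, ∃ a, P.m s a = b := by
    intro s hs h0
    have hinj : Function.Injective (LinearMap.mulLeft k s) := by
      rw [← LinearMap.ker_eq_bot, LinearMap.ker_eq_bot']
      intro z hz
      exact P.inj (s := s) hs h0 hz
    exact LinearMap.injective_iff_surjective.1 hinj
  intro x s hs hne
  by_cases hs0 : s = 0
  · subst hs0
    have hx : x ≠ 0 := fun hx => hne ⟨hx, rfl⟩
    obtain ⟨v, hv⟩ := hdiv x hx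
    refine ⟨v, 0, by simp [h.zero], ?_, ?_, ?_⟩
    · intro z; rw [hv]; simp
    · simp [strTrip, h.zero]
    · simp [strPsi, h.zero]
  obtain ⟨r, hr, hsr, hrs⟩ := P.sinv (s := s) hs hs0 (hsurj s hs hs0)
  by_cases hx : x = 0
  · subst hx
    refine ⟨0, r, hr, ?_, ?_, ?_⟩
    · intro z
      have : s * (r * z) = -z := hsr z
      rw [this]; simp [strTrip, h.zero]
    · simp [strTrip, h.zero]
    · simp [strPsi, h.zero]
  obtain ⟨y, hy⟩ := P.div x hx
  have h6 : (6 : k) ≠ 0 := by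
    have : (6 : k) = 2 * 3 := by norm_num
    rw [this]; exact mul_ne_zero h2 h3
  obtain ⟨q, hpq⟩ : ∃ q, P.psi x (P.V x (P.m r x) x) = (6 : ℤ) • q := by
    refine ⟨(6 : k)⁻¹ • P.psi x (P.V x (P.m r x) x), ?_⟩
    rw [tz, smul_smul]
    push_cast
    rw [mul_inv_cancel₀ h6, one_smul]
  have hq : q ∈ P.S := by
    have e : bar (P.psi x (P.V x (P.m r x) x)) = - P.psi x (P.V x (P.m r x) x) :=
      P.psi_mem _ _
    rw [hpq, tz, hsmul, ← smul_neg] at e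
    have h6' : ((6 : ℤ) : k) ≠ 0 := by exact_mod_cast h6
    exact smul_right_injective A h6' e
  have hT0 := P.T_ne hr hsr hy hpq hx
  have hT : s + q ∈ P.S := P.S.add_mem hs hq
  obtain ⟨t, ht, hTt, htT⟩ := P.sinv hT hT0 (hsurj _ hT hT0)
  obtain ⟨m1, m2⟩ := P.main hr hs hq hsr hrs hy hpq ht hTt htT
  have e3 : (3 : ℤ) • ((3 : k)⁻¹ • (r * strTrip bar x (t * x) x))
      = r * strTrip bar x (t * x) x := by
    rw [tz, smul_smul]
    push_cast
    rw [mul_inv_cancel₀ h3, one_smul]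
  refine ⟨(3 : k)⁻¹ • (r * strTrip bar x (t * x) x), t, ht, ?_, ?_, m1⟩
  · intro z
    apply P.c3
    have := m2 z
    change strTrip bar x (r * strTrip bar x (t * x) x) z = (3 : ℤ) • (z + s * (t * z)) at this
    rw [← this]
    change (3 : ℤ) • P.V x _ z = P.V x _ z
    rw [← AddMonoidHom.zsmul_apply, ← map_zsmul, e3]
  · rw [mul_smul_comm, ← smul_neg]
    congr 1
    exact hsr _
end

section
/- Let A be a structurable division algebra over a field k with char(k) ≠ 2 and char(k) ≠ 3, let 0 ≠ x ∈ A with conjugate inverse x̂, and let s ∈ S. Then q_x(s)·x̂ = −(1/3)·U_x(s·x). -/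
/-- Substitution instances of the structurable identity give
`s·V_{y,x}1 + V_{x,y}s = ψ(s·y,x)` up to the factor 12. -/
theorem str_aux {A : Type*} [NonAssocRing A] (bar : A → A)
    (hadd : ∀ x y : A, bar (x + y) = bar x + bar y)
    (hneg : ∀ x : A, bar (-x) = -bar x)
    (hone : bar 1 = 1)
    (hmul : ∀ x y : A, bar (x * y) = bar y * bar x)
    (hbb : ∀ x : A, bar (bar x) = x)
    (h : ∀ x y z w a : A,
      strTrip bar x y (strTrip bar z w a) - strTrip bar z w (strTrip bar x y a)
        = strTrip bar (strTrip bar x y z) w a - strTrip bar z (strTrip bar y x w) a)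
    (x y s : A) (hs : bar s = -s) :
    (12 : ℤ) • (s * strTrip bar y x 1 + strTrip bar x y s) = (12 : ℤ) • strPsi bar (s * y) x := by
  have e0 := h s x y 1 1
  have e1 := h s x (bar y) 1 1
  have e2 := h s (bar x) y 1 1
  have e3 := h s (bar x) (bar y) 1 1
  have e4 := h s y x 1 1
  have e5 := h s (bar y) x 1 1
  have e6 := h s y (bar x) 1 1
  have e7 := h s (bar y) (bar x) 1 1
  have e8 := h s 1 x y 1
  have e9 := h s 1 x (bar y) 1
  have e10 := h s 1 (bar x) y 1
  have e11 := h s 1 (bar x) (bar y) 1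
  have e12 := h s 1 x 1 y
  have e13 := h s 1 x 1 (bar y)
  have e14 := h s 1 (bar x) 1 y
  have e15 := h s 1 y x 1
  have e16 := h s 1 y 1 x
  have e17 := h s 1 1 y x
  simp only [strTrip, strPsi, hadd, hneg, hone, hmul, hbb, hs, sub_eq_add_neg, mul_add, add_mul,
    mul_neg, neg_mul, neg_neg, mul_one, one_mul, neg_add] at e0 e1 e2 e3 e4 e5 e6 e7 e8 e9 e10 e11 e12 e13 e14 e15 e16 e17 ⊢
  linear_combination (norm := skip) (-16 : ℤ) • e0 + (8 : ℤ) • e1 + (-10 : ℤ) • e2 + (-10 : ℤ) • e3 + (1 : ℤ) • e4 + (-5 : ℤ) • e5 + (-11 : ℤ) • e6 + (7 : ℤ) • e7 + (-1 : ℤ) • e8 + (3 : ℤ) • e9 + (-7 : ℤ) • e10 + (3 : ℤ) • e11 + (-12 : ℤ) • e12 + (-2 : ℤ) • e13 + (4 : ℤ) • e14 + (-6 : ℤ) • e15 + (2 : ℤ) • e16 + (-8 : ℤ) • e17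
  abel

/-- Let `A` be a structurable division algebra over a field `k` with
`char k ≠ 2, 3`, let `0 ≠ x ∈ A` with conjugate inverse `x̂`, and let `s ∈ S`.
Then `q_x(s)·x̂ = −(1/3)·U_x(s·x)`. -/
theorem stmt10 {k : Type*} [Field k] {A : Type*} [NonAssocRing A] [Module k A]
    [SMulCommClass k A A] [IsScalarTower k A A] [FiniteDimensional k A] [Nontrivial A]
    (h2 : (2 : k) ≠ 0) (h3 : (3 : k) ≠ 0)
    (bar : A → A) (hstr : IsStructurable k A bar) (hdiv : IsConjDivision bar)
    (x : A) (hx0 : x ≠ 0) (xhat : A) (hxhat : ∀ z : A, strTrip bar x xhat z = z)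
    (s : A) (hsS : bar s = -s) :
    strQ k bar x s * xhat = -((3 : k)⁻¹ • strTrip bar x (s * x) x) := by
  obtain ⟨hadd, hsm, hmul, hbb, h⟩ := hstr
  have hneg : ∀ x : A, bar (-x) = -bar x := by
    intro x
    have := hsm (-1) x
    simpa using this
  have hone : bar 1 = 1 := by
    have e := hmul (bar 1) 1
    rw [mul_one, hbb, mul_one] at e
    exact e.symm
  have h6 : (6 : k) ≠ 0 := by
    have : (6 : k) = 2 * 3 := by norm_num
    rw [this]; exact mul_ne_zero h2 h3
  -- `V_{x̂,x} = id`
  have hsym : ∀ w : A, strTrip bar xhat x w = w := by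
    intro w
    have hz : ∀ z a : A, strTrip bar z w a = strTrip bar z (strTrip bar xhat x w) a := by
      intro z a
      have e := h x xhat z w a
      rw [hxhat, hxhat, hxhat, sub_self] at e
      exact sub_eq_zero.mp e.symm
    have e := hz 1 1
    generalize strTrip bar xhat x w = v at e ⊢
    have hsub : ∀ a b : A, bar (a - b) = bar a - bar b := by
      intro a b; rw [sub_eq_add_neg, hadd, hneg, ← sub_eq_add_neg]
    have e1 : (2 : k) • bar (w - v) = w - v := by
      simp only [strTrip, hone, mul_one, one_mul] at e
      rw [hsub, two_smul]
      linear_combination (norm := skip) e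
      abel
    have e2 : (2 : k) • (w - v) = bar (w - v) := by
      have := congrArg bar e1
      rwa [hsm, hbb] at this
    have e3 : (3 : k) • (w - v) = 0 := by
      rw [← e2, smul_smul] at e1
      have : (3 : k) • (w - v) = ((2 : k) * 2) • (w - v) - (w - v) := by module
      rw [this, e1, sub_self]
    rcases smul_eq_zero.mp e3 with h | h
    · exact absurd h h3
    · exact (sub_eq_zero.mp h).symm
  -- `ψ(s·x,x̂) = 2s`
  have hpsi : strPsi bar (s * x) xhat = (2 : k) • s := by
    have e := str_aux bar hadd hneg hone hmul hbb h xhat x s hsS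
    rw [hxhat, hsym, mul_one] at e
    have h12 : (12 : k) ≠ 0 := by
      have : (12 : k) = 2 * 6 := by norm_num
      rw [this]; exact mul_ne_zero h2 h6
    have e' : (12 : k) • (s + s) = (12 : k) • strPsi bar (s * x) xhat := by
      have c : ∀ a : A, (12 : k) • a = (12 : ℤ) • a := by intro a; module
      rw [c, c, e]
    rw [two_smul]
    exact (smul_right_injective A h12 e').symm
  have hswap : ∀ a b z : A, strPsi bar a b * z = strTrip bar a z b - strTrip bar b z a := by
    intro a b z
    simp only [strPsi, strTrip, sub_mul]
    abel
  -- `{s·x,x,x̂} = 3 s·x`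
  have htri : strTrip bar (s * x) x xhat = (3 : k) • (s * x) := by
    have e := hswap (s * x) xhat x
    rw [hpsi, hsym, smul_mul_assoc] at e
    rw [sub_eq_iff_eq_add.mp e.symm]
    module
  have hV := h x (s * x) x xhat x
  rw [hxhat, hxhat, sub_self, htri] at hV
  have hsmul : strTrip bar x ((3 : k) • (s * x)) x = (3 : k) • strTrip bar x (s * x) x := by
    simp only [strTrip, hsm, mul_smul_comm, smul_mul_assoc, smul_add, smul_sub]
  rw [hsmul] at hV
  have hU := (sub_eq_zero.mp hV.symm)
  rw [strQ, smul_mul_assoc, hswap, hxhat, hU]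
  generalize strTrip bar x (s * x) x = u
  have : u - (3 : k) • u = (-2 : k) • u := by module
  rw [this, smul_smul, ← neg_smul]
  congr 1
  have : (6 : k) = 2 * 3 := by norm_num
  rw [this]
  field_simp
end
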